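/- Let 0<α, 1<p<N/α, q>p−1, and let ω be a nonnegative bounded Radon measure supported in a ball B_R(x0)⊂ℝ^N. Then the following statements are equivalent (with constants allowed to depend on R): (a) there exists C1>0 with ω(K) ≤ C1·Cap_{G_{αp}, q/(q−p+1)}(K) for every compact K⊂ℝ^N; (b) there exists C2>0 with ∫_K (W^{4R}_{α,p}[ω](y))^q dy ≤ C2·Cap_{G_{αp}, q/(q−p+1)}(K) for every compact K⊂ℝ^N; (c) there exists C3>0 with ∫_{ℝ^N} (W^{4R}_{α,p}[χ_{B_t(x)}ω](y))^q dy ≤ C3·ω(B_t(x)) for every x∈ℝ^N and t>0; (d) there exists C4>0 with W^{4R}_{α,p}[(W^{4R}_{α,p}[ω])^q] ≤ C4·W^{4R}_{α,p}[ω] almost everywhere in B_{2R}(x0). -/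

import Mathlib

open MeasureTheory Metric Set Filter Bornology
open scoped ENNReal NNReal Topology RealInnerProductSpace

noncomputable section

/-- Euclidean space `ℝ^N`. -/
abbrev Euc (N : ℕ) : Type := EuclideanSpace ℝ (Fin N)

/-- The `R`-truncated Wolff potential `W^R_{α,p}[μ](x)`; `R = ⊤` gives the full
Wolff potential `W_{α,p}[μ]`. -/
def wolff {N : ℕ} (α p : ℝ) (R : ℝ≥0∞) (μ : Measure (Euc N)) (x : Euc N) : ℝ≥0∞ :=
  ∫⁻ ρ in {ρ : ℝ | 0 < ρ ∧ ENNReal.ofReal ρ < R},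
    (μ (ball x ρ) / ENNReal.ofReal (ρ ^ ((N : ℝ) - α * p))) ^ (1 / (p - 1)) /
      ENNReal.ofReal ρ

/-- The `R`-truncated Riesz potential `I^R_β[μ](x)`; `R = ⊤` gives `I_β[μ]`. -/
def rieszPot {N : ℕ} (β : ℝ) (R : ℝ≥0∞) (μ : Measure (Euc N)) (x : Euc N) : ℝ≥0∞ :=
  ∫⁻ ρ in {ρ : ℝ | 0 < ρ ∧ ENNReal.ofReal ρ < R},
    μ (ball x ρ) / ENNReal.ofReal (ρ ^ ((N : ℝ) - β)) / ENNReal.ofReal ρ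

/-- The Riesz capacity `Cap_{I_α,p}`. -/
def rieszCap (N : ℕ) (α p : ℝ) (O : Set (Euc N)) : ℝ≥0∞ :=
  ⨅ (g : Euc N → ℝ≥0∞) (_ : Measurable g)
    (_ : ∀ x ∈ O, 1 ≤ rieszPot α ⊤ (volume.withDensity g) x),
    ∫⁻ x, g x ^ p

/-- The Bessel kernel of order `α` (up to the normalizing constant `c(N,α)`). -/
def besselKernel (N : ℕ) (α : ℝ) (x : Euc N) : ℝ :=
  ∫ t in Ioi (0 : ℝ),
    Real.exp (-(Real.pi * ‖x‖ ^ 2 / t) - t / (4 * Real.pi)) * t ^ ((α - (N : ℝ)) / 2) / t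

/-- The Bessel capacity `Cap_{G_α,p}`. -/
def besselCap (N : ℕ) (α p : ℝ) (O : Set (Euc N)) : ℝ≥0∞ :=
  ⨅ (g : Euc N → ℝ≥0∞) (_ : Measurable g)
    (_ : ∀ x ∈ O, 1 ≤ ∫⁻ y, ENNReal.ofReal (besselKernel N α (x - y)) * g y),
    ∫⁻ x, g x ^ p

/-- The `R`-truncated fractional maximal function `M^R_γ[μ]`. -/
def fracMax {N : ℕ} (γ : ℝ) (R : ℝ≥0∞) (μ : Measure (Euc N)) (x : Euc N) : ℝ≥0∞ :=
  ⨆ (t : ℝ) (_ : 0 < t) (_ : ENNReal.ofReal t < R),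
    μ (ball x t) / ENNReal.ofReal (t ^ ((N : ℝ) - γ))

/-- The potential `L^R_{α,s}[μ]`. -/
def Lpot {N : ℕ} (α s : ℝ) (R : ℝ≥0∞) (μ : Measure (Euc N)) (x : Euc N) : ℝ≥0∞ :=
  ∫⁻ t in {t : ℝ | 0 < t ∧ ENNReal.ofReal t < R},
    (μ (ball x t) / ENNReal.ofReal (t ^ ((N : ℝ) - α))) ^ s / ENNReal.ofReal t

/-- A mollifier: smooth, nonnegative, supported in the unit ball, of total mass one. -/
def IsMollifier {N : ℕ} (φ : Euc N → ℝ) : Prop :=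
  ContDiff ℝ (⊤ : ℕ∞) φ ∧ (∀ x, 0 ≤ φ x) ∧ tsupport φ ⊆ ball 0 1 ∧ (∫ x, φ x) = 1

/-- The measure with density `φ_n * μ`, where `φ_n(x) = n^N φ(n x)`. -/
def mollified {N : ℕ} (φ : Euc N → ℝ) (n : ℕ) (μ : Measure (Euc N)) : Measure (Euc N) :=
  volume.withDensity fun x =>
    ENNReal.ofReal (∫ y, (n : ℝ) ^ (N : ℕ) * φ ((n : ℝ) • (x - y)) ∂μ)

/-!
All potentials are discretised over the dyadic radii `T / 2 ^ k`: up to constants, the Wolff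
potential is the sum over `k` of the powers `1 / (p - 1)` of the ball densities
`μ (B_ρ(x)) ρ ^ (αp - N)`, and the Bessel potential `G_{αp} * μ` of a compactly supported measure is
comparable to their plain sum. In `L ^ m`, `m = q / (p - 1)`, the plain sum and the power `p - 1` of
the other one are both controlled by the supremum of the densities (Muckenhoupt–Wheeden), and `m` is
conjugate to the exponent `q / (q - p + 1)` of the capacity.

* (a) ⇒ (c): a measure dominated by the capacity satisfies a trace inequality for Bessel potentials;
  by duality `‖G_{αp} * μ‖_m ^ m` is at most a multiple of `μ(ℝ^N)` for `μ = χ_B ω`.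
* (c) ⇒ (d): testing on balls bounds `ω` and the density of `W[ω] ^ q` on every ball, and a discrete
  Hardy inequality in the scale parameter turns this into the pointwise bound on the iterated
  potential.
* (d) ⇒ (b): the iterated bound controls the densities of `W[ω] ^ q dx` restricted to a set `E` by
  `W[ω] ^ (p - 1)` times a relative maximal function, which is bounded on `L ^ m` by the Besicovitch
  covering theorem. This gives the capacitary estimate near the support of `ω`, away from which
  `W[ω]` is bounded.
* (b) ⇒ (a): the supremum of the densities of `χ_K ω` is at most a multiple of `W[ω] ^ (p - 1)`.
  Linearising the supremum and using the trace inequality furnished by (b) bounds the energy of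
  `χ_K ω` by `ω(K)`, hence `ω(K)` by the capacity of `K`.
-/

namespace WolffPotential

/-! ### Powers and sums in `ℝ≥0∞` -/

lemma real_add_rpow_le {x y M : ℝ} (hx : 0 ≤ x) (hy : 0 ≤ y) (hM : 1 ≤ M) :
    (x + y) ^ M ≤ x ^ M + M * (y * (x + y) ^ (M - 1)) := by
  rcases (add_nonneg hx hy).eq_or_lt with h0 | hz
  · rw [← h0, Real.zero_rpow (by linarith)]
    positivity
  -- the graph of `t ↦ t ^ M` lies above its tangent at `x + y`
  have bernoulli := one_add_mul_self_le_rpow_one_add (s := -y / (x + y))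
    (by rw [le_div_iff₀ hz]; linarith) hM
  have hquot : 1 + -y / (x + y) = x / (x + y) := by field_simp; ring
  rw [hquot, Real.div_rpow hx hz.le, le_div_iff₀ (by positivity)] at bernoulli
  have hpow : (x + y) ^ M = (x + y) * (x + y) ^ (M - 1) := by
    rw [Real.rpow_sub_one hz.ne']; field_simp
  have htangent : (1 + M * (-y / (x + y))) * (x + y) ^ M =
      (x + y) ^ M - M * (y * (x + y) ^ (M - 1)) := by
    rw [hpow]; field_simp; ring
  linarith

lemma add_rpow_le (x y : ℝ≥0∞) {M : ℝ} (hM : 1 ≤ M) :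
    (x + y) ^ M ≤ x ^ M + ENNReal.ofReal M * (y * (x + y) ^ (M - 1)) := by
  have hM0 : 0 < M := by linarith
  rcases eq_or_ne x ∞ with rfl | hx
  · simp [ENNReal.top_rpow_of_pos hM0]
  rcases eq_or_ne y ∞ with rfl | hy
  · rcases hM.eq_or_lt with rfl | h
    · simp
    · simp [ENNReal.top_rpow_of_pos (sub_pos.2 h), ENNReal.mul_top, hM0]
  lift x to ℝ≥0 using hx
  lift y to ℝ≥0 using hy
  have coe_rpow (z : ℝ≥0) {t : ℝ} (ht : 0 ≤ t) :
      (z : ℝ≥0∞) ^ t = ENNReal.ofReal ((z : ℝ) ^ t) := by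
    rw [← ENNReal.ofReal_rpow_of_nonneg z.coe_nonneg ht, ENNReal.ofReal_coe_nnreal]
  rw [← ENNReal.coe_add, coe_rpow _ hM0.le, coe_rpow _ hM0.le, coe_rpow _ (sub_nonneg.2 hM),
    ← ENNReal.ofReal_coe_nnreal (p := y), ← ENNReal.ofReal_mul y.coe_nonneg,
    ← ENNReal.ofReal_mul hM0.le, ← ENNReal.ofReal_add (by positivity) (by positivity)]
  exact ENNReal.ofReal_le_ofReal (real_add_rpow_le x.coe_nonneg y.coe_nonneg hM)

lemma rpow_eq_mul_rpow_sub_one (x : ℝ≥0∞) {t : ℝ} (ht : 1 ≤ t) : x ^ t = x * x ^ (t - 1) := by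
  conv_rhs => rw [← ENNReal.rpow_one x, ← ENNReal.rpow_mul, one_mul]
  rw [← ENNReal.rpow_add_of_nonneg _ _ zero_le_one (by linarith)]
  ring_nf

lemma add_rpow_le_two_rpow_mul (x y : ℝ≥0∞) {t : ℝ} (ht : 0 ≤ t) :
    (x + y) ^ t ≤ 2 ^ t * (x ^ t + y ^ t) := by
  wlog h : x ≤ y generalizing x y
  · rw [add_comm x, add_comm (x ^ t)]; exact this y x (le_of_not_ge h)
  calc (x + y) ^ t ≤ (2 * y) ^ t := by rw [two_mul]; gcongr
    _ = 2 ^ t * y ^ t := ENNReal.mul_rpow_of_nonneg _ _ ht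
    _ ≤ _ := by gcongr; exact le_add_self

lemma le_rpow_of_le_mul_rpow {x c : ℝ≥0∞} {a : ℝ} (ha : 0 < a) (hx : x ≠ ∞)
    (h : x ≤ c * x ^ (1 - a)) : x ≤ c ^ (1 / a) := by
  rcases eq_or_ne x 0 with rfl | h0
  · simp
  have hxa : x ^ a ≤ c := by
    have hne_zero : x ^ (1 - a) ≠ 0 := by simp [ENNReal.rpow_eq_zero_iff, h0, hx]
    have hne_top : x ^ (1 - a) ≠ ∞ := by simp [ENNReal.rpow_eq_top_iff, h0, hx]
    refine (ENNReal.mul_le_mul_iff_left hne_zero hne_top).1 ?_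
    rw [← ENNReal.rpow_add _ _ h0 hx]
    simpa using h
  rw [← ENNReal.rpow_le_rpow_iff ha, ← ENNReal.rpow_mul, one_div_mul_cancel ha.ne',
    ENNReal.rpow_one]
  exact hxa

lemma le_rpow_mul_of_le_mul_rpow_mul_rpow {x A M : ℝ≥0∞} {m : ℝ} (hm : 0 < m) (hx : x ≠ ∞)
    (h : x ≤ A * M ^ (1 / m) * x ^ (1 - 1 / m)) : x ≤ A ^ m * M := by
  refine (le_rpow_of_le_mul_rpow (one_div_pos.2 hm) hx h).trans (le_of_eq ?_)
  rw [one_div_one_div, ENNReal.mul_rpow_of_nonneg _ _ hm.le, ← ENNReal.rpow_mul,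
    one_div_mul_cancel hm.ne', ENNReal.rpow_one]

lemma sum_succ_rpow_le (a : ℕ → ℝ≥0∞) {M : ℝ} (hM : 1 ≤ M) (n : ℕ) :
    (∑ i ∈ Finset.range (n + 1), a i) ^ M ≤ a 0 ^ M + ENNReal.ofReal M *
      ∑ k ∈ Finset.range n, a (k + 1) * (∑ i ∈ Finset.range (k + 2), a i) ^ (M - 1) := by
  induction n with
  | zero => simp
  | succ n ih =>
    rw [Finset.sum_range_succ a, Finset.sum_range_succ (fun k => a (k + 1) * _), mul_add,
      ← add_assoc]
    refine (add_rpow_le _ _ hM).trans ?_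
    rw [← Finset.sum_range_succ a]
    gcongr

lemma sum_rpow_le (a : ℕ → ℝ≥0∞) {M : ℝ} (hM : 1 ≤ M) (n : ℕ) :
    (∑ i ∈ Finset.range n, a i) ^ M ≤ ENNReal.ofReal M *
      ∑ k ∈ Finset.range n, a k * (∑ i ∈ Finset.range (k + 1), a i) ^ (M - 1) := by
  induction n with
  | zero => simp [ENNReal.zero_rpow_of_pos (by linarith : 0 < M)]
  | succ n ih =>
    rw [Finset.sum_range_succ a, Finset.sum_range_succ (fun k => a k * _), mul_add]
    refine (add_rpow_le _ _ hM).trans ?_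
    rw [← Finset.sum_range_succ a]
    gcongr

lemma tsum_rpow_le_mul_tsum (a : ℕ → ℝ≥0∞) {M : ℝ} (hM : 1 ≤ M) :
    (∑' k, a k) ^ M ≤ ENNReal.ofReal M *
      ∑' k, a k * (∑ i ∈ Finset.range (k + 1), a i) ^ (M - 1) := by
  refine le_of_tendsto' ((ENNReal.continuous_rpow_const.tendsto _).comp
    (ENNReal.tendsto_nat_tsum a)) fun n => (sum_rpow_le a hM n).trans ?_
  gcongr
  exact ENNReal.sum_le_tsum _

lemma tsum_rpow_le_rpow_tsum {ι : Type*} (a : ι → ℝ≥0∞) {t : ℝ} (ht : 1 ≤ t) :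
    ∑' i, a i ^ t ≤ (∑' i, a i) ^ t := by
  calc ∑' i, a i ^ t ≤ ∑' i, a i * (∑' i, a i) ^ (t - 1) := by
        refine ENNReal.tsum_le_tsum fun i => ?_
        rw [rpow_eq_mul_rpow_sub_one _ ht]
        gcongr
        exact ENNReal.le_tsum i
    _ = (∑' i, a i) ^ t := by rw [ENNReal.tsum_mul_right, ← rpow_eq_mul_rpow_sub_one _ ht]

lemma sum_geometric_convolution_le (ε : ℝ≥0∞) (c : ℕ → ℝ≥0∞) (n : ℕ) :
    ∑ k ∈ Finset.range n, ∑ i ∈ Finset.range (k + 1), ε ^ (k - i) * c i ≤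
      (1 - ε)⁻¹ * ∑ i ∈ Finset.range n, c i := by
  rw [Finset.sum_comm' (t' := Finset.range n) (s' := fun i => Finset.Ico i n)
    (by intro x y; simp only [Finset.mem_range, Finset.mem_Ico]; omega), Finset.mul_sum]
  refine Finset.sum_le_sum fun i _ => ?_
  rw [← Finset.sum_mul]
  gcongr
  rw [Finset.sum_Ico_eq_sum_range, ← ENNReal.tsum_geometric]
  simp only [add_tsub_cancel_left]
  exact ENNReal.sum_le_tsum _

lemma tsum_geometric_convolution_le (ε : ℝ≥0∞) (c : ℕ → ℝ≥0∞) :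
    ∑' k, ∑ i ∈ Finset.range (k + 1), ε ^ (k - i) * c i ≤ (1 - ε)⁻¹ * ∑' i, c i := by
  rw [ENNReal.tsum_eq_iSup_nat]
  refine iSup_le fun n => (sum_geometric_convolution_le ε c n).trans ?_
  gcongr
  exact ENNReal.sum_le_tsum _

lemma inv_one_sub_ne_top {ε : ℝ≥0∞} (hε : ε < 1) : (1 - ε)⁻¹ ≠ ∞ := by
  simpa [tsub_eq_zero_iff_le] using hε

lemma exists_pos_le_ofReal {C : ℝ≥0∞} (hC : C ≠ ∞) : ∃ c > 0, C ≤ ENNReal.ofReal c :=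
  ⟨C.toReal + 1, by positivity,
    (ENNReal.ofReal_toReal hC).ge.trans (ENNReal.ofReal_le_ofReal (by linarith))⟩

lemma pow_rpow_comm (x : ℝ≥0∞) (k : ℕ) (r : ℝ) : (x ^ k) ^ r = (x ^ r) ^ k := by
  rw [← ENNReal.rpow_natCast, ← ENNReal.rpow_mul, mul_comm, ENNReal.rpow_mul, ENNReal.rpow_natCast]

lemma sum_rpow_mul_pow_le_of_forall {ε A : ℝ≥0∞} {s : ℝ} (hs : 0 < s) {w : ℕ → ℝ≥0∞}
    (hw : ∀ i, w i ^ s * ε ^ i ≤ A) (k : ℕ) :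
    (∑ i ∈ Finset.range (k + 1), w i) ^ s * ε ^ k ≤
      (A ^ (1 / s) * (1 - ε ^ (1 / s))⁻¹) ^ s := by
  set η := ε ^ (1 / s) with hη
  have hηpow (i : ℕ) : (η ^ i) ^ s = ε ^ i := by
    rw [pow_rpow_comm, hη, ← ENNReal.rpow_mul, one_div_mul_cancel hs.ne', ENNReal.rpow_one]
  have hwη (i : ℕ) : w i * η ^ i ≤ A ^ (1 / s) := by
    rw [one_div, ENNReal.le_rpow_inv_iff hs, ENNReal.mul_rpow_of_nonneg _ _ hs.le, hηpow]
    exact hw i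
  rw [← hηpow, ← ENNReal.mul_rpow_of_nonneg _ _ hs.le]
  refine ENNReal.rpow_le_rpow ?_ hs.le
  calc (∑ i ∈ Finset.range (k + 1), w i) * η ^ k
      ≤ ∑ i ∈ Finset.range (k + 1), A ^ (1 / s) * η ^ (k - i) := by
        rw [Finset.sum_mul]
        refine Finset.sum_le_sum fun i hi => ?_
        have hik : i ≤ k := Nat.lt_succ_iff.1 (Finset.mem_range.1 hi)
        rw [← Nat.add_sub_cancel' hik, pow_add, ← mul_assoc, Nat.add_sub_cancel' hik]
        exact mul_le_mul_left (hwη i) _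
    _ = A ^ (1 / s) * ∑ i ∈ Finset.range (k + 1), η ^ i := by
        rw [← Finset.mul_sum, ← Finset.sum_range_reflect (fun i => η ^ i)]
        simp
    _ ≤ A ^ (1 / s) * (1 - η)⁻¹ := by
        rw [← ENNReal.tsum_geometric]
        gcongr
        exact ENNReal.sum_le_tsum _

lemma pow_mul_sum_rpow_le {ε A : ℝ≥0∞} {m : ℝ} (hm : 1 ≤ m) {w : ℕ → ℝ≥0∞}
    (hw : ∀ k, (∑ i ∈ Finset.range (k + 1), w i) ^ (m - 1) * ε ^ k ≤ A) (k : ℕ) :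
    ε ^ k * (∑ i ∈ Finset.range (k + 1), w i) ^ m ≤
      ENNReal.ofReal m * (A * ∑ i ∈ Finset.range (k + 1), ε ^ (k - i) * w i) := by
  have hterm : ∀ i ∈ Finset.range (k + 1),
      ε ^ k * (w i * (∑ j ∈ Finset.range (i + 1), w j) ^ (m - 1)) ≤ A * (ε ^ (k - i) * w i) := by
    intro i hi
    have hik : i ≤ k := Nat.lt_succ_iff.1 (Finset.mem_range.1 hi)
    calc ε ^ k * (w i * (∑ j ∈ Finset.range (i + 1), w j) ^ (m - 1))
        = ((∑ j ∈ Finset.range (i + 1), w j) ^ (m - 1) * ε ^ i) * (ε ^ (k - i) * w i) := by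
          rw [← Nat.add_sub_cancel' hik, pow_add, Nat.add_sub_cancel' hik]
          ring
      _ ≤ A * (ε ^ (k - i) * w i) := mul_le_mul_left (hw i) _
  calc ε ^ k * (∑ i ∈ Finset.range (k + 1), w i) ^ m
      ≤ ε ^ k * (ENNReal.ofReal m * ∑ i ∈ Finset.range (k + 1),
          w i * (∑ j ∈ Finset.range (i + 1), w j) ^ (m - 1)) := by
        gcongr
        exact sum_rpow_le _ hm _
    _ = ENNReal.ofReal m * ∑ i ∈ Finset.range (k + 1),
          ε ^ k * (w i * (∑ j ∈ Finset.range (i + 1), w j) ^ (m - 1)) := by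
        rw [mul_left_comm, ← Finset.mul_sum]
    _ ≤ ENNReal.ofReal m * ∑ i ∈ Finset.range (k + 1), A * (ε ^ (k - i) * w i) := by
        gcongr ENNReal.ofReal m * ?_
        exact Finset.sum_le_sum hterm
    _ = _ := by rw [← Finset.mul_sum]

lemma tsum_pow_mul_sum_rpow_le {ε A : ℝ≥0∞} {m : ℝ} (hm : 1 ≤ m) {w : ℕ → ℝ≥0∞}
    (hw : ∀ k, (∑ i ∈ Finset.range (k + 1), w i) ^ (m - 1) * ε ^ k ≤ A) :
    ∑' k, ε ^ k * (∑ i ∈ Finset.range (k + 1), w i) ^ m ≤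
      ENNReal.ofReal m * A * (1 - ε)⁻¹ * ∑' k, w k := by
  calc ∑' k, ε ^ k * (∑ i ∈ Finset.range (k + 1), w i) ^ m
      ≤ ∑' k, ENNReal.ofReal m * (A * ∑ i ∈ Finset.range (k + 1), ε ^ (k - i) * w i) :=
        ENNReal.tsum_le_tsum (pow_mul_sum_rpow_le hm hw)
    _ = ENNReal.ofReal m * A * ∑' k, ∑ i ∈ Finset.range (k + 1), ε ^ (k - i) * w i := by
        rw [ENNReal.tsum_mul_left, ENNReal.tsum_mul_left, mul_assoc]
    _ ≤ ENNReal.ofReal m * A * ((1 - ε)⁻¹ * ∑' k, w k) := by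
        gcongr
        exact tsum_geometric_convolution_le ε w
    _ = _ := by rw [mul_assoc _ (1 - ε)⁻¹]

/-! ### Strong-type bounds from weak-type bounds -/

lemma lintegral_Ioc_rpow {a l : ℝ} (ha : -1 < a) (hl : 0 ≤ l) :
    ∫⁻ t in Ioc 0 l, ENNReal.ofReal (t ^ a) = ENNReal.ofReal (l ^ (a + 1) / (a + 1)) := by
  rw [← ofReal_integral_eq_lintegral_ofReal
      ((intervalIntegrable_iff_integrableOn_Ioc_of_le hl).1
        (intervalIntegral.intervalIntegrable_rpow' ha))
      (ae_restrict_of_forall_mem measurableSet_Ioc fun t ht => Real.rpow_nonneg ht.1.le a),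
    ← intervalIntegral.integral_of_le hl, integral_rpow (Or.inl ha),
    Real.zero_rpow (by linarith), sub_zero]

lemma lintegral_Ioi_rpow {a l : ℝ} (ha : a < -1) (hl : 0 < l) :
    ∫⁻ t in Ioi l, ENNReal.ofReal (t ^ a) = ENNReal.ofReal (-l ^ (a + 1) / (a + 1)) := by
  rw [← ofReal_integral_eq_lintegral_ofReal (integrableOn_Ioi_rpow_of_lt ha hl)
      (ae_restrict_of_forall_mem measurableSet_Ioi fun t ht =>
        Real.rpow_nonneg (hl.trans ht).le a),
    integral_Ioi_rpow_of_lt ha hl]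

section WeakType

variable {X : Type*} [MeasurableSpace X] {σ : Measure X} {u : X → ℝ≥0∞} {A : ℝ≥0∞} {s δ : ℝ}

lemma lintegral_rpow_eq_lintegral_meas_lt (hδ : 0 < δ) (hu : AEMeasurable u σ)
    (hfin : ∀ᵐ x ∂σ, u x < ∞) :
    ∫⁻ x, u x ^ δ ∂σ = ENNReal.ofReal δ *
      ∫⁻ t in Ioi (0 : ℝ), σ {x | ENNReal.ofReal t < u x} * ENNReal.ofReal (t ^ (δ - 1)) := by
  calc ∫⁻ x, u x ^ δ ∂σ = ∫⁻ x, ENNReal.ofReal ((u x).toReal ^ δ) ∂σ := by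
        refine lintegral_congr_ae (hfin.mono fun x hx => ?_)
        simp only [← ENNReal.ofReal_rpow_of_nonneg ENNReal.toReal_nonneg hδ.le,
          ENNReal.ofReal_toReal hx.ne]
    _ = ENNReal.ofReal δ *
          ∫⁻ t in Ioi (0 : ℝ), σ {x | t < (u x).toReal} * ENNReal.ofReal (t ^ (δ - 1)) :=
        lintegral_rpow_eq_lintegral_meas_lt_mul σ (ae_of_all _ fun x => ENNReal.toReal_nonneg)
          hu.ennreal_toReal hδ
    _ = _ := by
        refine congrArg _ (setLIntegral_congr_fun measurableSet_Ioi fun t ht => ?_)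
        refine congrArg (· * _) (measure_congr (hfin.mono fun x hx => propext ?_))
        exact (ENNReal.ofReal_lt_iff_lt_toReal (le_of_lt ht) hx.ne).symm

lemma ae_lt_top_of_meas_lt_le_div (hs : 0 < s) (hA : A ≠ ∞)
    (h : ∀ t : ℝ≥0∞, t ≠ 0 → t ≠ ∞ → σ {x | t < u x} ≤ A / t ^ s) : ∀ᵐ x ∂σ, u x < ∞ := by
  have hle (n : ℕ) : σ {x | u x = ∞} ≤ A / ((n + 1 : ℕ) : ℝ≥0∞) ^ s :=
    (measure_mono fun x (hx : u x = ∞) => by simp [hx, ENNReal.add_lt_top]).trans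
      (h _ (by simp) (ENNReal.natCast_ne_top _))
  have hlim : Tendsto (fun n : ℕ => A / ((n + 1 : ℕ) : ℝ≥0∞) ^ s) atTop (𝓝 0) := by
    have hpow := ((ENNReal.continuous_rpow_const (y := s)).tendsto ∞).comp
      (ENNReal.tendsto_nat_nhds_top.comp (tendsto_add_atTop_nat 1))
    simpa [ENNReal.top_rpow_of_pos hs] using ENNReal.Tendsto.const_div hpow (Or.inr hA)
  simpa [ae_iff] using ge_of_tendsto' hlim hle

lemma meas_ofReal_lt_mul_rpow_le (h : ∀ t : ℝ≥0∞, t ≠ 0 → t ≠ ∞ → σ {x | t < u x} ≤ A / t ^ s)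
    (δ : ℝ) {t : ℝ} (ht : 0 < t) :
    σ {x | ENNReal.ofReal t < u x} * ENNReal.ofReal (t ^ (δ - 1)) ≤
      A * ENNReal.ofReal (t ^ (δ - 1 - s)) := by
  calc σ {x | ENNReal.ofReal t < u x} * ENNReal.ofReal (t ^ (δ - 1))
      ≤ A / ENNReal.ofReal t ^ s * ENNReal.ofReal (t ^ (δ - 1)) := by
        gcongr
        exact h _ (by simpa using ht) ENNReal.ofReal_ne_top
    _ = A * ENNReal.ofReal (t ^ (δ - 1 - s)) := by
        rw [ENNReal.ofReal_rpow_of_pos ht, div_eq_mul_inv, mul_assoc,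
          ← ENNReal.ofReal_inv_of_pos (by positivity), ← ENNReal.ofReal_mul (by positivity),
          Real.rpow_sub ht (δ - 1) s, div_eq_inv_mul]

lemma lintegral_rpow_le_add_of_meas_lt_le_div (hδ : 0 < δ) (hδs : δ < s) (hu : AEMeasurable u σ)
    (hA : A ≠ ∞) (h : ∀ t : ℝ≥0∞, t ≠ 0 → t ≠ ∞ → σ {x | t < u x} ≤ A / t ^ s)
    {l : ℝ} (hl : 0 < l) :
    ∫⁻ x, u x ^ δ ∂σ ≤ σ univ * ENNReal.ofReal l ^ δ +
      ENNReal.ofReal (δ / (s - δ)) * (A * ENNReal.ofReal l ^ (δ - s)) := by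
  rw [lintegral_rpow_eq_lintegral_meas_lt hδ hu
      (ae_lt_top_of_meas_lt_le_div (hδ.trans hδs) hA h), ← Ioc_union_Ioi_eq_Ioi hl.le,
    lintegral_union measurableSet_Ioi (Ioc_disjoint_Ioi le_rfl), mul_add]
  gcongr ?_ + ?_
  · calc ENNReal.ofReal δ *
          ∫⁻ t in Ioc 0 l, σ {x | ENNReal.ofReal t < u x} * ENNReal.ofReal (t ^ (δ - 1))
        ≤ ENNReal.ofReal δ * ∫⁻ t in Ioc 0 l, σ univ * ENNReal.ofReal (t ^ (δ - 1)) := by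
          gcongr
          exact subset_univ _
      _ = σ univ * ENNReal.ofReal l ^ δ := by
          rw [lintegral_const_mul _ (by fun_prop), lintegral_Ioc_rpow (by linarith) hl.le,
            sub_add_cancel, mul_left_comm, ← ENNReal.ofReal_mul hδ.le, mul_div_cancel₀ _ hδ.ne',
            ENNReal.ofReal_rpow_of_pos hl]
  · calc ENNReal.ofReal δ *
          ∫⁻ t in Ioi l, σ {x | ENNReal.ofReal t < u x} * ENNReal.ofReal (t ^ (δ - 1))
        ≤ ENNReal.ofReal δ * ∫⁻ t in Ioi l, A * ENNReal.ofReal (t ^ (δ - 1 - s)) := by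
          gcongr ENNReal.ofReal δ * ?_
          exact setLIntegral_mono (by fun_prop) fun t ht =>
            meas_ofReal_lt_mul_rpow_le h δ (hl.trans ht)
      _ = ENNReal.ofReal (δ / (s - δ)) * (A * ENNReal.ofReal l ^ (δ - s)) := by
          have hconst : δ * (-l ^ (δ - s) / (δ - s)) = δ / (s - δ) * l ^ (δ - s) := by
            rw [← neg_sub s δ]
            field_simp
          rw [lintegral_const_mul _ (by fun_prop), lintegral_Ioi_rpow (by linarith) hl,
            show δ - 1 - s + 1 = δ - s by ring, mul_left_comm, ← ENNReal.ofReal_mul hδ.le, hconst,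
            ENNReal.ofReal_mul (by bound), ENNReal.ofReal_rpow_of_pos hl, mul_left_comm]

/-- Kolmogorov's inequality. -/
lemma lintegral_rpow_le_of_meas_lt_le_div [IsFiniteMeasure σ] (hδ : 0 < δ) (hδs : δ < s)
    (hu : AEMeasurable u σ) (hA : A ≠ ∞)
    (h : ∀ t : ℝ≥0∞, t ≠ 0 → t ≠ ∞ → σ {x | t < u x} ≤ A / t ^ s) :
    ∫⁻ x, u x ^ δ ∂σ ≤ ENNReal.ofReal (s / (s - δ)) * (σ univ ^ (1 - δ / s) * A ^ (δ / s)) := by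
  have hs : 0 < s := hδ.trans hδs
  rcases eq_or_ne (σ univ) 0 with hσ | hσ
  · simp [Measure.measure_univ_eq_zero.1 hσ]
  rcases eq_or_ne A 0 with rfl | hA0
  · rw [lintegral_rpow_eq_lintegral_meas_lt hδ hu (ae_lt_top_of_meas_lt_le_div hs hA h),
      setLIntegral_congr_fun (g := fun _ => 0) measurableSet_Ioi fun t ht =>
        le_antisymm ((meas_ofReal_lt_mul_rpow_le h δ ht).trans_eq (zero_mul _)) zero_le]
    simp
  have hσt : σ univ ≠ ∞ := measure_ne_top _ _
  -- the level at which the bounds `σ univ` and `A / t ^ s` for `σ {t < u}` agree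
  set l : ℝ≥0∞ := (A / σ univ) ^ (1 / s) with hl
  have hAσ0 : A / σ univ ≠ 0 := ENNReal.div_ne_zero.2 ⟨hA0, hσt⟩
  have hAσt : A / σ univ ≠ ∞ := ENNReal.div_ne_top hA hσ
  have hl0 : l ≠ 0 := by simp [hl, ENNReal.rpow_eq_zero_iff, hAσ0, hAσt]
  have hlt : l ≠ ∞ := ENNReal.rpow_ne_top_of_nonneg (by positivity) hAσt
  have hls : l ^ s * σ univ = A := by
    rw [hl, ← ENNReal.rpow_mul, one_div_mul_cancel hs.ne', ENNReal.rpow_one,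
      ENNReal.div_mul_cancel hσ hσt]
  have hbalance : A * l ^ (δ - s) = σ univ * l ^ δ := by
    rw [← hls, mul_assoc, mul_left_comm, ← ENNReal.rpow_add _ _ hl0 hlt, add_sub_cancel]
  have hvalue : σ univ * l ^ δ = σ univ ^ (1 - δ / s) * A ^ (δ / s) := by
    rw [hl, ← ENNReal.rpow_mul, one_div_mul_eq_div, ENNReal.div_rpow_of_nonneg _ _ (by positivity),
      ENNReal.rpow_sub _ _ hσ hσt, ENNReal.rpow_one]
    simp only [div_eq_mul_inv]
    ring
  have hsum : ENNReal.ofReal (s / (s - δ)) = 1 + ENNReal.ofReal (δ / (s - δ)) := by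
    rw [← ENNReal.ofReal_one, ← ENNReal.ofReal_add zero_le_one (by bound)]
    congr 1
    field_simp [(sub_pos.2 hδs).ne']
    ring
  have key := lintegral_rpow_le_add_of_meas_lt_le_div hδ hδs hu hA h (ENNReal.toReal_pos hl0 hlt)
  rwa [ENNReal.ofReal_toReal hlt, hbalance, hvalue, ← one_add_mul, ← hsum] at key

lemma lintegral_rpow_le_of_le_one_of_meas_lt_le_div {m : ℝ} (hm : 1 < m) (hu : AEMeasurable u σ)
    (hu1 : ∀ x, u x ≤ 1) (h : ∀ t : ℝ≥0∞, t ≠ 0 → t ≠ ∞ → σ {x | t < u x} ≤ A / t) :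
    ∫⁻ x, u x ^ m ∂σ ≤ ENNReal.ofReal (m / (m - 1)) * A := by
  have htail : ∫⁻ t in Ioi (1 : ℝ),
      σ {x | ENNReal.ofReal t < u x} * ENNReal.ofReal (t ^ (m - 1)) = 0 := by
    rw [setLIntegral_congr_fun (g := fun _ => 0) measurableSet_Ioi fun t ht => ?_, lintegral_zero]
    have hempty : {x | ENNReal.ofReal t < u x} = ∅ :=
      eq_empty_of_forall_notMem fun x hx => (hu1 x).not_gt (lt_trans (by simpa using ht) hx)
    simp only [hempty, measure_empty, zero_mul]
  rw [lintegral_rpow_eq_lintegral_meas_lt (by linarith) hu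
      (ae_of_all _ fun x => (hu1 x).trans_lt ENNReal.one_lt_top),
    ← Ioc_union_Ioi_eq_Ioi zero_le_one,
    lintegral_union measurableSet_Ioi (Ioc_disjoint_Ioi le_rfl), htail, add_zero]
  calc ENNReal.ofReal m *
        ∫⁻ t in Ioc (0 : ℝ) 1, σ {x | ENNReal.ofReal t < u x} * ENNReal.ofReal (t ^ (m - 1))
      ≤ ENNReal.ofReal m * ∫⁻ t in Ioc (0 : ℝ) 1, A * ENNReal.ofReal (t ^ (m - 1 - 1)) := by
        gcongr ENNReal.ofReal m * ?_
        exact setLIntegral_mono (by fun_prop) fun t ht =>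
          meas_ofReal_lt_mul_rpow_le (by simpa using h) m ht.1
    _ = ENNReal.ofReal (m / (m - 1)) * A := by
        rw [lintegral_const_mul _ (by fun_prop), lintegral_Ioc_rpow (by linarith) zero_le_one,
          sub_add_cancel, Real.one_rpow, mul_left_comm, ← ENNReal.ofReal_mul (by linarith),
          mul_one_div, mul_comm]

end WeakType

/-! ### Ball densities and discretised Wolff potentials -/

section Wolff

variable {N : ℕ}

/-- The fractional density `μ (B_ρ(x)) ρ ^ (β - N)` at the dyadic radius `ρ = T / 2 ^ k`. -/
def ballDensity (β T : ℝ) (μ : Measure (Euc N)) (k : ℕ) (x : Euc N) : ℝ≥0∞ :=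
  μ (ball x (T / 2 ^ k)) * ENNReal.ofReal ((T / 2 ^ k) ^ (β - N))

lemma measurable_measure_ball {X : Type*} [PseudoMetricSpace X] [SecondCountableTopology X]
    [MeasurableSpace X] [OpensMeasurableSpace X] (μ : Measure X) [SFinite μ] :
    Measurable fun z : X × ℝ => μ (ball z.1 z.2) := by
  have hs : MeasurableSet {w : (X × ℝ) × X | dist w.2 w.1.1 < w.1.2} :=
    measurableSet_lt (by fun_prop) (by fun_prop)
  exact measurable_measure_prodMk_left hs

lemma measurable_measure_ball_const {X : Type*} [PseudoMetricSpace X] [SecondCountableTopology X]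
    [MeasurableSpace X] [OpensMeasurableSpace X] (μ : Measure X) [SFinite μ] (ρ : ℝ) :
    Measurable fun x => μ (ball x ρ) := by
  have hρ : Measurable fun x : X => (x, ρ) := measurable_id.prodMk measurable_const
  exact (measurable_measure_ball μ).comp hρ

lemma measurable_ballDensity (β T : ℝ) (μ : Measure (Euc N)) [SFinite μ] (k : ℕ) :
    Measurable (ballDensity β T μ k) :=
  (measurable_measure_ball_const μ _).mul_const _

lemma measurable_wolff (α p : ℝ) (R : ℝ≥0∞) (μ : Measure (Euc N)) [SFinite μ] :
    Measurable (wolff α p R μ) := by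
  unfold wolff
  refine Measurable.lintegral_prod_right' (f := fun z : Euc N × ℝ =>
    (μ (ball z.1 z.2) / ENNReal.ofReal (z.2 ^ ((N : ℝ) - α * p))) ^ (1 / (p - 1)) /
      ENNReal.ofReal z.2) ?_
  exact (((measurable_measure_ball μ).div (by fun_prop)).pow_const _).div (by fun_prop)

lemma ofReal_rpow_sub_eq_inv {ρ : ℝ} (hρ : 0 < ρ) (β : ℝ) :
    ENNReal.ofReal (ρ ^ (β - N)) = (ENNReal.ofReal (ρ ^ ((N : ℝ) - β)))⁻¹ := by
  rw [← ENNReal.ofReal_inv_of_pos (by positivity), ← Real.rpow_neg hρ.le, neg_sub]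

lemma ofReal_two_rpow_mul_ofReal_two_mul_rpow {ρ : ℝ} (hρ : 0 < ρ) (β : ℝ) :
    ENNReal.ofReal (2 ^ ((N : ℝ) - β)) * ENNReal.ofReal ((2 * ρ) ^ (β - N)) =
      ENNReal.ofReal (ρ ^ (β - N)) := by
  rw [← ENNReal.ofReal_mul (by positivity), Real.mul_rpow (by norm_num) hρ.le, ← mul_assoc,
    ← Real.rpow_add (by norm_num)]
  simp

lemma ofReal_div_two_pow_rpow {T : ℝ} (hT : 0 < T) (β : ℝ) (k : ℕ) :
    ENNReal.ofReal ((T / 2 ^ k) ^ β) = ENNReal.ofReal (T ^ β) * ENNReal.ofReal (2 ^ (-β)) ^ k := by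
  rw [← ENNReal.ofReal_pow (by positivity), ← ENNReal.ofReal_mul (by positivity),
    Real.div_rpow hT.le (by positivity), div_eq_mul_inv, ← Real.rpow_natCast, ← Real.rpow_natCast,
    ← Real.rpow_mul (by norm_num), ← Real.rpow_mul (by norm_num), ← Real.rpow_neg (by norm_num)]
  ring_nf

lemma ofReal_two_rpow_neg_lt_one {β : ℝ} (hβ : 0 < β) : ENNReal.ofReal (2 ^ (-β)) < 1 := by
  rw [ENNReal.ofReal_lt_one]
  exact Real.rpow_lt_one_of_one_lt_of_neg one_lt_two (by linarith)

lemma volume_Ioc_dyadic {T : ℝ} (k : ℕ) :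
    volume (Ioc (T / 2 ^ (k + 1)) (T / 2 ^ k)) = ENNReal.ofReal (T / 2 ^ (k + 1)) := by
  rw [Real.volume_Ioc]
  congr 1
  rw [pow_succ]
  field_simp
  norm_num

lemma truncation_subset_iUnion_Ioc {T : ℝ} :
    {ρ : ℝ | 0 < ρ ∧ ENNReal.ofReal ρ < ENNReal.ofReal T} ⊆
      ⋃ k : ℕ, Ioc (T / 2 ^ (k + 1)) (T / 2 ^ k) := by
  rintro ρ ⟨hρ, hρT⟩
  have hlt : ρ < T := (ENNReal.ofReal_lt_ofReal_iff_of_nonneg hρ.le).1 hρT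
  obtain ⟨k, hk, hk'⟩ := exists_nat_pow_near (x := T / ρ) (y := 2)
    ((one_le_div hρ).2 hlt.le) one_lt_two
  rw [le_div_iff₀ hρ] at hk
  rw [div_lt_iff₀ hρ] at hk'
  refine mem_iUnion.2 ⟨k, ?_, ?_⟩
  · rw [div_lt_iff₀ (by positivity)]; linarith
  · rw [le_div_iff₀ (by positivity)]; linarith

lemma pairwise_disjoint_Ioo_dyadic {T : ℝ} (hT : 0 < T) :
    Pairwise (Function.onFun Disjoint fun k : ℕ => Ioo (T / 2 ^ k) (2 * (T / 2 ^ k))) := by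
  have disjoint_of_lt {i j : ℕ} (hij : i < j) :
      Disjoint (Ioo (T / 2 ^ i) (2 * (T / 2 ^ i))) (Ioo (T / 2 ^ j) (2 * (T / 2 ^ j))) := by
    have hle : 2 * (T / 2 ^ j) ≤ T / 2 ^ i := by
      have hpow : (2 : ℝ) * 2 ^ i ≤ 2 ^ j := by
        rw [← pow_succ']; exact pow_le_pow_right₀ one_le_two hij
      rw [mul_div_assoc', div_le_div_iff₀ (by positivity) (by positivity)]
      nlinarith
    exact Set.disjoint_left.2 fun ρ hi hj => by linarith [hi.1, hj.2]
  intro i j hij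
  rcases lt_or_gt_of_ne hij with h | h
  · exact disjoint_of_lt h
  · exact (disjoint_of_lt h).symm

lemma setLIntegral_Ioc_dyadic_le_ballDensity_rpow {α p T : ℝ} (hp : 1 < p) (hN : α * p ≤ N)
    (hT : 0 < T) (μ : Measure (Euc N)) (x : Euc N) (k : ℕ) :
    ∫⁻ ρ in Ioc (T / 2 ^ (k + 1)) (T / 2 ^ k),
        (μ (ball x ρ) / ENNReal.ofReal (ρ ^ ((N : ℝ) - α * p))) ^ (1 / (p - 1)) /
          ENNReal.ofReal ρ ≤
      ENNReal.ofReal (2 ^ ((N : ℝ) - α * p)) ^ (1 / (p - 1)) *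
        ballDensity (α * p) T μ k x ^ (1 / (p - 1)) := by
  have hr : 0 ≤ 1 / (p - 1) := by have := sub_pos.2 hp; positivity
  set r := 1 / (p - 1)
  set a := T / 2 ^ (k + 1) with ha
  have ha0 : 0 < a := by positivity
  have h2a : T / 2 ^ k = 2 * a := by rw [ha, pow_succ]; field_simp
  calc ∫⁻ ρ in Ioc a (T / 2 ^ k),
        (μ (ball x ρ) / ENNReal.ofReal (ρ ^ ((N : ℝ) - α * p))) ^ r / ENNReal.ofReal ρ
      ≤ ∫⁻ _ in Ioc a (T / 2 ^ k), (μ (ball x (T / 2 ^ k)) /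
          ENNReal.ofReal (a ^ ((N : ℝ) - α * p))) ^ r / ENNReal.ofReal a := by
        refine setLIntegral_mono' measurableSet_Ioc fun ρ hρ => ?_
        have hpow : a ^ ((N : ℝ) - α * p) ≤ ρ ^ ((N : ℝ) - α * p) :=
          Real.rpow_le_rpow ha0.le hρ.1.le (by linarith)
        have haρ := hρ.1.le
        have hρT := hρ.2
        gcongr
    _ = (μ (ball x (T / 2 ^ k)) / ENNReal.ofReal (a ^ ((N : ℝ) - α * p))) ^ r := by
        rw [setLIntegral_const, ha, volume_Ioc_dyadic, ENNReal.div_mul_cancel] <;> simp [← ha, ha0]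
    _ = ENNReal.ofReal (2 ^ ((N : ℝ) - α * p)) ^ r * ballDensity (α * p) T μ k x ^ r := by
        rw [ballDensity, ← ENNReal.mul_rpow_of_nonneg _ _ hr, h2a, mul_left_comm,
          ofReal_two_rpow_mul_ofReal_two_mul_rpow ha0, ofReal_rpow_sub_eq_inv ha0,
          div_eq_mul_inv]

lemma wolff_le_tsum_ballDensity {α p T : ℝ} (hp : 1 < p) (hN : α * p ≤ N) (hT : 0 < T)
    (μ : Measure (Euc N)) (x : Euc N) :
    wolff α p (ENNReal.ofReal T) μ x ≤ ENNReal.ofReal (2 ^ ((N : ℝ) - α * p)) ^ (1 / (p - 1)) *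
      ∑' k, ballDensity (α * p) T μ k x ^ (1 / (p - 1)) := by
  refine (lintegral_mono_set truncation_subset_iUnion_Ioc).trans ?_
  refine (lintegral_iUnion_le _ _).trans ?_
  rw [← ENNReal.tsum_mul_left]
  exact ENNReal.tsum_le_tsum (setLIntegral_Ioc_dyadic_le_ballDensity_rpow hp hN hT μ x)

lemma measure_ball_rpow_mul_le_setLIntegral {α p a b : ℝ} (hp : 1 < p) (hN : α * p ≤ N)
    (ha : 0 < a) (hab : a < b) (μ : Measure (Euc N)) (x : Euc N) :
    (μ (ball x a) * ENNReal.ofReal (b ^ (α * p - N))) ^ (1 / (p - 1)) *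
        ENNReal.ofReal ((b - a) / b) ≤
      ∫⁻ ρ in Ioo a b, (μ (ball x ρ) / ENNReal.ofReal (ρ ^ ((N : ℝ) - α * p))) ^ (1 / (p - 1)) /
        ENNReal.ofReal ρ := by
  have hr : 0 ≤ 1 / (p - 1) := by have := sub_pos.2 hp; positivity
  set r := 1 / (p - 1)
  have hb : 0 < b := ha.trans hab
  calc (μ (ball x a) * ENNReal.ofReal (b ^ (α * p - N))) ^ r * ENNReal.ofReal ((b - a) / b)
      = ∫⁻ _ in Ioo a b, (μ (ball x a) / ENNReal.ofReal (b ^ ((N : ℝ) - α * p))) ^ r /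
          ENNReal.ofReal b := by
        rw [setLIntegral_const, Real.volume_Ioo, ofReal_rpow_sub_eq_inv hb,
          ENNReal.ofReal_div_of_pos hb]
        simp only [div_eq_mul_inv]
        ring
    _ ≤ _ := by
        refine setLIntegral_mono' measurableSet_Ioo fun ρ hρ => ?_
        have hρ0 : 0 < ρ := ha.trans hρ.1
        have hpow : ρ ^ ((N : ℝ) - α * p) ≤ b ^ ((N : ℝ) - α * p) :=
          Real.rpow_le_rpow hρ0.le hρ.2.le (by linarith)
        have haρ := hρ.1.le
        have hρb := hρ.2.le
        gcongr

lemma measure_ball_rpow_mul_le_wolff {α p a b T : ℝ} (hp : 1 < p) (hN : α * p ≤ N)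
    (ha : 0 < a) (hab : a < b) (hbT : b ≤ T) (μ : Measure (Euc N)) (x : Euc N) :
    (μ (ball x a) * ENNReal.ofReal (b ^ (α * p - N))) ^ (1 / (p - 1)) *
        ENNReal.ofReal ((b - a) / b) ≤ wolff α p (ENNReal.ofReal T) μ x := by
  refine (measure_ball_rpow_mul_le_setLIntegral hp hN ha hab μ x).trans ?_
  unfold wolff
  refine lintegral_mono_set fun ρ hρ => ?_
  exact ⟨ha.trans hρ.1, (ENNReal.ofReal_lt_ofReal_iff (by linarith)).2 (hρ.2.trans_le hbT)⟩

lemma ballDensity_rpow_le_setLIntegral_Ioo {α p T : ℝ} (hp : 1 < p) (hN : α * p ≤ N)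
    (hT : 0 < T) (μ : Measure (Euc N)) (x : Euc N) (k : ℕ) :
    ballDensity (α * p) T μ k x ^ (1 / (p - 1)) ≤
      2 * ENNReal.ofReal (2 ^ ((N : ℝ) - α * p)) ^ (1 / (p - 1)) *
        ∫⁻ ρ in Ioo (T / 2 ^ k) (2 * (T / 2 ^ k)),
          (μ (ball x ρ) / ENNReal.ofReal (ρ ^ ((N : ℝ) - α * p))) ^ (1 / (p - 1)) /
            ENNReal.ofReal ρ := by
  have hr : 0 ≤ 1 / (p - 1) := by have := sub_pos.2 hp; positivity
  have hlower := measure_ball_rpow_mul_le_setLIntegral hp hN (by positivity : 0 < T / 2 ^ k)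
    (by linarith [show 0 < T / 2 ^ k by positivity] : T / 2 ^ k < 2 * (T / 2 ^ k)) μ x
  set r := 1 / (p - 1)
  set a := T / 2 ^ k
  have ha0 : 0 < a := by positivity
  refine le_trans (le_of_eq ?_) (mul_le_mul_right hlower _)
  have hhalf : ENNReal.ofReal ((2 * a - a) / (2 * a)) = 2⁻¹ := by
    rw [show (2 * a - a) / (2 * a) = 2⁻¹ by field_simp; norm_num,
      ENNReal.ofReal_inv_of_pos two_pos, ENNReal.ofReal_ofNat]
  calc ballDensity (α * p) T μ k x ^ r
      = 2 * 2⁻¹ * (ENNReal.ofReal (2 ^ ((N : ℝ) - α * p)) *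
          (μ (ball x a) * ENNReal.ofReal ((2 * a) ^ (α * p - N)))) ^ r := by
        rw [ENNReal.mul_inv_cancel two_ne_zero ENNReal.ofNat_ne_top, one_mul, mul_left_comm,
          ofReal_two_rpow_mul_ofReal_two_mul_rpow ha0, ballDensity]
    _ = _ := by
        rw [hhalf, ENNReal.mul_rpow_of_nonneg _ _ hr]
        ring

lemma tsum_ballDensity_le_wolff {α p T T' : ℝ} (hp : 1 < p) (hN : α * p ≤ N) (hT : 0 < T)
    (hTT' : 2 * T ≤ T') (μ : Measure (Euc N)) (x : Euc N) :
    ∑' k, ballDensity (α * p) T μ k x ^ (1 / (p - 1)) ≤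
      2 * ENNReal.ofReal (2 ^ ((N : ℝ) - α * p)) ^ (1 / (p - 1)) *
        wolff α p (ENNReal.ofReal T') μ x := by
  refine (ENNReal.tsum_le_tsum (ballDensity_rpow_le_setLIntegral_Ioo hp hN hT μ x)).trans ?_
  rw [ENNReal.tsum_mul_left,
    ← lintegral_iUnion (fun _ => measurableSet_Ioo) (pairwise_disjoint_Ioo_dyadic hT)]
  gcongr
  refine lintegral_mono_set fun ρ hρ => ?_
  obtain ⟨k, hk⟩ := mem_iUnion.1 hρ
  have ha : 0 < T / 2 ^ k := by positivity
  have hle : T / 2 ^ k ≤ T := div_le_self hT.le (one_le_pow₀ one_le_two)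
  exact ⟨ha.trans hk.1, (ENNReal.ofReal_lt_ofReal_iff (by linarith)).2 (by linarith [hk.2])⟩

end Wolff

/-! ### Powers of sums with geometrically decaying correlations -/

section PartialSum

variable {X : Type*}

/-- The sum of the first `n + 1` terms of a sequence of functions. -/
def partialSum (f : ℕ → X → ℝ≥0∞) (n : ℕ) (x : X) : ℝ≥0∞ :=
  ∑ i ∈ Finset.range (n + 1), f i x

@[simp]
lemma partialSum_zero (f : ℕ → X → ℝ≥0∞) (x : X) : partialSum f 0 x = f 0 x := by
  simp [partialSum]

lemma partialSum_mono (f : ℕ → X → ℝ≥0∞) (x : X) : Monotone fun n => partialSum f n x :=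
  fun _ _ h => Finset.sum_le_sum_of_subset (Finset.range_mono (Nat.succ_le_succ h))

variable [MeasurableSpace X] {ν : Measure X} {f : ℕ → X → ℝ≥0∞}

lemma measurable_partialSum (hf : ∀ i, Measurable (f i)) (n : ℕ) :
    Measurable (partialSum f n) :=
  Finset.measurable_fun_sum _ fun i _ => hf i

/-- The mass which the `i`-th term contributes to the `M`-th power of the partial sums, with two
factors split off so that the correlation with another term can be estimated. -/
def correlation (ν : Measure X) (f : ℕ → X → ℝ≥0∞) (M : ℝ) (k i : ℕ) : ℝ≥0∞ :=
  ∫⁻ x, f k x * (f i x * partialSum f i x ^ (M - 2)) ∂ν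

variable {M : ℝ} {B ε : ℝ≥0∞}

lemma measurable_correlation_integrand (hf : ∀ i, Measurable (f i)) (M : ℝ) (k i : ℕ) :
    Measurable fun x => f k x * (f i x * partialSum f i x ^ (M - 2)) :=
  (hf k).mul ((hf i).mul ((measurable_partialSum hf i).pow_const _))

lemma lintegral_mul_partialSum_rpow_le (hf : ∀ i, Measurable (f i)) (hM : 2 ≤ M)
    (h0 : ∀ k, correlation ν f M (k + 1) 0 ≤ B * (ε ^ k * correlation ν f M 0 0))
    (hsucc : ∀ k i, i ≤ k →
      correlation ν f M (k + 1) (i + 1) ≤ B * (ε ^ (k - i) * correlation ν f M i i)) (k : ℕ) :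
    ∫⁻ x, f (k + 1) x * partialSum f (k + 1) x ^ (M - 1) ∂ν ≤
      (1 + ENNReal.ofReal (M - 1)) * B *
        ∑ i ∈ Finset.range (k + 1), ε ^ (k - i) * correlation ν f M i i := by
  have hpow (x : X) : f 0 x ^ (M - 1) = f 0 x * partialSum f 0 x ^ (M - 2) := by
    rw [rpow_eq_mul_rpow_sub_one _ (by linarith : 1 ≤ M - 1), partialSum_zero,
      show M - 1 - 1 = M - 2 by ring]
  calc ∫⁻ x, f (k + 1) x * partialSum f (k + 1) x ^ (M - 1) ∂ν
      ≤ ∫⁻ x, (f (k + 1) x * (f 0 x * partialSum f 0 x ^ (M - 2)) +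
          ENNReal.ofReal (M - 1) * ∑ i ∈ Finset.range (k + 1),
            f (k + 1) x * (f (i + 1) x * partialSum f (i + 1) x ^ (M - 2))) ∂ν := by
        refine lintegral_mono fun x => ?_
        have hsum := sum_succ_rpow_le (fun i => f i x) (by linarith : 1 ≤ M - 1) (k + 1)
        rw [show M - 1 - 1 = M - 2 by ring] at hsum
        refine (mul_le_mul_right hsum _).trans (le_of_eq ?_)
        rw [mul_add, mul_left_comm, Finset.mul_sum, hpow]
        rfl
    _ = correlation ν f M (k + 1) 0 + ENNReal.ofReal (M - 1) *
          ∑ i ∈ Finset.range (k + 1), correlation ν f M (k + 1) (i + 1) := by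
        have hmeas := measurable_correlation_integrand hf M (k + 1)
        rw [lintegral_add_left (hmeas 0), lintegral_const_mul _
          (Finset.measurable_fun_sum _ fun i _ => hmeas (i + 1)),
          lintegral_finsetSum _ fun i _ => hmeas (i + 1)]
        rfl
    _ ≤ B * (∑ i ∈ Finset.range (k + 1), ε ^ (k - i) * correlation ν f M i i) +
          ENNReal.ofReal (M - 1) *
            (B * ∑ i ∈ Finset.range (k + 1), ε ^ (k - i) * correlation ν f M i i) := by
        gcongr
        · refine (h0 k).trans (mul_le_mul_right ?_ _)
          exact Finset.single_le_sum (f := fun i => ε ^ (k - i) * correlation ν f M i i)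
            (fun _ _ => zero_le) (Finset.mem_range.2 k.succ_pos)
        · rw [Finset.mul_sum]
          exact Finset.sum_le_sum fun i hi =>
            hsucc k i (Nat.lt_succ_iff.1 (Finset.mem_range.1 hi))
    _ = _ := by ring

lemma lintegral_partialSum_rpow_le_sum_correlation (hf : ∀ i, Measurable (f i)) (hM : 2 ≤ M)
    (h0 : ∀ k, correlation ν f M (k + 1) 0 ≤ B * (ε ^ k * correlation ν f M 0 0))
    (hsucc : ∀ k i, i ≤ k →
      correlation ν f M (k + 1) (i + 1) ≤ B * (ε ^ (k - i) * correlation ν f M i i)) (n : ℕ) :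
    ∫⁻ x, partialSum f n x ^ M ∂ν ≤
      (1 + ENNReal.ofReal M * ((1 + ENNReal.ofReal (M - 1)) * B * (1 - ε)⁻¹)) *
        ∑ i ∈ Finset.range (n + 1), correlation ν f M i i := by
  have hfirst : ∫⁻ x, f 0 x ^ M ∂ν = correlation ν f M 0 0 := by
    refine lintegral_congr fun x => ?_
    rw [rpow_eq_mul_rpow_sub_one _ (by linarith : 1 ≤ M),
      rpow_eq_mul_rpow_sub_one _ (by linarith : 1 ≤ M - 1), partialSum_zero,
      show M - 1 - 1 = M - 2 by ring]
  calc ∫⁻ x, partialSum f n x ^ M ∂ν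
      ≤ ∫⁻ x, (f 0 x ^ M + ENNReal.ofReal M * ∑ k ∈ Finset.range n,
          f (k + 1) x * partialSum f (k + 1) x ^ (M - 1)) ∂ν :=
        lintegral_mono fun x => sum_succ_rpow_le (fun i => f i x) (by linarith) n
    _ = correlation ν f M 0 0 + ENNReal.ofReal M * ∑ k ∈ Finset.range n,
          ∫⁻ x, f (k + 1) x * partialSum f (k + 1) x ^ (M - 1) ∂ν := by
        have hmeas (i : ℕ) : Measurable fun x => f (i + 1) x * partialSum f (i + 1) x ^ (M - 1) :=
          (hf _).mul ((measurable_partialSum hf _).pow_const _)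
        rw [lintegral_add_left ((hf 0).pow_const _), lintegral_const_mul _
            (Finset.measurable_fun_sum _ fun i _ => hmeas i),
            lintegral_finsetSum _ fun i _ => hmeas i, hfirst]
    _ ≤ correlation ν f M 0 0 + ENNReal.ofReal M * ((1 + ENNReal.ofReal (M - 1)) * B *
          ((1 - ε)⁻¹ * ∑ i ∈ Finset.range n, correlation ν f M i i)) := by
        gcongr
        refine (Finset.sum_le_sum fun k _ =>
          lintegral_mul_partialSum_rpow_le hf hM h0 hsucc k).trans ?_
        rw [← Finset.mul_sum]
        exact mul_le_mul_right (sum_geometric_convolution_le ε _ n) _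
    _ ≤ _ := by
        rw [add_mul 1 (ENNReal.ofReal M * _), one_mul, mul_assoc (ENNReal.ofReal M),
          mul_assoc ((1 + ENNReal.ofReal (M - 1)) * B)]
        gcongr
        · exact Finset.single_le_sum (f := fun i => correlation ν f M i i) (fun _ _ => zero_le)
            (Finset.mem_range.2 n.succ_pos)
        · exact n.le_succ

lemma sum_correlation_le_lintegral_iSup_mul (hf : ∀ i, Measurable (f i)) (hM : 2 ≤ M) (n : ℕ) :
    ∑ i ∈ Finset.range (n + 1), correlation ν f M i i ≤
      ∫⁻ x, (⨆ i, f i x) * partialSum f n x ^ (M - 1) ∂ν := by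
  unfold correlation
  rw [← lintegral_finsetSum _ fun i _ => measurable_correlation_integrand hf M i i]
  refine lintegral_mono fun x => ?_
  rw [rpow_eq_mul_rpow_sub_one _ (by linarith : 1 ≤ M - 1), show M - 1 - 1 = M - 2 by ring]
  calc ∑ i ∈ Finset.range (n + 1), f i x * (f i x * partialSum f i x ^ (M - 2))
      ≤ ∑ i ∈ Finset.range (n + 1), (⨆ i, f i x) * (f i x * partialSum f n x ^ (M - 2)) := by
        refine Finset.sum_le_sum fun i hi => mul_le_mul' (le_iSup (fun i => f i x) i)
          (mul_le_mul_right (ENNReal.rpow_le_rpow ?_ (by linarith)) _)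
        exact partialSum_mono f x (Nat.lt_succ_iff.1 (Finset.mem_range.1 hi))
    _ = _ := by rw [← Finset.mul_sum, ← Finset.sum_mul]; rfl

lemma lintegral_mul_rpow_sub_one_le {g h : X → ℝ≥0∞} (hg : AEMeasurable g ν)
    (hh : AEMeasurable h ν) (hM : 1 < M) :
    ∫⁻ x, g x * h x ^ (M - 1) ∂ν ≤
      (∫⁻ x, g x ^ M ∂ν) ^ (1 / M) * (∫⁻ x, h x ^ M ∂ν) ^ (1 - 1 / M) := by
  have hM1 : M - 1 ≠ 0 := by linarith
  have hholder := ENNReal.lintegral_mul_le_Lp_mul_Lq ν (Real.HolderConjugate.conjExponent hM)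
    hg (hh.pow_const (M - 1))
  refine hholder.trans (le_of_eq ?_)
  simp only [Real.conjExponent, ← ENNReal.rpow_mul, mul_div_cancel₀ _ hM1]
  congr 2
  field_simp

lemma lintegral_partialSum_rpow_le (hf : ∀ i, Measurable (f i)) (hM : 2 ≤ M)
    (h0 : ∀ k, correlation ν f M (k + 1) 0 ≤ B * (ε ^ k * correlation ν f M 0 0))
    (hsucc : ∀ k i, i ≤ k →
      correlation ν f M (k + 1) (i + 1) ≤ B * (ε ^ (k - i) * correlation ν f M i i)) {n : ℕ}
    (hn : ∫⁻ x, partialSum f n x ^ M ∂ν ≠ ∞) :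
    ∫⁻ x, partialSum f n x ^ M ∂ν ≤
      (1 + ENNReal.ofReal M * ((1 + ENNReal.ofReal (M - 1)) * B * (1 - ε)⁻¹)) ^ M *
        ∫⁻ x, (⨆ i, f i x) ^ M ∂ν := by
  have hM0 : 0 < M := by linarith
  set C := 1 + ENNReal.ofReal M * ((1 + ENNReal.ofReal (M - 1)) * B * (1 - ε)⁻¹)
  set Z := ∫⁻ x, partialSum f n x ^ M ∂ν
  set S := ∫⁻ x, (⨆ i, f i x) ^ M ∂ν
  have hself : Z ≤ C * S ^ (1 / M) * Z ^ (1 - 1 / M) := by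
    rw [mul_assoc]
    refine (lintegral_partialSum_rpow_le_sum_correlation hf hM h0 hsucc n).trans
      (mul_le_mul_right ?_ _)
    exact (sum_correlation_le_lintegral_iSup_mul hf hM n).trans
      (lintegral_mul_rpow_sub_one_le (Measurable.iSup hf).aemeasurable
        (measurable_partialSum hf n).aemeasurable (by linarith))
  have habsorb := le_rpow_of_le_mul_rpow (one_div_pos.2 hM0) hn hself
  rwa [one_div_one_div, ENNReal.mul_rpow_of_nonneg _ _ hM0.le, ← ENNReal.rpow_mul,
    one_div_mul_cancel hM0.ne', ENNReal.rpow_one] at habsorb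

lemma lintegral_tsum_rpow_le_of_forall (hf : ∀ i, Measurable (f i)) (hM : 0 ≤ M)
    (h : ∀ n, ∫⁻ x, (∑ i ∈ Finset.range n, f i x) ^ M ∂ν ≤ B) :
    ∫⁻ x, (∑' i, f i x) ^ M ∂ν ≤ B := by
  have hlim : Tendsto (fun n => ∫⁻ x, (∑ i ∈ Finset.range n, f i x) ^ M ∂ν) atTop
      (𝓝 (∫⁻ x, (∑' i, f i x) ^ M ∂ν)) := by
    refine lintegral_tendsto_of_tendsto_of_monotone
      (fun n => ((Finset.measurable_fun_sum _ fun i _ => hf i).pow_const M).aemeasurable) ?_ ?_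
    · refine Eventually.of_forall fun x n n' hn => ?_
      exact ENNReal.rpow_le_rpow (Finset.sum_le_sum_of_subset (Finset.range_mono hn)) hM
    · exact Eventually.of_forall fun x =>
        (ENNReal.continuous_rpow_const.tendsto _).comp (ENNReal.tendsto_nat_tsum _)
  exact le_of_tendsto' hlim h

end PartialSum

/-! ### The Muckenhoupt–Wheeden inequality -/

section MuckenhouptWheeden

lemma dist_lt_of_measure_ball_ne_zero {X : Type*} [PseudoMetricSpace X] [MeasurableSpace X]
    {μ : Measure X} {x0 x : X} {L ρ : ℝ} (hsupp : μ (ball x0 L)ᶜ = 0) (h : μ (ball x ρ) ≠ 0) :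
    dist x x0 < L + ρ := by
  by_contra hcon
  refine h (measure_mono_null (fun y hy => ?_) hsupp)
  simp only [mem_compl_iff, mem_ball, not_lt] at hy ⊢
  linarith [dist_triangle_left x x0 y]

lemma lintegral_setLIntegral_ball_swap {X : Type*} [PseudoMetricSpace X]
    [SecondCountableTopology X] [MeasurableSpace X] [OpensMeasurableSpace X] {μ ν : Measure X}
    [SFinite μ] [SFinite ν] {F : X → X → ℝ≥0∞} (hF : Measurable (Function.uncurry F)) (ρ : ℝ) :
    ∫⁻ x, ∫⁻ y in ball x ρ, F x y ∂μ ∂ν = ∫⁻ y, ∫⁻ x in ball y ρ, F x y ∂ν ∂μ := by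
  have hs : MeasurableSet {w : X × X | dist w.2 w.1 < ρ} :=
    measurableSet_lt (by fun_prop) (by fun_prop)
  have hswap := lintegral_lintegral_swap (μ := ν) (ν := μ) (f := fun x y =>
    {w : X × X | dist w.2 w.1 < ρ}.indicator (Function.uncurry F) (x, y))
    (hF.indicator hs).aemeasurable
  convert hswap using 3 with x y <;> rw [← lintegral_indicator measurableSet_ball]
  · rfl
  · refine lintegral_congr fun x => ?_
    simp only [indicator, mem_ball, mem_ofPred_eq, dist_comm x, Function.uncurry]

lemma lintegral_rpow_le_measure_univ_mul {X : Type*} [MeasurableSpace X] {μ : Measure X}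
    {f : X → ℝ≥0∞} (hf : AEMeasurable f μ) {r : ℝ} (hr : 0 ≤ r) (hr1 : r ≤ 1) :
    ∫⁻ x, f x ^ r ∂μ ≤ μ univ ^ (1 - r) * (∫⁻ x, f x ∂μ) ^ r := by
  have h := ENNReal.lintegral_mul_norm_pow_le (μ := μ) (f := fun _ => (1 : ℝ≥0∞)) (g := f)
    aemeasurable_const hf (p := 1 - r) (q := r) (by linarith) hr (by ring)
  simpa using h

variable {N : ℕ} {β T L r : ℝ} {x0 : Euc N} {μ : Measure (Euc N)}

lemma volume_ball_eq (x : Euc N) {ρ : ℝ} (hρ : 0 < ρ) :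
    volume (ball x ρ) = ENNReal.ofReal (ρ ^ N) * volume (ball (0 : Euc N) 1) := by
  have := Measure.addHaar_ball_of_pos (volume : Measure (Euc N)) x hρ
  rwa [finrank_euclideanSpace_fin] at this

lemma setLIntegral_measure_ball_le (μ : Measure (Euc N)) [SFinite μ] (z : Euc N) {ρ ρ' : ℝ}
    (hρ' : 0 < ρ') :
    ∫⁻ x in ball z ρ, μ (ball x ρ') ≤
      ENNReal.ofReal (ρ' ^ N) * volume (ball (0 : Euc N) 1) * μ (ball z (ρ + ρ')) := by
  have hswap : ∫⁻ x in ball z ρ, μ (ball x ρ') =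
      ∫⁻ y, volume (ball y ρ' ∩ ball z ρ) ∂μ := by
    simpa [Measure.restrict_apply, measurableSet_ball] using
      lintegral_setLIntegral_ball_swap (μ := μ) (ν := volume.restrict (ball z ρ))
        (F := fun _ _ => 1) measurable_const ρ'
  rw [hswap, ← lintegral_indicator_const measurableSet_ball]
  refine lintegral_mono fun y => ?_
  by_cases hy : y ∈ ball z (ρ + ρ')
  · rw [indicator_of_mem hy, ← volume_ball_eq y hρ']
    exact measure_mono inter_subset_left
  · have hdisj : ball y ρ' ∩ ball z ρ = ∅ := by
      rw [← disjoint_iff_inter_eq_empty]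
      exact ball_disjoint_ball (by rw [mem_ball, not_lt] at hy; linarith)
    simp [hdisj]

/-- The `r`-th powers of the ball densities, preceded by a constant bottom layer on a large ball
which controls all densities of radius comparable with `T`. -/
def layer (β T L r : ℝ) (x0 : Euc N) (μ : Measure (Euc N)) : ℕ → Euc N → ℝ≥0∞
  | 0 => (closedBall x0 (L + 2 * T)).indicator
      fun _ => (μ univ * ENNReal.ofReal (T ^ (β - N))) ^ r
  | k + 1 => fun x => ballDensity β T μ k x ^ r

lemma measurable_layer [SFinite μ] (k : ℕ) : Measurable (layer β T L r x0 μ k) := by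
  cases k with
  | zero => exact measurable_const.indicator measurableSet_closedBall
  | succ k => exact (measurable_ballDensity β T μ k).pow_const r

lemma one_le_ofReal_two_rpow_rpow (hβN : β ≤ N) (hr : 0 < r) :
    1 ≤ ENNReal.ofReal (2 ^ ((N : ℝ) - β)) ^ r := by
  refine ENNReal.one_le_rpow ?_ hr
  rw [ENNReal.one_le_ofReal]
  exact Real.one_le_rpow one_le_two (by linarith)

lemma measure_ball_mul_rpow_le_layer (hβN : β ≤ N) (hT : 0 < T) (hr : 0 < r)
    (hsupp : μ (ball x0 L)ᶜ = 0) (i : ℕ) (x : Euc N) :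
    (μ (ball x (2 * (T / 2 ^ i))) * ENNReal.ofReal ((T / 2 ^ i) ^ (β - N))) ^ r ≤
      ENNReal.ofReal (2 ^ ((N : ℝ) - β)) ^ r * layer β T L r x0 μ i x := by
  cases i with
  | zero =>
    by_cases h : μ (ball x (2 * (T / 2 ^ 0))) = 0
    · rw [h, zero_mul, ENNReal.zero_rpow_of_pos hr]; exact zero_le
    have hx := dist_lt_of_measure_ball_ne_zero hsupp h
    rw [pow_zero, div_one] at hx ⊢
    refine le_mul_of_one_le_of_le (one_le_ofReal_two_rpow_rpow hβN hr) ?_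
    rw [layer, indicator_of_mem (by rw [mem_closedBall]; exact hx.le)]
    gcongr
    exact subset_univ _
  | succ i =>
    have h2 : T / 2 ^ i = 2 * (T / 2 ^ (i + 1)) := by rw [pow_succ]; field_simp
    simp only [layer, ballDensity, h2]
    rw [← ENNReal.mul_rpow_of_nonneg _ _ hr.le, mul_left_comm,
      ofReal_two_rpow_mul_ofReal_two_mul_rpow (by positivity)]

lemma layer_succ_le (hβN : β ≤ N) (hT : 0 < T) (hr : 0 < r) (hsupp : μ (ball x0 L)ᶜ = 0)
    {i j : ℕ} (hji : j ≤ i) {x x' : Euc N} (hx : dist x x' < T / 2 ^ i) :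
    layer β T L r x0 μ (j + 1) x ≤
      ENNReal.ofReal (2 ^ ((N : ℝ) - β)) ^ r * layer β T L r x0 μ j x' := by
  refine le_trans ?_ (measure_ball_mul_rpow_le_layer hβN hT hr hsupp j x')
  simp only [layer, ballDensity]
  gcongr
  have hij : T / 2 ^ i ≤ T / 2 ^ j := by gcongr; norm_num
  exact ball_subset_ball' (by linarith)

lemma dist_lt_of_layer_succ_ne_zero (hr : 0 < r) (hsupp : μ (ball x0 L)ᶜ = 0) (hT : 0 < T)
    {k : ℕ} {x : Euc N} (h : layer β T L r x0 μ (k + 1) x ≠ 0) : dist x x0 < L + T := by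
  have hball : μ (ball x (T / 2 ^ k)) ≠ 0 := by
    contrapose! h
    simp only [layer, ballDensity, h, zero_mul, ENNReal.zero_rpow_of_pos hr]
  have hTk : T / 2 ^ k ≤ T := div_le_self hT.le (one_le_pow₀ one_le_two)
  linarith [dist_lt_of_measure_ball_ne_zero hsupp hball]

lemma layer_zero_le (hr : 0 < r) (hsupp : μ (ball x0 L)ᶜ = 0) (hT : 0 < T)
    {k : ℕ} {x x' : Euc N} (hx : dist x x' < T) (h : layer β T L r x0 μ (k + 1) x ≠ 0) :
    layer β T L r x0 μ 0 x ≤ layer β T L r x0 μ 0 x' := by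
  have hx' : x' ∈ closedBall x0 (L + 2 * T) := by
    rw [mem_closedBall]
    linarith [dist_lt_of_layer_succ_ne_zero hr hsupp hT h, dist_triangle_left x' x0 x]
  rw [layer, indicator_of_mem hx']
  exact indicator_le_self' (fun _ _ => zero_le) _

lemma dyadic_pow_mul_rpow (hT : 0 < T) {i k : ℕ} (hik : i ≤ k) :
    (T / 2 ^ k) ^ N * (T / 2 ^ k) ^ (β - N) =
      (2 ^ (-β)) ^ (k - i) * ((T / 2 ^ i) ^ N * (T / 2 ^ i) ^ (β - N)) := by
  have hcancel {ρ : ℝ} (hρ : 0 < ρ) : ρ ^ N * ρ ^ (β - N) = ρ ^ β := by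
    rw [← Real.rpow_natCast, ← Real.rpow_add hρ, add_sub_cancel]
  obtain ⟨d, rfl⟩ := Nat.exists_eq_add_of_le hik
  have hsplit : T / 2 ^ (i + d) = (T / 2 ^ i) / 2 ^ d := by rw [pow_add, div_div]
  rw [hcancel (by positivity), hcancel (by positivity), Nat.add_sub_cancel_left, hsplit,
    Real.div_rpow (by positivity) (by positivity), div_eq_inv_mul,
    Real.rpow_pow_comm two_pos.le, Real.rpow_neg (by positivity)]

lemma setLIntegral_ballDensity_le [SFinite μ] (hT : 0 < T) {i k : ℕ} (hik : i ≤ k)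
    (z : Euc N) :
    ∫⁻ x in ball z (T / 2 ^ i), ballDensity β T μ k x ≤
      volume (ball z (T / 2 ^ i)) * (ENNReal.ofReal (2 ^ (-β)) ^ (k - i) *
        (μ (ball z (2 * (T / 2 ^ i))) * ENNReal.ofReal ((T / 2 ^ i) ^ (β - N)))) := by
  have hρ : T / 2 ^ k ≤ T / 2 ^ i := by gcongr; norm_num
  unfold ballDensity
  rw [lintegral_mul_const' _ _ ENNReal.ofReal_ne_top]
  calc (∫⁻ x in ball z (T / 2 ^ i), μ (ball x (T / 2 ^ k))) *
        ENNReal.ofReal ((T / 2 ^ k) ^ (β - N))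
      ≤ ENNReal.ofReal ((T / 2 ^ k) ^ N) * volume (ball (0 : Euc N) 1) *
          μ (ball z (2 * (T / 2 ^ i))) * ENNReal.ofReal ((T / 2 ^ k) ^ (β - N)) := by
        refine mul_le_mul_left ((setLIntegral_measure_ball_le μ z (by positivity)).trans ?_) _
        gcongr
        linarith
    _ = ENNReal.ofReal ((T / 2 ^ k) ^ N * (T / 2 ^ k) ^ (β - N)) *
          volume (ball (0 : Euc N) 1) * μ (ball z (2 * (T / 2 ^ i))) := by
        rw [ENNReal.ofReal_mul (by positivity)]
        ring
    _ = _ := by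
        rw [dyadic_pow_mul_rpow hT hik, volume_ball_eq z (by positivity),
          ENNReal.ofReal_mul (by positivity), ENNReal.ofReal_mul (by positivity),
          ENNReal.ofReal_pow (by positivity)]
        ring

lemma setLIntegral_layer_le [SFinite μ] (hβN : β ≤ N) (hT : 0 < T) (hr : 0 < r)
    (hr1 : r ≤ 1) (hsupp : μ (ball x0 L)ᶜ = 0) {i k : ℕ} (hik : i ≤ k) (z : Euc N) :
    ∫⁻ x in ball z (T / 2 ^ i), layer β T L r x0 μ (k + 1) x ≤
      volume (ball z (T / 2 ^ i)) * (ENNReal.ofReal (2 ^ ((N : ℝ) - β)) ^ r *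
        (ENNReal.ofReal (2 ^ (-β)) ^ r) ^ (k - i) * layer β T L r x0 μ i z) := by
  set V := volume (ball z (T / 2 ^ i))
  have hV0 : V ≠ 0 := (measure_ball_pos _ _ (by positivity)).ne'
  have hVt : V ≠ ∞ := measure_ball_lt_top.ne
  have hjensen := lintegral_rpow_le_measure_univ_mul
    (μ := volume.restrict (ball z (T / 2 ^ i))) (measurable_ballDensity β T μ k).aemeasurable
    hr.le hr1
  rw [Measure.restrict_apply_univ] at hjensen
  calc ∫⁻ x in ball z (T / 2 ^ i), layer β T L r x0 μ (k + 1) x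
      ≤ V ^ (1 - r) * (V * (ENNReal.ofReal (2 ^ (-β)) ^ (k - i) *
        (μ (ball z (2 * (T / 2 ^ i))) * ENNReal.ofReal ((T / 2 ^ i) ^ (β - N))))) ^ r := by
        refine hjensen.trans ?_
        gcongr
        exact setLIntegral_ballDensity_le hT hik z
    _ = V * ((ENNReal.ofReal (2 ^ (-β)) ^ r) ^ (k - i) *
        (μ (ball z (2 * (T / 2 ^ i))) * ENNReal.ofReal ((T / 2 ^ i) ^ (β - N))) ^ r) := by
        rw [ENNReal.mul_rpow_of_nonneg _ _ hr.le, ENNReal.mul_rpow_of_nonneg _ _ hr.le, ← mul_assoc,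
          ← ENNReal.rpow_add _ _ hV0 hVt, sub_add_cancel, ENNReal.rpow_one, pow_rpow_comm]
    _ ≤ V * ((ENNReal.ofReal (2 ^ (-β)) ^ r) ^ (k - i) *
        (ENNReal.ofReal (2 ^ ((N : ℝ) - β)) ^ r * layer β T L r x0 μ i z)) := by
        gcongr
        exact measure_ball_mul_rpow_le_layer hβN hT hr hsupp i z
    _ = _ := by ring

/- Averaging over the balls of radius `T / 2 ^ i` replaces the finer layer `k + 1` by the coarser
layer `i` and gains a geometric factor in `k - i`. -/
lemma lintegral_layer_mul_le [SFinite μ] (hβN : β ≤ N) (hT : 0 < T) (hr : 0 < r)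
    (hr1 : r ≤ 1) (hsupp : μ (ball x0 L)ᶜ = 0) {i k : ℕ} (hik : i ≤ k) {g g' : Euc N → ℝ≥0∞}
    (hg' : Measurable g')
    (h : ∀ x x', layer β T L r x0 μ (k + 1) x ≠ 0 → dist x x' < T / 2 ^ i → g x ≤ g' x') :
    ∫⁻ x, layer β T L r x0 μ (k + 1) x * g x ≤
      ENNReal.ofReal (2 ^ ((N : ℝ) - β)) ^ r * (ENNReal.ofReal (2 ^ (-β)) ^ r) ^ (k - i) *
        ∫⁻ x, layer β T L r x0 μ i x * g' x := by
  set V := volume (ball (0 : Euc N) (T / 2 ^ i))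
  have hVx (x : Euc N) : volume (ball x (T / 2 ^ i)) = V := Measure.addHaar_ball_center _ x _
  have hV0 : V ≠ 0 := (measure_ball_pos _ _ (by positivity)).ne'
  have hVt : V ≠ ∞ := measure_ball_lt_top.ne
  have hlayer := measurable_layer (β := β) (T := T) (L := L) (r := r) (x0 := x0) (μ := μ)
  rw [← ENNReal.mul_le_mul_iff_right hV0 hVt, ← lintegral_const_mul' _ _ hVt]
  calc ∫⁻ x, V * (layer β T L r x0 μ (k + 1) x * g x)
      ≤ ∫⁻ x, ∫⁻ x' in ball x (T / 2 ^ i), layer β T L r x0 μ (k + 1) x * g' x' := by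
        refine lintegral_mono fun x => ?_
        rw [mul_comm, ← hVx x, ← setLIntegral_const]
        refine setLIntegral_mono' measurableSet_ball fun x' hx => ?_
        by_cases h0 : layer β T L r x0 μ (k + 1) x = 0
        · simp [h0]
        · exact mul_le_mul_right (h x x' h0 (mem_ball'.1 hx)) _
    _ = ∫⁻ x', ∫⁻ x in ball x' (T / 2 ^ i), layer β T L r x0 μ (k + 1) x * g' x' :=
        lintegral_setLIntegral_ball_swap
          (((hlayer _).comp measurable_fst).mul (hg'.comp measurable_snd)) _
    _ ≤ ∫⁻ x', V * (ENNReal.ofReal (2 ^ ((N : ℝ) - β)) ^ r *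
          (ENNReal.ofReal (2 ^ (-β)) ^ r) ^ (k - i) * layer β T L r x0 μ i x') * g' x' := by
        refine lintegral_mono fun x' => ?_
        rw [lintegral_mul_const _ (hlayer _), ← hVx x']
        exact mul_le_mul_left (setLIntegral_layer_le hβN hT hr hr1 hsupp hik x') _
    _ = _ := by
        have hmeas : Measurable fun x => layer β T L r x0 μ i x * g' x := (hlayer i).mul hg'
        rw [← lintegral_const_mul _ hmeas, ← lintegral_const_mul _ (hmeas.const_mul _)]
        exact lintegral_congr fun x => by ring

lemma partialSum_layer_succ_le (hβN : β ≤ N) (hT : 0 < T) (hr : 0 < r)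
    (hsupp : μ (ball x0 L)ᶜ = 0) {i : ℕ} {x x' : Euc N} (hx : dist x x' < T / 2 ^ i)
    (h : layer β T L r x0 μ (i + 1) x ≠ 0) :
    partialSum (layer β T L r x0 μ) (i + 1) x ≤
      (1 + ENNReal.ofReal (2 ^ ((N : ℝ) - β)) ^ r) * partialSum (layer β T L r x0 μ) i x' := by
  have hTi : T / 2 ^ i ≤ T := div_le_self hT.le (one_le_pow₀ one_le_two)
  rw [partialSum, Finset.sum_range_succ', add_comm, add_mul, one_mul]
  refine add_le_add ?_ ?_
  · refine (layer_zero_le hr hsupp hT (hx.trans_le hTi) h).trans ?_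
    rw [← partialSum_zero (layer β T L r x0 μ)]
    exact partialSum_mono _ x' i.zero_le
  · rw [partialSum, Finset.mul_sum]
    refine Finset.sum_le_sum fun j hj => ?_
    exact layer_succ_le hβN hT hr hsupp (Nat.lt_succ_iff.1 (Finset.mem_range.1 hj)) hx

lemma correlation_layer_zero_le [SFinite μ] (hβN : β ≤ N) (hT : 0 < T) (hr : 0 < r)
    (hr1 : r ≤ 1) {M : ℝ} (hM : 2 ≤ M) (hsupp : μ (ball x0 L)ᶜ = 0) (k : ℕ) :
    correlation volume (layer β T L r x0 μ) M (k + 1) 0 ≤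
      ENNReal.ofReal (2 ^ ((N : ℝ) - β)) ^ r * (ENNReal.ofReal (2 ^ (-β)) ^ r) ^ k *
        correlation volume (layer β T L r x0 μ) M 0 0 := by
  refine lintegral_layer_mul_le hβN hT hr hr1 hsupp k.zero_le
    ((measurable_layer 0).mul ((measurable_partialSum measurable_layer 0).pow_const _)) ?_
  intro x x' hx hd
  have hle := layer_zero_le hr hsupp hT (by simpa using hd) hx
  simp only [partialSum_zero]
  exact mul_le_mul' hle (ENNReal.rpow_le_rpow hle (by linarith))

lemma correlation_layer_succ_le [SFinite μ] (hβN : β ≤ N) (hT : 0 < T) (hr : 0 < r)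
    (hr1 : r ≤ 1) {M : ℝ} (hM : 2 ≤ M) (hsupp : μ (ball x0 L)ᶜ = 0) {i k : ℕ} (hik : i ≤ k)
    {A : ℝ≥0∞} (hA : A = ENNReal.ofReal (2 ^ ((N : ℝ) - β)) ^ r) :
    correlation volume (layer β T L r x0 μ) M (k + 1) (i + 1) ≤
      A * (ENNReal.ofReal (2 ^ (-β)) ^ r) ^ (k - i) *
        (A * (1 + A) ^ (M - 2) * correlation volume (layer β T L r x0 μ) M i i) := by
  have hmeas : Measurable fun x => layer β T L r x0 μ i x *
      partialSum (layer β T L r x0 μ) i x ^ (M - 2) :=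
    (measurable_layer i).mul ((measurable_partialSum measurable_layer i).pow_const _)
  have hmove := lintegral_layer_mul_le hβN hT hr hr1 hsupp hik
    (g := fun x => layer β T L r x0 μ (i + 1) x *
      partialSum (layer β T L r x0 μ) (i + 1) x ^ (M - 2))
    (g' := fun x => A * (1 + A) ^ (M - 2) *
      (layer β T L r x0 μ i x * partialSum (layer β T L r x0 μ) i x ^ (M - 2)))
    (hmeas.const_mul _) (by
      intro x x' _ hd
      by_cases h0 : layer β T L r x0 μ (i + 1) x = 0
      · rw [h0, zero_mul]; exact zero_le
      have hlayer := layer_succ_le hβN hT hr hsupp le_rfl hd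
      have hsum := partialSum_layer_succ_le hβN hT hr hsupp hd h0
      rw [← hA] at hlayer hsum
      refine (mul_le_mul' hlayer (ENNReal.rpow_le_rpow hsum (by linarith))).trans (le_of_eq ?_)
      rw [ENNReal.mul_rpow_of_nonneg _ _ (by linarith)]
      ring)
  rw [← hA] at hmove
  refine hmove.trans (le_of_eq ?_)
  rw [correlation, ← lintegral_const_mul _
    (measurable_correlation_integrand measurable_layer _ _ _)]
  exact congrArg _ (lintegral_congr fun x => by ring)

lemma layer_le_indicator (hT : 0 < T) (hr : 0 < r) (hsupp : μ (ball x0 L)ᶜ = 0) (i : ℕ)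
    (x : Euc N) :
    layer β T L r x0 μ i x ≤ (closedBall x0 (L + 2 * T)).indicator
      (fun _ => (μ univ * ENNReal.ofReal ((T / 2 ^ (i - 1)) ^ (β - N))) ^ r) x := by
  cases i with
  | zero => simp [layer]
  | succ k =>
    by_cases h : layer β T L r x0 μ (k + 1) x = 0
    · rw [h]; exact zero_le
    have hx := dist_lt_of_layer_succ_ne_zero hr hsupp hT h
    rw [indicator_of_mem (by rw [mem_closedBall]; linarith), Nat.add_sub_cancel]
    simp only [layer, ballDensity]
    gcongr
    exact subset_univ _

lemma lintegral_partialSum_layer_rpow_ne_top [IsFiniteMeasure μ] (hT : 0 < T) (hr : 0 < r)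
    {M : ℝ} (hM : 0 < M) (hsupp : μ (ball x0 L)ᶜ = 0) (n : ℕ) :
    ∫⁻ x, partialSum (layer β T L r x0 μ) n x ^ M ≠ ∞ := by
  set c : ℕ → ℝ≥0∞ := fun i => (μ univ * ENNReal.ofReal ((T / 2 ^ (i - 1)) ^ (β - N))) ^ r
  have hc (i : ℕ) : c i ≠ ∞ := ENNReal.rpow_ne_top_of_nonneg hr.le (by finiteness)
  have hbound (x : Euc N) : partialSum (layer β T L r x0 μ) n x ^ M ≤
      (closedBall x0 (L + 2 * T)).indicator
        (fun _ => (∑ i ∈ Finset.range (n + 1), c i) ^ M) x := by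
    have hle : partialSum (layer β T L r x0 μ) n x ≤ _ :=
      Finset.sum_le_sum fun i _ => layer_le_indicator hT hr hsupp i x
    by_cases hx : x ∈ closedBall x0 (L + 2 * T)
    · simp only [indicator_of_mem hx] at hle ⊢
      exact ENNReal.rpow_le_rpow hle hM.le
    · simp only [indicator_of_notMem hx, Finset.sum_const_zero, nonpos_iff_eq_zero] at hle ⊢
      rw [hle, ENNReal.zero_rpow_of_pos hM]
  refine ne_top_of_le_ne_top ?_ (lintegral_mono hbound)
  rw [lintegral_indicator_const measurableSet_closedBall]
  exact ENNReal.mul_ne_top (ENNReal.rpow_ne_top_of_nonneg hM.le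
    (ENNReal.sum_ne_top.2 fun i _ => hc i)) measure_closedBall_lt_top.ne

lemma exists_lintegral_partialSum_layer_rpow_le (hβ : 0 < β) (hβN : β ≤ N) (hT : 0 < T)
    (hr : 0 < r) (hr1 : r ≤ 1) {M : ℝ} (hM : 2 ≤ M) (x0 : Euc N) (L : ℝ) :
    ∃ C : ℝ≥0∞, C ≠ ∞ ∧ ∀ (μ : Measure (Euc N)) [IsFiniteMeasure μ], μ (ball x0 L)ᶜ = 0 →
      ∀ n, ∫⁻ x, partialSum (layer β T L r x0 μ) n x ^ M ≤
        C * ∫⁻ x, (⨆ i, layer β T L r x0 μ i x) ^ M := by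
  set A := ENNReal.ofReal (2 ^ ((N : ℝ) - β)) ^ r with hA
  set ε := ENNReal.ofReal (2 ^ (-β)) ^ r
  set B := A * (A * (1 + A) ^ (M - 2))
  have hA_top : A ≠ ∞ := ENNReal.rpow_ne_top_of_nonneg hr.le ENNReal.ofReal_ne_top
  have hε : ε < 1 := ENNReal.rpow_lt_one (ofReal_two_rpow_neg_lt_one hβ) hr
  have hAB : A ≤ B := by
    have hA1 : 1 ≤ A := one_le_ofReal_two_rpow_rpow hβN hr
    refine le_mul_of_one_le_right zero_le (hA1.trans (le_mul_of_one_le_right zero_le ?_))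
    simpa using ENNReal.rpow_le_rpow (le_self_add (a := 1) (b := A)) (by linarith : 0 ≤ M - 2)
  have hC_top : 1 + ENNReal.ofReal M * ((1 + ENNReal.ofReal (M - 1)) * B * (1 - ε)⁻¹) ≠ ∞ := by
    have hpow : (1 + A) ^ (M - 2) ≠ ∞ :=
      ENNReal.rpow_ne_top_of_nonneg (by linarith) (by finiteness)
    have hinv := inv_one_sub_ne_top hε
    finiteness
  refine ⟨_, ENNReal.rpow_ne_top_of_nonneg (by linarith) hC_top, fun μ _ hsupp n => ?_⟩
  refine lintegral_partialSum_rpow_le measurable_layer hM (fun k => ?_) (fun k i hik => ?_)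
    (lintegral_partialSum_layer_rpow_ne_top hT hr (by linarith) hsupp n)
  · refine (correlation_layer_zero_le hβN hT hr hr1 hM hsupp k).trans ?_
    rw [mul_assoc]
    exact mul_le_mul_left hAB _
  · refine (correlation_layer_succ_le hβN hT hr hr1 hM hsupp hik hA).trans (le_of_eq ?_)
    ring

lemma iSup_layer_rpow_le {m : ℝ} (hm : 0 < m) (hr : 0 < r) (x : Euc N) :
    (⨆ i, layer β T L r x0 μ i x) ^ (m / r) ≤
      (closedBall x0 (L + 2 * T)).indicator
        (fun _ => ENNReal.ofReal (T ^ (β - N)) ^ m * μ univ ^ m) x +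
        (⨆ k, ballDensity β T μ k x) ^ m := by
  have hmr : 0 < m / r := by positivity
  have hcancel (a : ℝ≥0∞) : (a ^ r) ^ (m / r) = a ^ m := by
    rw [← ENNReal.rpow_mul, mul_div_cancel₀ _ hr.ne']
  rw [← ENNReal.le_rpow_inv_iff hmr]
  refine iSup_le fun i => ?_
  rw [ENNReal.le_rpow_inv_iff hmr]
  cases i with
  | zero =>
    refine le_add_right (le_of_eq ?_)
    by_cases hx : x ∈ closedBall x0 (L + 2 * T)
    · simp only [layer, indicator_of_mem hx]
      rw [hcancel, ENNReal.mul_rpow_of_nonneg _ _ hm.le, mul_comm]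
    · simp only [layer, indicator_of_notMem hx, ENNReal.zero_rpow_of_pos hmr]
  | succ k =>
    refine le_add_left ?_
    simp only [layer, hcancel]
    exact ENNReal.rpow_le_rpow (le_iSup (fun k => ballDensity β T μ k x) k) hm.le

lemma lintegral_iSup_layer_rpow_le {m : ℝ} (hm : 0 < m) (hr : 0 < r) :
    ∫⁻ x, (⨆ i, layer β T L r x0 μ i x) ^ (m / r) ≤
      (1 + ENNReal.ofReal (T ^ (β - N)) ^ m * volume (closedBall x0 (L + 2 * T))) *
        ((∫⁻ x, (⨆ k, ballDensity β T μ k x) ^ m) + μ univ ^ m) := by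
  refine (lintegral_mono fun x => iSup_layer_rpow_le hm hr x).trans ?_
  rw [lintegral_add_left (measurable_const.indicator measurableSet_closedBall),
    lintegral_indicator_const measurableSet_closedBall, add_mul, one_mul, add_comm, mul_add]
  refine add_le_add le_self_add (le_trans (le_of_eq ?_) le_add_self)
  ring

lemma tsum_rpow_rpow_le_of_le (a : ℕ → ℝ≥0∞) {m r s : ℝ} (hm : 0 ≤ m) (hs : 0 < s)
    (hsr : s ≤ r) : (∑' k, a k ^ r) ^ (m / r) ≤ (∑' k, a k ^ s) ^ (m / s) := by
  have hr : 0 < r := hs.trans_le hsr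
  have hle := tsum_rpow_le_rpow_tsum (fun k => a k ^ s) ((one_le_div hs).2 hsr)
  simp only [← ENNReal.rpow_mul, mul_div_cancel₀ r hs.ne'] at hle
  refine (ENNReal.rpow_le_rpow hle (by positivity)).trans (le_of_eq ?_)
  rw [← ENNReal.rpow_mul]
  congr 1
  field_simp

/-- **Muckenhoupt–Wheeden inequality** for dyadic sums of ball densities. -/
lemma exists_lintegral_tsum_ballDensity_rpow_le (hβ : 0 < β) (hβN : β ≤ N) (hT : 0 < T)
    (hr : 0 < r) {m : ℝ} (hm : 0 < m) (x0 : Euc N) (L : ℝ) :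
    ∃ C : ℝ≥0∞, C ≠ ∞ ∧ ∀ (μ : Measure (Euc N)) [IsFiniteMeasure μ], μ (ball x0 L)ᶜ = 0 →
      ∫⁻ x, (∑' k, ballDensity β T μ k x ^ r) ^ (m / r) ≤
        C * ((∫⁻ x, (⨆ k, ballDensity β T μ k x) ^ m) + μ univ ^ m) := by
  -- Passing to a smaller exponent `s` makes `m / s ≥ 2`, and increases the left-hand side.
  obtain ⟨s, hs, hs1, hsr, hsm⟩ : ∃ s : ℝ, 0 < s ∧ s ≤ 1 ∧ s ≤ r ∧ s ≤ m / 2 :=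
    ⟨min 1 (min r (m / 2)), by positivity, min_le_left _ _, (min_le_right _ _).trans
      (min_le_left _ _), (min_le_right _ _).trans (min_le_right _ _)⟩
  have hM : 2 ≤ m / s := by rw [le_div_iff₀ hs]; linarith
  have hM0 : 0 ≤ m / s := by linarith
  obtain ⟨C, hC, hlayers⟩ := exists_lintegral_partialSum_layer_rpow_le hβ hβN hT hs hs1 hM x0 L
  have hτ : ENNReal.ofReal (T ^ (β - N)) ^ m ≠ ∞ :=
    ENNReal.rpow_ne_top_of_nonneg hm.le ENNReal.ofReal_ne_top
  have hV : volume (closedBall x0 (L + 2 * T)) ≠ ∞ := measure_closedBall_lt_top.ne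
  refine ⟨C * (1 + ENNReal.ofReal (T ^ (β - N)) ^ m * volume (closedBall x0 (L + 2 * T))),
    by finiteness, fun μ _ hsupp => ?_⟩
  calc ∫⁻ x, (∑' k, ballDensity β T μ k x ^ r) ^ (m / r)
      ≤ ∫⁻ x, (∑' k, ballDensity β T μ k x ^ s) ^ (m / s) :=
        lintegral_mono fun x => tsum_rpow_rpow_le_of_le _ hm.le hs hsr
    _ ≤ C * ∫⁻ x, (⨆ i, layer β T L s x0 μ i x) ^ (m / s) := by
        refine lintegral_tsum_rpow_le_of_forall
          (fun k => (measurable_ballDensity β T μ k).pow_const _) hM0 fun n => ?_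
        refine le_trans (lintegral_mono fun x => ?_) (hlayers μ hsupp n)
        refine ENNReal.rpow_le_rpow ?_ hM0
        rw [partialSum, Finset.sum_range_succ']
        exact le_self_add
    _ ≤ _ := by rw [mul_assoc]; exact mul_le_mul_right (lintegral_iSup_layer_rpow_le hm hs) _

end MuckenhouptWheeden

/-! ### Bounds for the Bessel kernel -/

section BesselKernel

variable {N : ℕ} {β : ℝ}

/-- The integrand of `besselKernel N β x`, as a function of the heat-kernel time `t`. -/
def besselIntegrand (β : ℝ) (x : Euc N) (t : ℝ) : ℝ :=
  Real.exp (-(Real.pi * ‖x‖ ^ 2 / t) - t / (4 * Real.pi)) * t ^ ((β - (N : ℝ)) / 2) / t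

lemma measurable_uncurry_besselIntegrand :
    Measurable (Function.uncurry (besselIntegrand β : Euc N → ℝ → ℝ)) := by
  unfold besselIntegrand Function.uncurry
  fun_prop

lemma measurable_besselKernel (N : ℕ) (β : ℝ) : Measurable (besselKernel N β) :=
  (measurable_uncurry_besselIntegrand.stronglyMeasurable.integral_prod_right
    (ν := volume.restrict (Ioi 0))).measurable

lemma besselKernel_neg (x : Euc N) : besselKernel N β (-x) = besselKernel N β x := by
  simp [besselKernel]

lemma besselIntegrand_nonneg (x : Euc N) {t : ℝ} (ht : 0 < t) : 0 ≤ besselIntegrand β x t := by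
  unfold besselIntegrand
  positivity

lemma exp_neg_div_le {a t : ℝ} (ha : 0 < a) (ht : 0 < t) (n : ℕ) :
    Real.exp (-(a / t)) ≤ n.factorial * a⁻¹ ^ n * t ^ n := by
  have h := Real.pow_div_factorial_le_exp (a / t) (by positivity) n
  rw [Real.exp_neg]
  have h2 : 0 < (a / t) ^ n / n.factorial := by positivity
  refine (inv_anti₀ h2 h).trans (le_of_eq ?_)
  rw [inv_div, div_pow, inv_pow]
  field_simp

lemma sq_mul_sq_rpow {r : ℝ} (hr : 0 < r) (a : ℝ) : r ^ 2 * (r ^ 2) ^ (a / 2 - 1) = r ^ a := by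
  rw [Real.rpow_sub_one (by positivity), mul_div_cancel₀ _ (by positivity), ← Real.rpow_natCast,
    ← Real.rpow_mul hr.le]
  congr 1
  push_cast
  ring

lemma besselIntegrand_le {x : Euc N} (hx : x ≠ 0) {t : ℝ} (ht : 0 < t) :
    besselIntegrand β x t ≤ N.factorial * (Real.pi * ‖x‖ ^ 2)⁻¹ ^ N *
      (t ^ ((β + N) / 2 - 1) * Real.exp (-((4 * Real.pi)⁻¹ * t))) := by
  have h := exp_neg_div_le (a := Real.pi * ‖x‖ ^ 2) (by positivity) ht N
  have e : t ^ ((β + N) / 2 - 1) = t ^ N * (t ^ ((β - (N : ℝ)) / 2) / t) := by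
    rw [← Real.rpow_natCast, ← Real.rpow_sub_one ht.ne', ← Real.rpow_add ht]
    ring_nf
  rw [besselIntegrand, sub_eq_add_neg, Real.exp_add, e,
    show t / (4 * Real.pi) = (4 * Real.pi)⁻¹ * t by ring]
  calc _ = Real.exp (-(Real.pi * ‖x‖ ^ 2 / t)) * (Real.exp (-((4 * Real.pi)⁻¹ * t)) *
        (t ^ ((β - (N : ℝ)) / 2) / t)) := by ring
    _ ≤ (N.factorial * (Real.pi * ‖x‖ ^ 2)⁻¹ ^ N * t ^ N) * (Real.exp (-((4 * Real.pi)⁻¹ * t)) *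
        (t ^ ((β - (N : ℝ)) / 2) / t)) := by gcongr
    _ = _ := by ring

lemma integrableOn_rpow_mul_exp_neg (hβ : 0 < β) :
    IntegrableOn (fun t : ℝ => t ^ ((β + N) / 2 - 1) * Real.exp (-((4 * Real.pi)⁻¹ * t)))
      (Ioi 0) := by
  have hs : -1 < (β + N) / 2 - 1 := by
    have : (0 : ℝ) ≤ N := by positivity
    linarith
  have h := integrableOn_rpow_mul_exp_neg_mul_rpow hs one_pos
    (b := (4 * Real.pi)⁻¹) (by positivity)
  refine h.congr_fun (fun t _ => ?_) measurableSet_Ioi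
  simp

lemma integrableOn_besselIntegrand (hβ : 0 < β) {x : Euc N} (hx : x ≠ 0) :
    IntegrableOn (besselIntegrand β x) (Ioi 0) := by
  refine Integrable.mono' ((integrableOn_rpow_mul_exp_neg (N := N) hβ).const_mul
    (N.factorial * (Real.pi * ‖x‖ ^ 2)⁻¹ ^ N))
    (measurable_uncurry_besselIntegrand.of_uncurry_left.aestronglyMeasurable) ?_
  filter_upwards [ae_restrict_mem measurableSet_Ioi] with t ht
  rw [Real.norm_of_nonneg (besselIntegrand_nonneg x ht)]
  exact besselIntegrand_le hx ht

lemma exists_besselKernel_le_of_decay (hβ : 0 < β) : ∃ C : ℝ, 0 ≤ C ∧ ∀ x : Euc N, x ≠ 0 →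
    besselKernel N β x ≤ C * ‖x‖ ^ (-(2 * N : ℝ)) := by
  refine ⟨N.factorial * Real.pi⁻¹ ^ N * ∫ t in Ioi (0 : ℝ), t ^ ((β + N) / 2 - 1) *
    Real.exp (-((4 * Real.pi)⁻¹ * t)), ?_, fun x hx => ?_⟩
  · refine mul_nonneg (by positivity) (setIntegral_nonneg measurableSet_Ioi fun t ht => ?_)
    have : (0 : ℝ) < t := ht
    positivity
  have hx' : 0 < ‖x‖ := norm_pos_iff.2 hx
  have h := setIntegral_mono_on (integrableOn_besselIntegrand hβ hx)
    ((integrableOn_rpow_mul_exp_neg (N := N) hβ).const_mul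
      (N.factorial * (Real.pi * ‖x‖ ^ 2)⁻¹ ^ N))
    measurableSet_Ioi fun t ht => besselIntegrand_le hx ht
  rw [integral_const_mul] at h
  refine h.trans (le_of_eq ?_)
  rw [Real.rpow_neg hx'.le, mul_inv, mul_pow,
    show (2 * N : ℝ) = ((2 * N : ℕ) : ℝ) by push_cast; ring,
    Real.rpow_natCast, pow_mul, inv_pow (‖x‖ ^ 2)]
  ring

lemma integrableOn_exp_neg_div_mul_rpow (hβ : 0 < β) (hβN : β < N) :
    IntegrableOn (fun u : ℝ => Real.exp (-(Real.pi / u)) * u ^ ((β - N) / 2 - 1)) (Ioi 0) := by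
  rw [← Ioc_union_Ioi_eq_Ioi (zero_le_one : (0 : ℝ) ≤ 1)]
  refine IntegrableOn.union ?_ ?_
  · have h : IntegrableOn (fun u : ℝ => u ^ ((β + N) / 2 - 1)) (Ioc 0 1) := by
      rw [← intervalIntegrable_iff_integrableOn_Ioc_of_le zero_le_one]
      exact intervalIntegral.intervalIntegrable_rpow' (by linarith)
    refine Integrable.mono' (h.const_mul (N.factorial * Real.pi⁻¹ ^ N)) (by fun_prop) ?_
    filter_upwards [ae_restrict_mem measurableSet_Ioc] with u hu
    have hu0 : 0 < u := hu.1
    rw [Real.norm_of_nonneg (by positivity)]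
    have e : u ^ ((β + N) / 2 - 1) = u ^ N * u ^ ((β - (N : ℝ)) / 2 - 1) := by
      rw [← Real.rpow_natCast, ← Real.rpow_add hu0]
      ring_nf
    rw [e, ← mul_assoc]
    have := exp_neg_div_le Real.pi_pos hu0 N
    gcongr
  · have h : IntegrableOn (fun u : ℝ => u ^ ((β - N) / 2 - 1)) (Ioi 1) :=
      integrableOn_Ioi_rpow_of_lt (by linarith) one_pos
    refine Integrable.mono' h (by fun_prop) ?_
    filter_upwards [ae_restrict_mem measurableSet_Ioi] with u hu
    have hu0 : (0 : ℝ) < u := lt_trans one_pos hu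
    rw [Real.norm_of_nonneg (by positivity)]
    refine mul_le_of_le_one_left (by positivity) (Real.exp_le_one_iff.2 ?_)
    have : 0 < Real.pi / u := by positivity
    linarith

lemma besselIntegrand_le_comp_inv_mul (x : Euc N) {b t : ℝ} (hb : b = ‖x‖ ^ 2) (hb0 : 0 < b)
    (ht : 0 < t) : besselIntegrand β x t ≤ b ^ ((β - N) / 2 - 1) *
      (Real.exp (-(Real.pi / (b⁻¹ * t))) * (b⁻¹ * t) ^ ((β - N) / 2 - 1)) := by
  have e1 : b ^ ((β - N) / 2 - 1) * (b⁻¹ * t) ^ ((β - N) / 2 - 1) = t ^ ((β - N) / 2) / t := by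
    rw [← Real.mul_rpow hb0.le (by positivity), mul_inv_cancel_left₀ hb0.ne',
      Real.rpow_sub_one ht.ne']
  have e2 : Real.pi / (b⁻¹ * t) = Real.pi * b / t := by field_simp
  rw [besselIntegrand, mul_left_comm, e1, e2, mul_div_assoc, ← hb]
  gcongr
  exact sub_le_self _ (by positivity)

lemma exists_besselKernel_le_of_singular (hβ : 0 < β) (hβN : β < N) : ∃ C : ℝ, 0 ≤ C ∧
    ∀ x : Euc N, x ≠ 0 → besselKernel N β x ≤ C * ‖x‖ ^ (β - N) := by
  set g : ℝ → ℝ := fun u => Real.exp (-(Real.pi / u)) * u ^ ((β - N) / 2 - 1)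
  refine ⟨∫ u in Ioi (0 : ℝ), g u, ?_, fun x hx => ?_⟩
  · refine setIntegral_nonneg measurableSet_Ioi fun u hu => ?_
    have : (0 : ℝ) < u := hu
    positivity
  have hx' : 0 < ‖x‖ := norm_pos_iff.2 hx
  have hb : 0 < ‖x‖ ^ 2 := by positivity
  have hscale : IntegrableOn (fun t => g ((‖x‖ ^ 2)⁻¹ * t)) (Ioi 0) := by
    have := (integrableOn_Ioi_comp_mul_left_iff g 0 (inv_pos.2 hb)).2
    rw [mul_zero] at this
    exact this (integrableOn_exp_neg_div_mul_rpow hβ hβN)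
  have h := setIntegral_mono_on (integrableOn_besselIntegrand hβ hx)
    (hscale.const_mul ((‖x‖ ^ 2) ^ ((β - N) / 2 - 1))) measurableSet_Ioi
    fun t ht => besselIntegrand_le_comp_inv_mul x rfl hb ht
  refine h.trans (le_of_eq ?_)
  rw [integral_const_mul, integral_comp_mul_left_Ioi g 0 (inv_pos.2 hb), mul_zero, inv_inv,
    smul_eq_mul, ← sq_mul_sq_rpow hx']
  ring

lemma le_besselIntegrand (hβN : β < N) {x : Euc N} (hx : x ≠ 0) {A : ℝ} (hxA : ‖x‖ ≤ A) {t : ℝ}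
    (ht : t ∈ Icc (‖x‖ ^ 2) (2 * ‖x‖ ^ 2)) :
    Real.exp (-Real.pi - 2 * A ^ 2 / (4 * Real.pi)) * (2 * ‖x‖ ^ 2) ^ ((β - N) / 2 - 1) ≤
      besselIntegrand β x t := by
  have hx' : 0 < ‖x‖ := norm_pos_iff.2 hx
  have ht0 : 0 < t := (pow_pos hx' 2).trans_le ht.1
  rw [besselIntegrand, mul_div_assoc (Real.exp _) _ t, ← Real.rpow_sub_one ht0.ne']
  have h1 : Real.pi * ‖x‖ ^ 2 / t ≤ Real.pi := by
    rw [div_le_iff₀ ht0]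
    exact mul_le_mul_of_nonneg_left ht.1 Real.pi_pos.le
  have h2 : t / (4 * Real.pi) ≤ 2 * A ^ 2 / (4 * Real.pi) := by
    gcongr
    exact ht.2.trans (by gcongr)
  have h3 : (2 * ‖x‖ ^ 2) ^ ((β - N) / 2 - 1) ≤ t ^ ((β - N) / 2 - 1) :=
    Real.rpow_le_rpow_of_nonpos ht0 ht.2 (by linarith)
  gcongr

lemma exists_le_besselKernel (hβ : 0 < β) (hβN : β < N) (A : ℝ) : ∃ c : ℝ, 0 < c ∧
    ∀ x : Euc N, x ≠ 0 → ‖x‖ ≤ A → c * ‖x‖ ^ (β - N) ≤ besselKernel N β x := by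
  set e := Real.exp (-Real.pi - 2 * A ^ 2 / (4 * Real.pi))
  refine ⟨e * 2 ^ ((β - N) / 2 - 1), by positivity, fun x hx hxA => ?_⟩
  have hx' : 0 < ‖x‖ := norm_pos_iff.2 hx
  have hb : 0 < ‖x‖ ^ 2 := by positivity
  have hI := integrableOn_besselIntegrand hβ hx
  have hsub : Icc (‖x‖ ^ 2) (2 * ‖x‖ ^ 2) ⊆ Ioi 0 := fun t ht => hb.trans_le ht.1
  calc _ = ∫ _ in Icc (‖x‖ ^ 2) (2 * ‖x‖ ^ 2), e * (2 * ‖x‖ ^ 2) ^ ((β - N) / 2 - 1) := by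
        rw [setIntegral_const, Measure.real, Real.volume_Icc, ENNReal.toReal_ofReal (by linarith),
          Real.mul_rpow (by norm_num) hb.le, ← sq_mul_sq_rpow hx', smul_eq_mul]
        ring
    _ ≤ ∫ t in Icc (‖x‖ ^ 2) (2 * ‖x‖ ^ 2), besselIntegrand β x t :=
        setIntegral_mono_on (integrableOn_const (by simp)) (hI.mono_set hsub) measurableSet_Icc
          fun t ht => le_besselIntegrand hβN hx hxA ht
    _ ≤ _ := by
        refine setIntegral_mono_set hI ?_ hsub.eventuallyLE
        filter_upwards [ae_restrict_mem measurableSet_Ioi] with t ht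
        exact besselIntegrand_nonneg x ht

/-- The kernel of `ballDensity β T · k`: the constant `ρ ^ (β - N)` on the ball of radius
`ρ = T / 2 ^ k`. Its sum over `k` is comparable to the Riesz kernel `‖z‖ ^ (β - N)` truncated to
the ball of radius `T`. -/
def dyadicRieszKernel (β T : ℝ) (k : ℕ) : Euc N → ℝ≥0∞ :=
  (ball 0 (T / 2 ^ k)).indicator fun _ => ENNReal.ofReal ((T / 2 ^ k) ^ (β - N))

lemma measurable_dyadicRieszKernel (β T : ℝ) (k : ℕ) :
    Measurable (dyadicRieszKernel β T k : Euc N → ℝ≥0∞) :=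
  measurable_const.indicator measurableSet_ball

lemma exists_mem_Ico_dyadic {r T : ℝ} (hr : 0 < r) (hrT : r < T) :
    ∃ k : ℕ, r ∈ Ico (T / 2 ^ (k + 1)) (T / 2 ^ k) := by
  obtain ⟨n, hn⟩ := exists_mem_Ioc_zpow (div_pos (hr.trans hrT) hr) one_lt_two
  have hn0 : 0 < n + 1 := (one_lt_zpow_iff_right₀ (one_lt_two (α := ℝ))).1
    (((one_lt_div hr).2 hrT).trans_le hn.2)
  obtain ⟨k, rfl⟩ := Int.eq_ofNat_of_zero_le (Int.lt_add_one_iff.1 hn0)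
  refine ⟨k, (div_le_comm₀ hr (by positivity)).1 (mod_cast hn.2),
    (lt_div_comm₀ (by positivity) hr).1 (mod_cast hn.1)⟩

lemma ofReal_norm_rpow_le_tsum_dyadicRieszKernel (hβN : β < N) {T : ℝ} {z : Euc N} (hz : z ≠ 0)
    (hzT : ‖z‖ < T) : ENNReal.ofReal (‖z‖ ^ (β - N)) ≤
      ENNReal.ofReal (2 ^ ((N : ℝ) - β)) * ∑' k, dyadicRieszKernel β T k z := by
  have hz' : 0 < ‖z‖ := norm_pos_iff.2 hz
  have hT : 0 < T := hz'.trans hzT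
  obtain ⟨k, hk⟩ := exists_mem_Ico_dyadic hz' hzT
  have hterm : ENNReal.ofReal ((T / 2 ^ k) ^ (β - N)) ≤ ∑' k, dyadicRieszKernel β T k z := by
    refine le_trans (le_of_eq ?_) (ENNReal.le_tsum k)
    rw [dyadicRieszKernel, indicator_of_mem (by simpa using hk.2)]
  refine le_trans ?_ (mul_le_mul_right hterm _)
  rw [← ENNReal.ofReal_mul (by positivity)]
  refine ENNReal.ofReal_le_ofReal
    ((Real.rpow_le_rpow_of_nonpos (by positivity) hk.1 (by linarith)).trans (le_of_eq ?_))
  rw [pow_succ, ← div_div, div_eq_inv_mul _ (2 : ℝ), Real.mul_rpow (by norm_num) (by positivity),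
    Real.inv_rpow (by norm_num), ← Real.rpow_neg (by norm_num), neg_sub]

lemma norm_rpow_neg_le_mul_one_add_norm_rpow {T s : ℝ} (hT : 0 < T) (hs : 0 ≤ s) {z : Euc N}
    (hzT : T ≤ ‖z‖) : ‖z‖ ^ (-s) ≤ (T⁻¹ + 1) ^ s * (1 + ‖z‖) ^ (-s) := by
  have hz : 0 < ‖z‖ := hT.trans_le hzT
  have h1 : 1 + ‖z‖ ≤ (T⁻¹ + 1) * ‖z‖ := by
    have : 1 ≤ T⁻¹ * ‖z‖ := by rwa [inv_mul_eq_div, one_le_div hT]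
    linarith
  have h2 : ((T⁻¹ + 1) * ‖z‖) ^ (-s) ≤ (1 + ‖z‖) ^ (-s) :=
    Real.rpow_le_rpow_of_nonpos (by positivity) h1 (by linarith)
  refine le_trans (le_of_eq ?_) (mul_le_mul_of_nonneg_left h2 (by positivity))
  rw [Real.mul_rpow (by positivity) hz.le, ← mul_assoc, ← Real.rpow_add (by positivity)]
  simp

lemma exists_ofReal_besselKernel_le (hβ : 0 < β) (hβN : β < N) {T : ℝ} (hT : 0 < T) :
    ∃ C : ℝ≥0∞, C ≠ ∞ ∧ ∀ z : Euc N, ENNReal.ofReal (besselKernel N β z) ≤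
      C * ((∑' k, dyadicRieszKernel β T k z) + ENNReal.ofReal ((1 + ‖z‖) ^ (-(2 * N : ℝ)))) := by
  obtain ⟨C₁, hC₁, hdecay⟩ := exists_besselKernel_le_of_decay (N := N) hβ
  obtain ⟨C₂, hC₂, hsing⟩ := exists_besselKernel_le_of_singular (N := N) hβ hβN
  set D₀ := ENNReal.ofReal (besselKernel N β (0 : Euc N))
  set D₁ := ENNReal.ofReal (C₁ * (T⁻¹ + 1) ^ (2 * N : ℝ)) with hD₁
  set D₂ := ENNReal.ofReal C₂ * ENNReal.ofReal (2 ^ ((N : ℝ) - β))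
  refine ⟨D₀ + D₁ + D₂, by finiteness, fun z => ?_⟩
  rcases eq_or_ne z 0 with rfl | hz
  · refine le_mul_of_le_of_one_le (by rw [add_assoc]; exact le_self_add) ?_
    simp
  rcases lt_or_ge ‖z‖ T with hzT | hzT
  · calc ENNReal.ofReal (besselKernel N β z)
        ≤ ENNReal.ofReal C₂ * ENNReal.ofReal (‖z‖ ^ (β - N)) := by
          rw [← ENNReal.ofReal_mul hC₂]
          exact ENNReal.ofReal_le_ofReal (hsing z hz)
      _ ≤ D₂ * ∑' k, dyadicRieszKernel β T k z := by
          rw [mul_assoc]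
          exact mul_le_mul_right (ofReal_norm_rpow_le_tsum_dyadicRieszKernel hβN hz hzT) _
      _ ≤ _ := mul_le_mul' le_add_self le_self_add
  · calc ENNReal.ofReal (besselKernel N β z)
        ≤ D₁ * ENNReal.ofReal ((1 + ‖z‖) ^ (-(2 * N : ℝ))) := by
          rw [hD₁, ← ENNReal.ofReal_mul (by positivity), mul_assoc]
          exact ENNReal.ofReal_le_ofReal ((hdecay z hz).trans (mul_le_mul_of_nonneg_left
            (norm_rpow_neg_le_mul_one_add_norm_rpow hT (by positivity) hzT) hC₁))
      _ ≤ _ := mul_le_mul' (le_add_right le_add_self) le_add_self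

lemma exists_ofReal_rpow_le_besselKernel (hβ : 0 < β) (hβN : β < N) (A : ℝ) :
    ∃ C : ℝ≥0∞, C ≠ ∞ ∧ ∀ (z : Euc N) (ρ : ℝ), z ≠ 0 → ‖z‖ < ρ → ρ ≤ A →
      ENNReal.ofReal (ρ ^ (β - N)) ≤ C * ENNReal.ofReal (besselKernel N β z) := by
  obtain ⟨c, hc, h⟩ := exists_le_besselKernel (N := N) hβ hβN A
  refine ⟨ENNReal.ofReal c⁻¹, by finiteness, fun z ρ hz hzρ hρA => ?_⟩
  have hz' : 0 < ‖z‖ := norm_pos_iff.2 hz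
  rw [← ENNReal.ofReal_mul (by positivity)]
  refine ENNReal.ofReal_le_ofReal ?_
  have h1 := h z hz (by linarith)
  have h2 : ρ ^ (β - N) ≤ ‖z‖ ^ (β - N) := Real.rpow_le_rpow_of_nonpos hz' hzρ.le (by linarith)
  rw [inv_mul_eq_div, le_div_iff₀ hc, mul_comm]
  exact (mul_le_mul_of_nonneg_left h2 hc.le).trans h1

end BesselKernel

/-! ### Bessel potentials -/

section BesselPotential

variable {N : ℕ} {β : ℝ}

/-- The Bessel potential `G_β * μ` of a measure. -/
def besselPot (β : ℝ) (μ : Measure (Euc N)) (x : Euc N) : ℝ≥0∞ :=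
  ∫⁻ y, ENNReal.ofReal (besselKernel N β (x - y)) ∂μ

/-- The Bessel potential `G_β * f` of a function. -/
def besselFun (β : ℝ) (f : Euc N → ℝ≥0∞) (x : Euc N) : ℝ≥0∞ :=
  ∫⁻ y, ENNReal.ofReal (besselKernel N β (x - y)) * f y

lemma measurable_besselKernel_sub (β : ℝ) :
    Measurable fun w : Euc N × Euc N => ENNReal.ofReal (besselKernel N β (w.1 - w.2)) :=
  ((measurable_besselKernel N β).comp (measurable_fst.sub measurable_snd)).ennreal_ofReal

lemma measurable_besselPot (μ : Measure (Euc N)) [SFinite μ] : Measurable (besselPot β μ) :=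
  (measurable_besselKernel_sub β).lintegral_prod_right'

lemma measurable_besselFun {f : Euc N → ℝ≥0∞} (hf : Measurable f) :
    Measurable (besselFun β f) :=
  ((measurable_besselKernel_sub β).mul (hf.comp measurable_snd)).lintegral_prod_right'

lemma lintegral_besselFun_eq (μ : Measure (Euc N)) [SFinite μ] {f : Euc N → ℝ≥0∞}
    (hf : Measurable f) : ∫⁻ x, besselFun β f x ∂μ = ∫⁻ y, besselPot β μ y * f y := by
  have hfm : Measurable fun w : Euc N × Euc N =>
      ENNReal.ofReal (besselKernel N β (w.1 - w.2)) * f w.2 :=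
    (measurable_besselKernel_sub β).mul (hf.comp measurable_snd)
  unfold besselFun besselPot
  rw [lintegral_lintegral_swap
    (f := fun x y => ENNReal.ofReal (besselKernel N β (x - y)) * f y) hfm.aemeasurable]
  refine lintegral_congr fun y => ?_
  have hm : Measurable fun x => ENNReal.ofReal (besselKernel N β (x - y)) :=
    ((measurable_besselKernel N β).comp (measurable_id.sub_const y)).ennreal_ofReal
  rw [lintegral_mul_const _ hm]
  congr 1
  refine lintegral_congr fun x => ?_
  rw [← besselKernel_neg, neg_sub]

lemma lintegral_one_add_norm_ne_top (hN : 0 < N) :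
    ∫⁻ z : Euc N, ENNReal.ofReal ((1 + ‖z‖) ^ (-(2 * N : ℝ))) ≠ ∞ := by
  refine (finite_integral_one_add_norm ?_).ne
  rw [finrank_euclideanSpace_fin]
  have : (0 : ℝ) < N := by exact_mod_cast hN
  linarith

lemma ballDensity_eq_lintegral (T : ℝ) (μ : Measure (Euc N)) (k : ℕ) (x : Euc N) :
    ballDensity β T μ k x = ∫⁻ y, dyadicRieszKernel β T k (x - y) ∂μ := by
  rw [ballDensity, mul_comm, ← lintegral_indicator_const measurableSet_ball]
  refine lintegral_congr fun y => ?_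
  classical
  simp only [dyadicRieszKernel, indicator_apply, mem_ball', dist_eq_norm, zero_sub, norm_neg]

lemma exists_besselPot_le (hβ : 0 < β) (hβN : β < N) {T : ℝ} (hT : 0 < T) :
    ∃ C : ℝ≥0∞, C ≠ ∞ ∧ ∀ (μ : Measure (Euc N)) (x : Euc N), besselPot β μ x ≤
      C * ((∑' k : ℕ, ballDensity β T μ k x) +
        ∫⁻ y, ENNReal.ofReal ((1 + ‖x - y‖) ^ (-(2 * N : ℝ))) ∂μ) := by
  obtain ⟨C, hC, h⟩ := exists_ofReal_besselKernel_le (N := N) hβ hβN hT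
  refine ⟨C, hC, fun μ x => (lintegral_mono fun y => h (x - y)).trans (le_of_eq ?_)⟩
  have hm (k : ℕ) : Measurable fun y => dyadicRieszKernel β T k (x - y) :=
    (measurable_dyadicRieszKernel β T k).comp (by fun_prop)
  rw [lintegral_const_mul' _ _ hC, lintegral_add_left (Measurable.tsum hm),
    lintegral_tsum fun k => (hm k).aemeasurable]
  simp only [ballDensity_eq_lintegral]

lemma lintegral_lintegral_sub_eq {μ : Measure (Euc N)} [SFinite μ] {ψ : Euc N → ℝ≥0∞}
    (hψ : Measurable ψ) : ∫⁻ x, ∫⁻ y, ψ (x - y) ∂μ = (∫⁻ z, ψ z) * μ univ := by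
  have hm : Measurable fun w : Euc N × Euc N => ψ (w.1 - w.2) :=
    hψ.comp (measurable_fst.sub measurable_snd)
  rw [lintegral_lintegral_swap (f := fun x y => ψ (x - y)) hm.aemeasurable]
  simp only [lintegral_sub_right_eq_self ψ, lintegral_const]

lemma lintegral_dyadicRieszKernel {T : ℝ} (hT : 0 < T) (k : ℕ) :
    ∫⁻ z : Euc N, dyadicRieszKernel β T k z =
      ENNReal.ofReal (T ^ β) * volume (ball (0 : Euc N) 1) * ENNReal.ofReal (2 ^ (-β)) ^ k := by
  have hk : 0 < T / 2 ^ k := by positivity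
  have hcancel : (T / 2 ^ k) ^ (β - N) * (T / 2 ^ k) ^ N = (T / 2 ^ k) ^ β := by
    rw [← Real.rpow_natCast _ N, ← Real.rpow_add hk, sub_add_cancel]
  unfold dyadicRieszKernel
  rw [lintegral_indicator_const measurableSet_ball, volume_ball_eq _ hk, ← mul_assoc,
    ← ENNReal.ofReal_mul (by positivity), hcancel, ofReal_div_two_pow_rpow hT, mul_right_comm]

lemma lintegral_besselKernel_ne_top (hβ : 0 < β) (hβN : β < N) :
    ∫⁻ z : Euc N, ENNReal.ofReal (besselKernel N β z) ≠ ∞ := by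
  have hN : 0 < N := by exact_mod_cast hβ.trans hβN
  obtain ⟨C, hC, h⟩ := exists_ofReal_besselKernel_le (N := N) hβ hβN one_pos
  have hm := measurable_dyadicRieszKernel (N := N) β 1
  refine ne_top_of_le_ne_top ?_ (lintegral_mono h)
  rw [lintegral_const_mul' _ _ hC, lintegral_add_left (Measurable.tsum hm),
    lintegral_tsum fun k => (hm k).aemeasurable]
  simp only [lintegral_dyadicRieszKernel one_pos, ENNReal.tsum_mul_left, ENNReal.tsum_geometric]
  have hgeom := inv_one_sub_ne_top (ofReal_two_rpow_neg_lt_one hβ)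
  have htail := lintegral_one_add_norm_ne_top hN
  have hball : volume (ball (0 : Euc N) 1) ≠ ∞ := measure_ball_lt_top.ne
  finiteness

lemma lintegral_lintegral_sub_rpow_le {m : ℝ} (hm : 1 ≤ m) {μ : Measure (Euc N)}
    [IsFiniteMeasure μ] {ψ : Euc N → ℝ≥0∞} (hψ : Measurable ψ) (hψ1 : ∀ z, ψ z ≤ 1) :
    ∫⁻ x, (∫⁻ y, ψ (x - y) ∂μ) ^ m ≤ (∫⁻ z, ψ z) * μ univ ^ m := by
  have hle (x : Euc N) : (∫⁻ y, ψ (x - y) ∂μ) ^ m ≤ μ univ ^ (m - 1) * ∫⁻ y, ψ (x - y) ∂μ := by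
    rw [rpow_eq_mul_rpow_sub_one _ hm, mul_comm]
    refine mul_le_mul_left (ENNReal.rpow_le_rpow ?_ (by linarith)) _
    exact (lintegral_mono fun y => hψ1 _).trans (by simp)
  refine (lintegral_mono hle).trans (le_of_eq ?_)
  rw [lintegral_const_mul' _ _ (by finiteness [sub_nonneg.2 hm]), lintegral_lintegral_sub_eq hψ,
    rpow_eq_mul_rpow_sub_one (μ univ) hm]
  ring

lemma exists_lintegral_besselPot_rpow_le (hβ : 0 < β) (hβN : β < N) {T m : ℝ} (hT : 0 < T)
    (hm : 1 ≤ m) (x0 : Euc N) (L : ℝ) :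
    ∃ C : ℝ≥0∞, C ≠ ∞ ∧ ∀ (μ : Measure (Euc N)) [IsFiniteMeasure μ], μ (ball x0 L)ᶜ = 0 →
      ∫⁻ x, besselPot β μ x ^ m ≤
        C * ((∫⁻ x, (⨆ k, ballDensity β T μ k x) ^ m) + μ univ ^ m) := by
  have hN : 0 < N := by exact_mod_cast hβ.trans hβN
  have hm0 : 0 < m := by linarith
  obtain ⟨C₁, hC₁, h₁⟩ := exists_besselPot_le (N := N) hβ hβN hT
  obtain ⟨C₂, hC₂, h₂⟩ := exists_lintegral_tsum_ballDensity_rpow_le hβ hβN.le hT one_pos hm0 x0 L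
  set ψ : Euc N → ℝ≥0∞ := fun z => ENNReal.ofReal ((1 + ‖z‖) ^ (-(2 * N : ℝ))) with hψ
  have hψm : Measurable ψ := by fun_prop
  have hψ1 (z : Euc N) : ψ z ≤ 1 := by
    rw [hψ, ENNReal.ofReal_le_one]
    exact Real.rpow_le_one_of_one_le_of_nonpos (by linarith [norm_nonneg z]) (by simp)
  have hψt : ∫⁻ z, ψ z ≠ ∞ := lintegral_one_add_norm_ne_top hN
  have hCm : C₁ ^ m ≠ ∞ := ENNReal.rpow_ne_top_of_nonneg hm0.le hC₁
  have h2m : (2 : ℝ≥0∞) ^ m ≠ ∞ := ENNReal.rpow_ne_top_of_nonneg hm0.le (by simp)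
  refine ⟨C₁ ^ m * (2 ^ m * (C₂ + ∫⁻ z, ψ z)), by finiteness, fun μ _ hsupp => ?_⟩
  have hψμ : Measurable fun x => ∫⁻ y, ψ (x - y) ∂μ :=
    (hψm.comp (measurable_fst.sub measurable_snd)).lintegral_prod_right'
  have hsum := h₂ μ hsupp
  simp only [ENNReal.rpow_one, div_one] at hsum
  calc ∫⁻ x, besselPot β μ x ^ m
      ≤ ∫⁻ x, C₁ ^ m * (2 ^ m * ((∑' k, ballDensity β T μ k x) ^ m +
          (∫⁻ y, ψ (x - y) ∂μ) ^ m)) := by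
        refine lintegral_mono fun x => (ENNReal.rpow_le_rpow (h₁ μ x) hm0.le).trans ?_
        rw [ENNReal.mul_rpow_of_nonneg _ _ hm0.le]
        exact mul_le_mul_right (add_rpow_le_two_rpow_mul _ _ hm0.le) _
    _ = C₁ ^ m * (2 ^ m * ((∫⁻ x, (∑' k, ballDensity β T μ k x) ^ m) +
          ∫⁻ x, (∫⁻ y, ψ (x - y) ∂μ) ^ m)) := by
        rw [lintegral_const_mul' _ _ hCm, lintegral_const_mul' _ _ h2m,
          lintegral_add_right _ (hψμ.pow_const m)]
    _ ≤ C₁ ^ m * (2 ^ m * (C₂ * ((∫⁻ x, (⨆ k, ballDensity β T μ k x) ^ m) + μ univ ^ m) +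
          (∫⁻ z, ψ z) * ((∫⁻ x, (⨆ k, ballDensity β T μ k x) ^ m) + μ univ ^ m))) := by
        gcongr
        exact (lintegral_lintegral_sub_rpow_le hm hψm hψ1).trans (mul_le_mul_right le_add_self _)
    _ = _ := by ring

lemma ae_measure_singleton_eq_zero {X : Type*} [MeasurableSpace X] [MeasurableSingletonClass X]
    (ν μ : Measure X) [NullSingletonClass ν] [SFinite μ] : ∀ᵐ x ∂ν, μ {x} = 0 := by
  have hcount : {x | 0 < μ {y | y = x}}.Countable :=
    Measure.countable_meas_level_set_pos measurable_id
  simpa [ae_iff, pos_iff_ne_zero] using hcount.measure_zero ν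

lemma exists_ballDensity_le_besselPot (hβ : 0 < β) (hβN : β < N) {T : ℝ} (hT : 0 < T) :
    ∃ C : ℝ≥0∞, C ≠ ∞ ∧ ∀ (μ : Measure (Euc N)) (x : Euc N), μ {x} = 0 → ∀ k,
      ballDensity β T μ k x ≤ C * besselPot β μ x := by
  obtain ⟨C, hC, h⟩ := exists_ofReal_rpow_le_besselKernel (N := N) hβ hβN T
  refine ⟨C, hC, fun μ x hx k => ?_⟩
  rw [ballDensity_eq_lintegral, besselPot, ← lintegral_const_mul' _ _ hC]
  have hae : ∀ᵐ y ∂μ, y ≠ x := by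
    simpa [ae_iff] using hx
  refine lintegral_mono_ae ?_
  filter_upwards [hae] with y hy
  refine indicator_apply_le' (fun hz => ?_) fun _ => zero_le
  exact h _ _ (sub_ne_zero.2 hy.symm) (mem_ball_zero_iff.1 hz)
    (div_le_self hT.le (one_le_pow₀ one_le_two))

end BesselPotential

/-! ### Capacitary testing inequalities -/

section Capacity

variable {N : ℕ} {β : ℝ}

lemma besselCap_le_of_lt_besselFun {s : ℝ} (hs : 0 < s) {f : Euc N → ℝ≥0∞} (hf : Measurable f)
    {t : ℝ≥0∞} (ht : t ≠ 0) (ht' : t ≠ ∞) {K : Set (Euc N)}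
    (hK : ∀ x ∈ K, t ≤ besselFun β f x) :
    besselCap N β s K ≤ (∫⁻ x, f x ^ s) / t ^ s := by
  have hti : t⁻¹ ≠ ∞ := ENNReal.inv_ne_top.2 ht
  calc besselCap N β s K ≤ ∫⁻ x, (t⁻¹ * f x) ^ s := by
        refine (iInf_le _ fun x => t⁻¹ * f x).trans ((iInf_le _ (hf.const_mul _)).trans
          (iInf_le _ fun x hx => ?_))
        calc (1 : ℝ≥0∞) = t⁻¹ * t := (ENNReal.inv_mul_cancel ht ht').symm
          _ ≤ t⁻¹ * besselFun β f x := mul_le_mul_right (hK x hx) _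
          _ = _ := by
            rw [besselFun, ← lintegral_const_mul' _ _ hti]
            exact lintegral_congr fun y => mul_left_comm _ _ _
    _ = _ := by
        simp only [ENNReal.mul_rpow_of_nonneg _ _ hs.le]
        rw [lintegral_const_mul' _ _ (ENNReal.rpow_ne_top_of_nonneg hs.le hti), ENNReal.inv_rpow,
          mul_comm, div_eq_mul_inv]

lemma lintegral_besselFun_rpow_le {s δ : ℝ} (hδ : 0 < δ) (hδs : δ < s) {C : ℝ≥0∞} (hC : C ≠ ∞)
    {σ : Measure (Euc N)} [IsFiniteMeasure σ] (hσ : ∀ K, IsCompact K → σ K ≤ C * besselCap N β s K)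
    {f : Euc N → ℝ≥0∞} (hf : Measurable f) (hfs : ∫⁻ x, f x ^ s ≠ ∞) :
    ∫⁻ x, besselFun β f x ^ δ ∂σ ≤ ENNReal.ofReal (s / (s - δ)) * C ^ (δ / s) *
      (σ univ ^ (1 - δ / s) * (∫⁻ x, f x ^ s) ^ (δ / s)) := by
  have hs : 0 < s := hδ.trans hδs
  have hG : Measurable (besselFun β f) := measurable_besselFun hf
  have hweak (t : ℝ≥0∞) (ht : t ≠ 0) (ht' : t ≠ ∞) :
      σ {x | t < besselFun β f x} ≤ C * (∫⁻ x, f x ^ s) / t ^ s := by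
    rw [(measurableSet_lt measurable_const hG).measure_eq_iSup_isCompact]
    refine iSup_le fun K => iSup_le fun hK => iSup_le fun hKc => (hσ K hKc).trans ?_
    rw [mul_div_assoc]
    exact mul_le_mul_right
      (besselCap_le_of_lt_besselFun hs hf ht ht' fun x hx => (hK hx).le) _
  refine (lintegral_rpow_le_of_meas_lt_le_div hδ hδs hG.aemeasurable
    (ENNReal.mul_ne_top hC hfs) hweak).trans (le_of_eq ?_)
  rw [ENNReal.mul_rpow_of_nonneg _ _ (by positivity)]
  ring

-- The summand `1` only serves to make the constant nonzero.
lemma measure_le_mul_besselCap {m s : ℝ} (hms : m.HolderConjugate s) {C : ℝ≥0∞} (hC : C ≠ ∞)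
    {μ : Measure (Euc N)} [IsFiniteMeasure μ] {E : Set (Euc N)} (hE : MeasurableSet E)
    (hμ : ∫⁻ x, besselPot β (μ.restrict E) x ^ m ≤ C * μ E) :
    μ E ≤ (C ^ (s - 1) + 1) * besselCap N β s E := by
  have hm := hms.pos
  have hs := hms.symm.pos
  have hs1 : 0 ≤ s - 1 := hms.symm.sub_one_pos.le
  rw [← ENNReal.div_le_iff' (by simp) (by finiteness)]
  refine le_iInf fun f => le_iInf fun hf => le_iInf fun hfE => ?_
  rw [ENNReal.div_le_iff' (by simp) (by finiteness)]
  refine le_trans ?_ (mul_le_mul_left (le_self_add (a := C ^ (s - 1))) _)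
  have hG : Measurable (besselPot β (μ.restrict E)) := measurable_besselPot _
  have key : μ E ≤ (C ^ (1 / m) * (∫⁻ x, f x ^ s) ^ (1 / s)) * μ E ^ (1 - 1 / s) := by
    calc μ E = ∫⁻ _ in E, 1 ∂μ := by simp
      _ ≤ ∫⁻ x in E, besselFun β f x ∂μ := setLIntegral_mono' hE hfE
      _ = ∫⁻ y, besselPot β (μ.restrict E) y * f y := lintegral_besselFun_eq _ hf
      _ ≤ (∫⁻ y, besselPot β (μ.restrict E) y ^ m) ^ (1 / m) * (∫⁻ y, f y ^ s) ^ (1 / s) :=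
          ENNReal.lintegral_mul_le_Lp_mul_Lq volume hms hG.aemeasurable hf.aemeasurable
      _ ≤ (C * μ E) ^ (1 / m) * (∫⁻ y, f y ^ s) ^ (1 / s) := by gcongr
      _ = _ := by
          rw [ENNReal.mul_rpow_of_nonneg _ _ (by positivity), one_div s, hms.symm.one_sub_inv,
            one_div m]
          ring
  refine (le_rpow_mul_of_le_mul_rpow_mul_rpow hs (measure_ne_top μ E) key).trans (le_of_eq ?_)
  rw [← ENNReal.rpow_mul, one_div_mul_eq_div, hms.symm.div_conj_eq_sub_one]

end Capacity

/-! ### Maximal densities over finitely many scales -/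

section MaxDensity

variable {N : ℕ} {β T : ℝ}

/-- The largest of the densities at the scales `T, T / 2, …, T / 2 ^ n`. -/
def maxDensity (β T : ℝ) (μ : Measure (Euc N)) (n : ℕ) (x : Euc N) : ℝ≥0∞ :=
  partialSups (fun k => ballDensity β T μ k x) n

lemma measurable_maxDensity (β T : ℝ) (μ : Measure (Euc N)) [SFinite μ] (n : ℕ) :
    Measurable (maxDensity β T μ n) := by
  unfold maxDensity
  induction n with
  | zero => simpa using measurable_ballDensity β T μ 0
  | succ n ih =>
    simp only [partialSups_add_one]
    exact ih.sup (measurable_ballDensity β T μ (n + 1))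

lemma maxDensity_eq_zero (hT : 0 < T) {μ : Measure (Euc N)} {x0 x : Euc N} {L : ℝ}
    (hsupp : μ (ball x0 L)ᶜ = 0) (hx : x ∉ ball x0 (L + T)) (n : ℕ) : maxDensity β T μ n x = 0 := by
  refine le_antisymm (partialSups_le _ _ _ fun k _ => ?_) zero_le
  have hnull : μ (ball x (T / 2 ^ k)) = 0 := by
    by_contra h0
    have hd := dist_lt_of_measure_ball_ne_zero hsupp h0
    have hTk : T / 2 ^ k ≤ T := div_le_self hT.le (one_le_pow₀ one_le_two)
    exact hx (mem_ball.2 (hd.trans_le (by linarith)))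
  rw [ballDensity, hnull, zero_mul]

lemma lintegral_maxDensity_rpow_ne_top (hT : 0 < T) {m : ℝ} (hm : 0 < m) {μ : Measure (Euc N)}
    [IsFiniteMeasure μ] {x0 : Euc N} {L : ℝ} (hsupp : μ (ball x0 L)ᶜ = 0) (n : ℕ) :
    ∫⁻ x, maxDensity β T μ n x ^ m ≠ ∞ := by
  set a : ℕ → ℝ≥0∞ := fun k => μ univ * ENNReal.ofReal ((T / 2 ^ k) ^ (β - N))
  have hc : partialSups a n ≠ ∞ := by
    obtain ⟨k, -, hk⟩ := exists_partialSups_eq a n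
    rw [hk]
    finiteness
  have hle (x : Euc N) : maxDensity β T μ n x ^ m ≤
      (ball x0 (L + T)).indicator (fun _ => partialSups a n ^ m) x := by
    by_cases hx : x ∈ ball x0 (L + T)
    · rw [indicator_of_mem hx]
      refine ENNReal.rpow_le_rpow (partialSups_le _ _ _ fun k hk => ?_) hm.le
      exact (mul_le_mul_left (measure_mono (subset_univ _)) _).trans (le_partialSups_of_le a hk)
    · rw [maxDensity_eq_zero hT hsupp hx, ENNReal.zero_rpow_of_pos hm]
      exact zero_le
  refine ne_top_of_le_ne_top ?_ (lintegral_mono hle)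
  rw [lintegral_indicator_const measurableSet_ball]
  exact ENNReal.mul_ne_top (ENNReal.rpow_ne_top_of_nonneg hm.le hc) measure_ball_lt_top.ne

lemma lintegral_iSup_ballDensity_rpow_le {m : ℝ} (hm : 0 < m) {μ : Measure (Euc N)} [SFinite μ]
    {A : ℝ≥0∞} (h : ∀ n, ∫⁻ x, maxDensity β T μ n x ^ m ≤ A) :
    ∫⁻ x, (⨆ k, ballDensity β T μ k x) ^ m ≤ A := by
  have hsup (x : Euc N) : (⨆ k, ballDensity β T μ k x) ^ m = ⨆ n, maxDensity β T μ n x ^ m := by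
    rw [← iSup_partialSups_eq]
    exact (ENNReal.orderIsoRpow m hm).map_iSup _
  simp only [hsup]
  rw [lintegral_iSup (fun n => (measurable_maxDensity β T μ n).pow_const m)
    fun n n' hn x => ENNReal.rpow_le_rpow ((partialSups _).mono hn) hm.le]
  exact iSup_le h

-- The weight `maxDensity ^ (m - 1)` has the integral of `maxDensity ^ m` as its `L ^ s` norm, so
-- the strong capacitary inequality can be absorbed into the left-hand side.
lemma exists_lintegral_iSup_ballDensity_rpow_le_of_le_besselCap (hβ : 0 < β) (hβN : β < N)
    (hT : 0 < T) {m s : ℝ} (hms : m.HolderConjugate s) {C : ℝ≥0∞} (hC : C ≠ ∞) :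
    ∃ C' : ℝ≥0∞, C' ≠ ∞ ∧ ∀ (μ : Measure (Euc N)) [IsFiniteMeasure μ] (x0 : Euc N) (L : ℝ),
      μ (ball x0 L)ᶜ = 0 → (∀ K, IsCompact K → μ K ≤ C * besselCap N β s K) →
        ∫⁻ x, (⨆ k, ballDensity β T μ k x) ^ m ≤ C' * μ univ := by
  have hm := hms.pos
  have hs := hms.symm.pos
  have : Nonempty (Fin N) := ⟨⟨0, by exact_mod_cast hβ.trans hβN⟩⟩
  obtain ⟨C₁, hC₁, h₁⟩ := exists_ballDensity_le_besselPot (N := N) hβ hβN hT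
  set C₂ := ENNReal.ofReal (s / (s - 1)) * C ^ (1 / s)
  refine ⟨(C₁ * C₂) ^ m, by finiteness, fun μ _ x0 L hsupp hμ => ?_⟩
  refine lintegral_iSup_ballDensity_rpow_le hm fun n => ?_
  set f : Euc N → ℝ≥0∞ := fun x => maxDensity β T μ n x ^ (m - 1) with hf
  have hfm : Measurable f := (measurable_maxDensity β T μ n).pow_const _
  have hfs : ∫⁻ x, f x ^ s = ∫⁻ x, maxDensity β T μ n x ^ m := by
    refine lintegral_congr fun x => ?_
    rw [hf, ← ENNReal.rpow_mul, hms.sub_one_mul_conj]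
  have hX := lintegral_maxDensity_rpow_ne_top (β := β) hT hm hsupp n
  have key : ∫⁻ x, maxDensity β T μ n x ^ m ≤
      (C₁ * C₂ * μ univ ^ (1 / m)) * (∫⁻ x, maxDensity β T μ n x ^ m) ^ (1 - 1 / m) := by
    calc ∫⁻ x, maxDensity β T μ n x ^ m = ∫⁻ x, maxDensity β T μ n x * f x :=
          lintegral_congr fun x => rpow_eq_mul_rpow_sub_one _ hms.lt.le
      _ ≤ ∫⁻ x, C₁ * (besselPot β μ x * f x) := by
          refine lintegral_mono_ae ?_
          filter_upwards [ae_measure_singleton_eq_zero volume μ] with x hx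
          rw [← mul_assoc]
          exact mul_le_mul_left (partialSups_le _ _ _ fun k _ => h₁ μ x hx k) _
      _ = C₁ * ∫⁻ x, besselFun β f x ^ (1 : ℝ) ∂μ := by
          rw [lintegral_const_mul' _ _ hC₁, ← lintegral_besselFun_eq μ hfm]
          simp
      _ ≤ C₁ * (C₂ * (μ univ ^ (1 - 1 / s) * (∫⁻ x, f x ^ s) ^ (1 / s))) :=
          mul_le_mul_right (lintegral_besselFun_rpow_le one_pos hms.symm.lt hC hμ hfm (hfs ▸ hX)) _
      _ = _ := by
          rw [hfs, one_div, one_div, hms.one_sub_inv, hms.symm.one_sub_inv]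
          ring
  exact le_rpow_mul_of_le_mul_rpow_mul_rpow hm hX key

end MaxDensity

/-! ### From the capacitary condition to the testing condition -/

section CapacityToTesting

variable {N : ℕ} {α p q : ℝ}

lemma holderConjugate_exponents (hp : 1 < p) (hq : p - 1 < q) :
    (q / (p - 1)).HolderConjugate (q / (q - p + 1)) := by
  have h1 : 0 < p - 1 := by linarith
  have : 0 < q - p + 1 := by linarith
  have h3 : 0 < q := by linarith
  rw [Real.holderConjugate_iff]
  refine ⟨by rwa [one_lt_div h1], ?_⟩
  field_simp
  ring

lemma exists_lintegral_wolff_rpow_le_of_le_besselCap (hβ : 0 < α * p) (hβN : α * p < N)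
    (hp : 1 < p) (hq : p - 1 < q) {T L : ℝ} (hT : 0 < T) {x0 : Euc N} {ω : Measure (Euc N)}
    [IsFiniteMeasure ω] (hsupp : ω (ball x0 L)ᶜ = 0) {C : ℝ≥0∞} (hC : C ≠ ∞)
    (h : ∀ K, IsCompact K → ω K ≤ C * besselCap N (α * p) (q / (q - p + 1)) K) :
    ∃ C' : ℝ≥0∞, C' ≠ ∞ ∧ ∀ B : Set (Euc N),
      ∫⁻ y, wolff α p (ENNReal.ofReal T) (ω.restrict B) y ^ q ≤ C' * ω B := by
  have hms := holderConjugate_exponents hp hq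
  set m := q / (p - 1)
  have hm := hms.pos
  have hp1 : 0 < p - 1 := by linarith
  have hq0 : 0 < q := by linarith
  have hr : 0 < 1 / (p - 1) := by positivity
  have hmr : m / (1 / (p - 1)) = q := by simp only [m]; field_simp
  obtain ⟨C₁, hC₁, h₁⟩ := exists_lintegral_iSup_ballDensity_rpow_le_of_le_besselCap hβ hβN hT hms hC
  obtain ⟨C₂, hC₂, h₂⟩ := exists_lintegral_tsum_ballDensity_rpow_le hβ hβN.le hT hr hm x0 L
  rw [hmr] at h₂
  set c := ENNReal.ofReal (2 ^ (N - α * p)) ^ (1 / (p - 1))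
  have hc : c ^ q ≠ ∞ := by finiteness
  have hm1 : 0 ≤ m - 1 := by linarith [hms.lt]
  refine ⟨c ^ q * (C₂ * (C₁ + ω univ ^ (m - 1))), by finiteness, fun B => ?_⟩
  set μ := ω.restrict B
  have hμB : μ univ = ω B := by simp [μ]
  have hle : μ ≤ ω := Measure.restrict_le_self
  have hμs : μ (ball x0 L)ᶜ = 0 := le_antisymm ((hle _).trans hsupp.le) zero_le
  calc ∫⁻ y, wolff α p (ENNReal.ofReal T) μ y ^ q
      ≤ ∫⁻ y, c ^ q * (∑' k, ballDensity (α * p) T μ k y ^ (1 / (p - 1))) ^ q := by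
        refine lintegral_mono fun y => ?_
        rw [← ENNReal.mul_rpow_of_nonneg _ _ hq0.le]
        exact ENNReal.rpow_le_rpow (wolff_le_tsum_ballDensity hp hβN.le hT μ y) hq0.le
    _ = c ^ q * ∫⁻ y, (∑' k, ballDensity (α * p) T μ k y ^ (1 / (p - 1))) ^ q :=
        lintegral_const_mul' _ _ hc
    _ ≤ c ^ q * (C₂ * (C₁ * μ univ + ω univ ^ (m - 1) * μ univ)) := by
        refine mul_le_mul_right ((h₂ μ hμs).trans (mul_le_mul_right (add_le_add ?_ ?_) _)) _
        · exact h₁ μ x0 L hμs fun K hK => (hle K).trans (h K hK)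
        · rw [rpow_eq_mul_rpow_sub_one _ hms.lt.le, mul_comm]
          exact mul_le_mul_left (ENNReal.rpow_le_rpow (hle _) hm1) _
    _ = _ := by rw [hμB]; ring

end CapacityToTesting

/-! ### From the testing condition to the pointwise condition -/

section TestingToPointwise

variable {N : ℕ} {α p q T β : ℝ} {μ ω : Measure (Euc N)} {x y : Euc N} {k : ℕ}

lemma measure_ball_two_mul_mul_eq_ballDensity (hT : 0 < T) (β : ℝ) (μ : Measure (Euc N)) (k : ℕ)
    (x : Euc N) : μ (ball x (2 * T / 2 ^ k)) * ENNReal.ofReal ((T / 2 ^ k) ^ (β - N)) =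
      ENNReal.ofReal (2 ^ (N - β)) * ballDensity β (2 * T) μ k x := by
  rw [← ofReal_two_rpow_mul_ofReal_two_mul_rpow (N := N) (show 0 < T / 2 ^ k by positivity),
    ballDensity, mul_div_assoc, mul_left_comm]

lemma ballDensity_le_of_mem_ball (hT : 0 < T) (β : ℝ) (μ : Measure (Euc N)) {i : ℕ} (hik : i ≤ k)
    (hy : y ∈ ball x (T / 2 ^ k)) :
    ballDensity β T μ i y ≤ ENNReal.ofReal (2 ^ (N - β)) * ballDensity β (2 * T) μ i x := by
  rw [← measure_ball_two_mul_mul_eq_ballDensity hT]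
  have hpow : T / 2 ^ k ≤ T / 2 ^ i :=
    div_le_div_of_nonneg_left hT.le (by positivity) (pow_le_pow_right₀ one_le_two hik)
  refine mul_le_mul_left (measure_mono (ball_subset_ball' ?_)) _
  rw [mul_div_assoc]
  linarith [mem_ball.1 hy]

lemma ballDensity_eq_ballDensity_half_restrict (hT : 0 < T) (β : ℝ) (μ : Measure (Euc N))
    (hy : y ∈ ball x (T / 2 ^ k)) (i : ℕ) :
    ballDensity β T μ (i + (k + 1)) y =
      ballDensity β (T / 2) (μ.restrict (ball x (2 * T / 2 ^ k))) (i + k) y := by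
  have hrad : T / 2 / 2 ^ (i + k) = T / 2 ^ (i + (k + 1)) := by
    rw [div_div, ← add_assoc, pow_succ' _ (i + k)]
  have hpow : T / 2 ^ (i + (k + 1)) ≤ T / 2 ^ k :=
    div_le_div_of_nonneg_left hT.le (by positivity) (pow_le_pow_right₀ one_le_two (by omega))
  have hsub : ball y (T / 2 ^ (i + (k + 1))) ⊆ ball x (2 * T / 2 ^ k) := by
    refine ball_subset_ball' ?_
    rw [mul_div_assoc]
    linarith [mem_ball.1 hy]
  simp only [ballDensity, hrad]
  rw [Measure.restrict_apply measurableSet_ball, inter_eq_left.2 hsub]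

-- On `ball x (T / 2 ^ k)` the scales above `T / 2 ^ k` are comparable to those at `x`, while the
-- smaller ones only see `μ` inside the doubled ball.
lemma wolff_le_sum_add_wolff_restrict (hp : 1 < p) (hN : α * p ≤ N) (hT : 0 < T)
    (μ : Measure (Euc N)) (hy : y ∈ ball x (T / 2 ^ k)) :
    wolff α p (ENNReal.ofReal T) μ y ≤ 3 * (ENNReal.ofReal (2 ^ (N - α * p)) ^ (1 / (p - 1))) ^ 2 *
      ((∑ i ∈ Finset.range (k + 1), ballDensity (α * p) (2 * T) μ i x ^ (1 / (p - 1))) +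
        wolff α p (ENNReal.ofReal T) (μ.restrict (ball x (2 * T / 2 ^ k))) y) := by
  have hr : 0 < 1 / (p - 1) := one_div_pos.2 (by linarith)
  set c := ENNReal.ofReal (2 ^ (N - α * p)) ^ (1 / (p - 1)) with hc
  set ν := μ.restrict (ball x (2 * T / 2 ^ k))
  have hhead : ∑ i ∈ Finset.range (k + 1), ballDensity (α * p) T μ i y ^ (1 / (p - 1)) ≤
      c * ∑ i ∈ Finset.range (k + 1), ballDensity (α * p) (2 * T) μ i x ^ (1 / (p - 1)) := by
    rw [Finset.mul_sum]
    refine Finset.sum_le_sum fun i hi => ?_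
    rw [hc, ← ENNReal.mul_rpow_of_nonneg _ _ hr.le]
    exact ENNReal.rpow_le_rpow (ballDensity_le_of_mem_ball hT _ μ
      (Finset.mem_range_succ_iff.1 hi) hy) hr.le
  have htail : ∑' i, ballDensity (α * p) T μ (i + (k + 1)) y ^ (1 / (p - 1)) ≤
      2 * c * wolff α p (ENNReal.ofReal T) ν y := by
    simp only [ballDensity_eq_ballDensity_half_restrict hT _ μ hy]
    exact (ENNReal.tsum_comp_le_tsum_of_injective (add_left_injective k)
      fun i => ballDensity (α * p) (T / 2) ν i y ^ (1 / (p - 1))).trans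
        (tsum_ballDensity_le_wolff hp hN (half_pos hT) (by linarith) ν y)
  calc wolff α p (ENNReal.ofReal T) μ y
      ≤ c * ∑' i, ballDensity (α * p) T μ i y ^ (1 / (p - 1)) :=
        wolff_le_tsum_ballDensity hp hN hT μ y
    _ = c * ((∑ i ∈ Finset.range (k + 1), ballDensity (α * p) T μ i y ^ (1 / (p - 1))) +
          ∑' i, ballDensity (α * p) T μ (i + (k + 1)) y ^ (1 / (p - 1))) := by
        rw [ENNReal.summable.sum_add_tsum_nat_add' ]
    _ ≤ c * ((c + 2 * c) * (∑ i ∈ Finset.range (k + 1),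
          ballDensity (α * p) (2 * T) μ i x ^ (1 / (p - 1))) +
          (c + 2 * c) * wolff α p (ENNReal.ofReal T) ν y) := by
        gcongr
        · exact hhead.trans (mul_le_mul_left le_self_add _)
        · exact htail.trans (mul_le_mul_left le_add_self _)
    _ = _ := by ring

lemma ballDensity_le_measure_univ_mul (hβN : β ≤ N) {a : ℝ} (ha : 0 < a)
    (hk : a ≤ T / 2 ^ k) (μ : Measure (Euc N)) (x : Euc N) :
    ballDensity β T μ k x ≤ μ univ * ENNReal.ofReal (a ^ (β - N)) :=
  mul_le_mul' (measure_mono (subset_univ _)) (ENNReal.ofReal_le_ofReal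
    (Real.rpow_le_rpow_of_nonpos ha hk (by linarith)))

lemma measure_ball_rpow_mul_le_wolff_restrict (hp : 1 < p) (hβN : α * p ≤ N) {τ : ℝ} (hτ : 0 < τ)
    (hτT : 4 * τ ≤ T) (μ : Measure (Euc N)) (hy : y ∈ ball x τ) :
    (ENNReal.ofReal (4 ^ (α * p - N)) * (μ (ball x τ) * ENNReal.ofReal (τ ^ (α * p - N)))) ^
      (1 / (p - 1)) * ENNReal.ofReal (1 / 2) ≤
        wolff α p (ENNReal.ofReal T) (μ.restrict (ball x τ)) y := by
  have hsub : ball x τ ⊆ ball y (2 * τ) := ball_subset_ball' (by linarith [mem_ball'.1 hy])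
  have hhalf : (4 * τ - 2 * τ) / (4 * τ) = 1 / 2 := by field_simp; norm_num
  have hw := measure_ball_rpow_mul_le_wolff hp hβN (show 0 < 2 * τ by positivity)
    (show 2 * τ < 4 * τ by linarith) hτT (μ.restrict (ball x τ)) y
  rwa [Measure.restrict_apply measurableSet_ball, inter_eq_right.2 hsub, hhalf,
    Real.mul_rpow (by norm_num) hτ.le, ENNReal.ofReal_mul (by positivity), mul_left_comm] at hw

lemma measure_ball_mul_rpow_mul_le_of_testing (hβN : α * p ≤ N) (hp : 1 < p) (hq : p - 1 < q)
    {τ : ℝ} (hτ : 0 < τ) (hτT : 4 * τ ≤ T) [IsFiniteMeasure ω] {C : ℝ≥0∞}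
    (h : ∫⁻ y, wolff α p (ENNReal.ofReal T) (ω.restrict (ball x τ)) y ^ q ≤ C * ω (ball x τ)) :
    (ω (ball x τ) * ENNReal.ofReal (τ ^ (α * p - N))) ^ (q / (p - 1) - 1) *
      ENNReal.ofReal (τ ^ (α * p)) * (ENNReal.ofReal (4 ^ (α * p - N)) ^ (q / (p - 1)) *
        ENNReal.ofReal (1 / 2) ^ q * volume (ball (0 : Euc N) 1)) ≤ C := by
  have hms := holderConjugate_exponents hp hq
  set m := q / (p - 1) with hm
  set d := ω (ball x τ) * ENNReal.ofReal (τ ^ (α * p - N)) with hd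
  set a := ENNReal.ofReal (4 ^ (α * p - N)) ^ m * ENNReal.ofReal (1 / 2) ^ q with ha
  rcases eq_or_ne d 0 with hd0 | hd0
  · simp [hd0, ENNReal.zero_rpow_of_pos (sub_pos.2 hms.lt)]
  have hlow : ∀ y ∈ ball x τ,
      d ^ m * a ≤ wolff α p (ENNReal.ofReal T) (ω.restrict (ball x τ)) y ^ q := by
    intro y hy
    have hq0 : 0 ≤ q := by linarith
    have hw := measure_ball_rpow_mul_le_wolff_restrict hp hβN hτ hτT ω hy
    rw [← hd] at hw
    refine le_of_eq_of_le ?_ (ENNReal.rpow_le_rpow hw hq0)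
    rw [ENNReal.mul_rpow_of_nonneg _ _ hq0, ← ENNReal.rpow_mul, one_div_mul_eq_div, ← hm,
      ENNReal.mul_rpow_of_nonneg (ENNReal.ofReal _) d hms.nonneg, ha]
    ring
  have hint : d ^ m * a * volume (ball x τ) ≤ C * ω (ball x τ) := by
    rw [← setLIntegral_const]
    exact (setLIntegral_mono' measurableSet_ball hlow).trans
      ((setLIntegral_le_lintegral _ _).trans h)
  have hτp : ENNReal.ofReal (τ ^ (α * p)) =
      ENNReal.ofReal (τ ^ N) * ENNReal.ofReal (τ ^ (α * p - N)) := by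
    rw [← ENNReal.ofReal_mul (by positivity), ← Real.rpow_natCast, ← Real.rpow_add hτ,
      add_sub_cancel]
  refine (ENNReal.mul_le_mul_iff_right hd0 (by finiteness)).1 ?_
  calc d * (d ^ (m - 1) * ENNReal.ofReal (τ ^ (α * p)) * (a * volume (ball (0 : Euc N) 1)))
      = d ^ m * a * volume (ball x τ) * ENNReal.ofReal (τ ^ (α * p - N)) := by
        rw [volume_ball_eq x hτ, hτp, rpow_eq_mul_rpow_sub_one d hms.lt.le]
        ring
    _ ≤ C * ω (ball x τ) * ENNReal.ofReal (τ ^ (α * p - N)) := mul_le_mul_left hint _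
    _ = d * C := by rw [hd]; ring

lemma exists_ballDensity_rpow_mul_le_of_testing (hβ : 0 < α * p) (hβN : α * p < N) (hp : 1 < p)
    (hq : p - 1 < q) (hT : 0 < T) [IsFiniteMeasure ω] {C : ℝ≥0∞} (hC : C ≠ ∞)
    (h : ∀ (x : Euc N) (t : ℝ), 0 < t →
      ∫⁻ y, wolff α p (ENNReal.ofReal T) (ω.restrict (ball x t)) y ^ q ≤ C * ω (ball x t)) :
    ∃ A : ℝ≥0∞, A ≠ ∞ ∧ ∀ (x : Euc N) (k : ℕ),
      ballDensity (α * p) (2 * T) ω k x ^ (q / (p - 1) - 1) *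
        ENNReal.ofReal ((2 * T / 2 ^ k) ^ (α * p)) ≤ A := by
  have hm1 : 0 < q / (p - 1) - 1 := sub_pos.2 (holderConjugate_exponents hp hq).lt
  set κ := ENNReal.ofReal (4 ^ (α * p - N)) ^ (q / (p - 1)) * ENNReal.ofReal (1 / 2) ^ q *
    volume (ball (0 : Euc N) 1)
  have hκ0 : κ ≠ 0 := by
    have h4 : ENNReal.ofReal (4 ^ (α * p - N)) ≠ 0 := by
      rw [Ne, ENNReal.ofReal_eq_zero, not_le]; positivity
    exact mul_ne_zero (mul_ne_zero (ENNReal.rpow_pos (pos_iff_ne_zero.2 h4) (by simp)).ne'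
      (ENNReal.rpow_pos (by simp) (by simp)).ne') (measure_ball_pos _ _ one_pos).ne'
  have : 0 ≤ q := by linarith
  have hκt : κ ≠ ∞ := ENNReal.mul_ne_top (by finiteness) measure_ball_lt_top.ne
  have hκinv : κ⁻¹ ≠ ∞ := ENNReal.inv_ne_top.2 hκ0
  refine ⟨(ω univ * ENNReal.ofReal ((T / 4) ^ (α * p - N))) ^ (q / (p - 1) - 1) *
    ENNReal.ofReal ((2 * T) ^ (α * p)) + C * κ⁻¹, by finiteness, fun x k => ?_⟩
  have hτ : 0 < 2 * T / 2 ^ k := by positivity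
  rcases le_total k 3 with hk | hk
  · have hlarge : T / 4 ≤ 2 * T / 2 ^ k :=
      calc T / 4 = 2 * T / 2 ^ 3 := by ring
        _ ≤ 2 * T / 2 ^ k := by gcongr; norm_num
    refine le_trans ?_ le_self_add
    gcongr
    · exact ballDensity_le_measure_univ_mul hβN.le (by positivity) hlarge ω x
    · exact div_le_self (by positivity) (one_le_pow₀ one_le_two)
  · have hsmall : 4 * (2 * T / 2 ^ k) ≤ T :=
      calc 4 * (2 * T / 2 ^ k) ≤ 4 * (2 * T / 2 ^ 3) := by gcongr; norm_num
        _ = T := by ring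
    refine le_trans ?_ le_add_self
    rw [← div_eq_mul_inv, ENNReal.le_div_iff_mul_le (Or.inl hκ0) (Or.inl hκt)]
    exact measure_ball_mul_rpow_mul_le_of_testing hβN.le hp hq hτ hsmall (h x _ hτ)

lemma ballDensity_rpow_le_four_mul_wolff (hβN : α * p ≤ N) (hp : 1 < p) (hT : 0 < T)
    (hx : ω (ball x (3 * T / 4))ᶜ = 0) {S : ℝ} (hk : T ≤ S / 2 ^ k) :
    ballDensity (α * p) S ω k x ^ (1 / (p - 1)) ≤ 4 * wolff α p (ENNReal.ofReal T) ω x := by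
  have hr : 0 < 1 / (p - 1) := one_div_pos.2 (by linarith)
  have huniv : ω univ = ω (ball x (3 * T / 4)) := by
    rw [← measure_add_measure_compl measurableSet_ball, hx, add_zero]
  have hquart : ENNReal.ofReal ((T - 3 * T / 4) / T) = 4⁻¹ := by
    rw [show (T - 3 * T / 4) / T = (4 : ℝ)⁻¹ by field_simp; ring,
      ENNReal.ofReal_inv_of_pos (by norm_num), ENNReal.ofReal_ofNat]
  have hw := measure_ball_rpow_mul_le_wolff hp hβN (show 0 < 3 * T / 4 by positivity)
    (show 3 * T / 4 < T by linarith) le_rfl ω x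
  rw [hquart, ← div_eq_mul_inv, ENNReal.div_le_iff_le_mul (by simp) (by simp),
    mul_comm (wolff α p _ ω x), ← huniv] at hw
  exact (ENNReal.rpow_le_rpow (ballDensity_le_measure_univ_mul hβN hT hk ω x) hr.le).trans hw

lemma tsum_ballDensity_two_mul_le_wolff (hβN : α * p ≤ N) (hp : 1 < p) (hT : 0 < T)
    (hx : ω (ball x (3 * T / 4))ᶜ = 0) :
    ∑' k, ballDensity (α * p) (2 * T) ω k x ^ (1 / (p - 1)) ≤
      (8 + 2 * ENNReal.ofReal (2 ^ (N - α * p)) ^ (1 / (p - 1))) *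
        wolff α p (ENNReal.ofReal T) ω x := by
  have hshift (k : ℕ) : ballDensity (α * p) (2 * T) ω (k + 2) x =
      ballDensity (α * p) (T / 2) ω k x := by
    have : 2 * T / 2 ^ (k + 2) = T / 2 / 2 ^ k := by rw [pow_add]; field_simp
    simp only [ballDensity, this]
  rw [← ENNReal.summable.sum_add_tsum_nat_add' (k := 2), add_mul]
  simp only [hshift]
  refine add_le_add ?_ (tsum_ballDensity_le_wolff hp hβN (half_pos hT) (by linarith) ω x)
  rw [Finset.sum_range_succ, Finset.sum_range_one, show (8 : ℝ≥0∞) = 4 + 4 by norm_num, add_mul]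
  refine add_le_add ?_ ?_ <;> refine ballDensity_rpow_le_four_mul_wolff hβN hp hT hx ?_
  · linarith [pow_zero (2 : ℝ), div_one (2 * T)]
  · rw [pow_one, mul_div_cancel_left₀ _ two_ne_zero]

lemma setLIntegral_wolff_rpow_ball_le (hβN : α * p ≤ N) (hp : 1 < p) (hq : 0 ≤ q)
    (hT : 0 < T) (μ : Measure (Euc N)) (k : ℕ) (x : Euc N) :
    ∫⁻ y in ball x (T / 2 ^ k), wolff α p (ENNReal.ofReal T) μ y ^ q ≤
      (3 * (ENNReal.ofReal (2 ^ (N - α * p)) ^ (1 / (p - 1))) ^ 2) ^ q * (2 ^ q *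
        ((∑ i ∈ Finset.range (k + 1), ballDensity (α * p) (2 * T) μ i x ^ (1 / (p - 1))) ^ q *
          volume (ball x (T / 2 ^ k)) + ∫⁻ y, wolff α p (ENNReal.ofReal T)
            (μ.restrict (ball x (2 * T / 2 ^ k))) y ^ q)) := by
  have : 0 < 1 / (p - 1) := one_div_pos.2 (by linarith)
  set c := 3 * (ENNReal.ofReal (2 ^ (N - α * p)) ^ (1 / (p - 1))) ^ 2
  have hc : c ^ q ≠ ∞ := by finiteness
  set U := ∑ i ∈ Finset.range (k + 1), ballDensity (α * p) (2 * T) μ i x ^ (1 / (p - 1))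
  set ν := μ.restrict (ball x (2 * T / 2 ^ k))
  calc ∫⁻ y in ball x (T / 2 ^ k), wolff α p (ENNReal.ofReal T) μ y ^ q
      ≤ ∫⁻ y in ball x (T / 2 ^ k),
          c ^ q * (2 ^ q * (U ^ q + wolff α p (ENNReal.ofReal T) ν y ^ q)) := by
        refine setLIntegral_mono' measurableSet_ball fun y hy => ?_
        refine (ENNReal.rpow_le_rpow (wolff_le_sum_add_wolff_restrict hp hβN hT μ hy) hq).trans ?_
        rw [ENNReal.mul_rpow_of_nonneg _ _ hq]
        exact mul_le_mul_right (add_rpow_le_two_rpow_mul _ _ hq) _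
    _ = c ^ q * (2 ^ q * (U ^ q * volume (ball x (T / 2 ^ k)) +
          ∫⁻ y in ball x (T / 2 ^ k), wolff α p (ENNReal.ofReal T) ν y ^ q)) := by
        rw [lintegral_const_mul' _ _ hc, lintegral_const_mul' _ _ (by finiteness),
          lintegral_add_left measurable_const, setLIntegral_const]
    _ ≤ _ := by
        gcongr
        exact Measure.restrict_le_self

lemma exists_ballDensity_withDensity_wolff_rpow_le (hβN : α * p ≤ N) (hp : 1 < p) (hq : 0 ≤ q)
    (hT : 0 < T) {C : ℝ≥0∞} (hC : C ≠ ∞) (h : ∀ (x : Euc N) (t : ℝ), 0 < t →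
      ∫⁻ y, wolff α p (ENNReal.ofReal T) (ω.restrict (ball x t)) y ^ q ≤ C * ω (ball x t)) :
    ∃ κ : ℝ≥0∞, κ ≠ ∞ ∧ ∀ (x : Euc N) (k : ℕ), ballDensity (α * p) T
      (volume.withDensity fun y => wolff α p (ENNReal.ofReal T) ω y ^ q) k x ≤ κ *
        ((∑ i ∈ Finset.range (k + 1), ballDensity (α * p) (2 * T) ω i x ^ (1 / (p - 1))) ^ q *
          ENNReal.ofReal (2 ^ (-(α * p))) ^ k + ballDensity (α * p) (2 * T) ω k x) := by
  have : 0 < 1 / (p - 1) := one_div_pos.2 (by linarith)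
  set c := (3 * (ENNReal.ofReal (2 ^ (N - α * p)) ^ (1 / (p - 1))) ^ 2) ^ q
  have : c ≠ ∞ := by finiteness
  set v := volume (ball (0 : Euc N) 1)
  have : v ≠ ∞ := measure_ball_lt_top.ne
  set D := ENNReal.ofReal (T ^ (α * p))
  set F := ENNReal.ofReal (2 ^ (N - α * p))
  refine ⟨c * (2 ^ q * (v * D + C * F)), by finiteness, fun x k => ?_⟩
  set U := ∑ i ∈ Finset.range (k + 1), ballDensity (α * p) (2 * T) ω i x ^ (1 / (p - 1))
  set g := ENNReal.ofReal (2 ^ (-(α * p)))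
  have hρ : 0 < T / 2 ^ k := by positivity
  set b := ENNReal.ofReal ((T / 2 ^ k) ^ (α * p - N))
  have hvol : volume (ball x (T / 2 ^ k)) * b = v * D * g ^ k := by
    rw [volume_ball_eq x hρ, mul_right_comm, ← ENNReal.ofReal_mul (by positivity),
      ← Real.rpow_natCast _ N, ← Real.rpow_add hρ, add_sub_cancel, ofReal_div_two_pow_rpow hT]
    ring
  calc ballDensity (α * p) T (volume.withDensity fun y => wolff α p (ENNReal.ofReal T) ω y ^ q) k x
      = (∫⁻ y in ball x (T / 2 ^ k), wolff α p (ENNReal.ofReal T) ω y ^ q) * b := by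
        rw [ballDensity, withDensity_apply _ measurableSet_ball]
    _ ≤ c * (2 ^ q * (U ^ q * volume (ball x (T / 2 ^ k)) + C * ω (ball x (2 * T / 2 ^ k)))) *
          b := by
        refine mul_le_mul_left ((setLIntegral_wolff_rpow_ball_le hβN hp hq hT ω k x).trans ?_) _
        gcongr
        exact h x _ (by positivity)
    _ = c * (2 ^ q * (U ^ q * (volume (ball x (T / 2 ^ k)) * b) +
          C * (ω (ball x (2 * T / 2 ^ k)) * b))) := by ring
    _ = c * (2 ^ q * (v * D * (U ^ q * g ^ k) +
          C * F * ballDensity (α * p) (2 * T) ω k x)) := by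
        rw [hvol, measure_ball_two_mul_mul_eq_ballDensity hT]
        ring
    _ ≤ c * (2 ^ q * ((v * D + C * F) * (U ^ q * g ^ k) +
          (v * D + C * F) * ballDensity (α * p) (2 * T) ω k x)) := by
        gcongr
        · exact le_self_add
        · exact le_add_self
    _ = _ := by ring

lemma exists_rpow_mul_pow_le_of_testing (hβ : 0 < α * p) (hβN : α * p < N) (hp : 1 < p)
    (hq : p - 1 < q) (hT : 0 < T) [IsFiniteMeasure ω] {C : ℝ≥0∞} (hC : C ≠ ∞)
    (h : ∀ (x : Euc N) (t : ℝ), 0 < t →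
      ∫⁻ y, wolff α p (ENNReal.ofReal T) (ω.restrict (ball x t)) y ^ q ≤ C * ω (ball x t)) :
    ∃ A : ℝ≥0∞, A ≠ ∞ ∧ ∀ (x : Euc N) (k : ℕ),
      (ballDensity (α * p) (2 * T) ω k x ^ (1 / (p - 1))) ^ (q / (p - 1) - 1) *
        (ENNReal.ofReal (2 ^ (-(α * p))) ^ (1 / (p - 1))) ^ k ≤ A := by
  have hr : 0 < 1 / (p - 1) := one_div_pos.2 (by linarith)
  obtain ⟨A, hA, hle⟩ := exists_ballDensity_rpow_mul_le_of_testing hβ hβN hp hq hT hC h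
  set E := ENNReal.ofReal ((2 * T) ^ (α * p))
  have hE0 : E ≠ 0 := by rw [Ne, ENNReal.ofReal_eq_zero, not_le]; positivity
  have : E⁻¹ ≠ ∞ := ENNReal.inv_ne_top.2 hE0
  refine ⟨(A / E) ^ (1 / (p - 1)), by finiteness, fun x k => ?_⟩
  rw [← pow_rpow_comm, ← ENNReal.rpow_mul, mul_comm (1 / (p - 1)), ENNReal.rpow_mul,
    ← ENNReal.mul_rpow_of_nonneg _ _ hr.le]
  refine ENNReal.rpow_le_rpow ?_ hr.le
  rw [ENNReal.le_div_iff_mul_le (Or.inl hE0) (Or.inl (by finiteness)), mul_assoc, mul_comm _ E,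
    ← ofReal_div_two_pow_rpow (by positivity)]
  exact hle x k

lemma exists_tsum_pow_mul_sum_ballDensity_rpow_le_of_testing (hβ : 0 < α * p) (hβN : α * p < N)
    (hp : 1 < p) (hq : p - 1 < q) (hT : 0 < T) [IsFiniteMeasure ω] {C : ℝ≥0∞} (hC : C ≠ ∞)
    (h : ∀ (x : Euc N) (t : ℝ), 0 < t →
      ∫⁻ y, wolff α p (ENNReal.ofReal T) (ω.restrict (ball x t)) y ^ q ≤ C * ω (ball x t)) :
    ∃ A : ℝ≥0∞, A ≠ ∞ ∧ ∀ x : Euc N,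
      ∑' k, (ENNReal.ofReal (2 ^ (-(α * p))) ^ (1 / (p - 1))) ^ k * (∑ i ∈ Finset.range (k + 1),
        ballDensity (α * p) (2 * T) ω i x ^ (1 / (p - 1))) ^ (q / (p - 1)) ≤
          A * ∑' k, ballDensity (α * p) (2 * T) ω k x ^ (1 / (p - 1)) := by
  have hm := (holderConjugate_exponents hp hq).lt
  have hs : 0 < q / (p - 1) - 1 := sub_pos.2 hm
  have hr : 0 < 1 / (p - 1) := one_div_pos.2 (by linarith)
  obtain ⟨A, hA, hle⟩ := exists_rpow_mul_pow_le_of_testing hβ hβN hp hq hT hC h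
  set ε := ENNReal.ofReal (2 ^ (-(α * p))) ^ (1 / (p - 1))
  have hε : ε < 1 := ENNReal.rpow_lt_one (ofReal_two_rpow_neg_lt_one hβ) hr
  have hεinv := inv_one_sub_ne_top hε
  have hηinv := inv_one_sub_ne_top (ENNReal.rpow_lt_one hε (one_div_pos.2 hs))
  exact ⟨_, by finiteness, fun x => tsum_pow_mul_sum_rpow_le hm.le fun k =>
    sum_rpow_mul_pow_le_of_forall hs (hle x) k⟩

lemma exists_wolff_wolff_le_of_testing (hβ : 0 < α * p) (hβN : α * p < N) (hp : 1 < p)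
    (hq : p - 1 < q) (hT : 0 < T) [IsFiniteMeasure ω] {C : ℝ≥0∞} (hC : C ≠ ∞)
    (h : ∀ (x : Euc N) (t : ℝ), 0 < t →
      ∫⁻ y, wolff α p (ENNReal.ofReal T) (ω.restrict (ball x t)) y ^ q ≤ C * ω (ball x t)) :
    ∃ C' : ℝ≥0∞, C' ≠ ∞ ∧ ∀ x, ω (ball x (3 * T / 4))ᶜ = 0 →
      wolff α p (ENNReal.ofReal T)
        (volume.withDensity fun y => wolff α p (ENNReal.ofReal T) ω y ^ q) x ≤
          C' * wolff α p (ENNReal.ofReal T) ω x := by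
  have hr : 0 < 1 / (p - 1) := one_div_pos.2 (by linarith)
  obtain ⟨κ, hκ, hball⟩ :=
    exists_ballDensity_withDensity_wolff_rpow_le hβN.le hp (by linarith) hT hC h
  obtain ⟨A, hA, htsum⟩ :=
    exists_tsum_pow_mul_sum_ballDensity_rpow_le_of_testing hβ hβN hp hq hT hC h
  set ν := volume.withDensity fun y => wolff α p (ENNReal.ofReal T) ω y ^ q
  set c := ENNReal.ofReal (2 ^ (N - α * p)) ^ (1 / (p - 1))
  set ε := ENNReal.ofReal (2 ^ (-(α * p))) ^ (1 / (p - 1))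
  refine ⟨c * (κ ^ (1 / (p - 1)) * 2 ^ (1 / (p - 1)) * ((A + 1) * (8 + 2 * c))), by finiteness,
    fun x hx => ?_⟩
  set w : ℕ → ℝ≥0∞ := fun k => ballDensity (α * p) (2 * T) ω k x ^ (1 / (p - 1))
  set U : ℕ → ℝ≥0∞ := fun k => ∑ i ∈ Finset.range (k + 1), w i
  have hterm (k : ℕ) : ballDensity (α * p) T ν k x ^ (1 / (p - 1)) ≤
      κ ^ (1 / (p - 1)) * 2 ^ (1 / (p - 1)) * (ε ^ k * U k ^ (q / (p - 1)) + w k) := by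
    refine (ENNReal.rpow_le_rpow (hball x k) hr.le).trans ?_
    rw [ENNReal.mul_rpow_of_nonneg _ _ hr.le, mul_assoc]
    refine mul_le_mul_right ((add_rpow_le_two_rpow_mul _ _ hr.le).trans_eq ?_) _
    rw [ENNReal.mul_rpow_of_nonneg _ _ hr.le, ← ENNReal.rpow_mul, mul_one_div, pow_rpow_comm,
      mul_comm (ε ^ k)]
  calc wolff α p (ENNReal.ofReal T) ν x
      ≤ c * ∑' k, ballDensity (α * p) T ν k x ^ (1 / (p - 1)) :=
        wolff_le_tsum_ballDensity hp hβN.le hT ν x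
    _ ≤ c * ∑' k, κ ^ (1 / (p - 1)) * 2 ^ (1 / (p - 1)) *
          (ε ^ k * U k ^ (q / (p - 1)) + w k) :=
        mul_le_mul_right (ENNReal.tsum_le_tsum hterm) _
    _ = c * (κ ^ (1 / (p - 1)) * 2 ^ (1 / (p - 1)) *
          ((∑' k, ε ^ k * U k ^ (q / (p - 1))) + ∑' k, w k)) := by
        rw [ENNReal.tsum_mul_left, ENNReal.tsum_add]
    _ ≤ c * (κ ^ (1 / (p - 1)) * 2 ^ (1 / (p - 1)) * (A * ∑' k, w k + ∑' k, w k)) := by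
        gcongr
        exact htsum x
    _ = c * (κ ^ (1 / (p - 1)) * 2 ^ (1 / (p - 1)) * ((A + 1) * ∑' k, w k)) := by ring
    _ ≤ c * (κ ^ (1 / (p - 1)) * 2 ^ (1 / (p - 1)) *
          ((A + 1) * ((8 + 2 * c) * wolff α p (ENNReal.ofReal T) ω x))) := by
        gcongr
        exact tsum_ballDensity_two_mul_le_wolff hβN.le hp hT hx
    _ = _ := by ring

end TestingToPointwise

/-! ### From the capacitary condition for the potential back to the measure -/

section PotentialToMeasure

open scoped Function

variable {N : ℕ} {β T : ℝ} {A : ℕ → Set (Euc N)} {f h : Euc N → ℝ≥0∞}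

lemma lintegral_ballDensity_comm (β T : ℝ) (μ σ : Measure (Euc N)) [SFinite μ] [SFinite σ] (k : ℕ) :
    ∫⁻ x, ballDensity β T μ k x ∂σ = ∫⁻ y, ballDensity β T σ k y ∂μ := by
  have hneg (z : Euc N) : dyadicRieszKernel β T k (-z) = dyadicRieszKernel β T k z := by
    simp only [dyadicRieszKernel, indicator, mem_ball_zero_iff, norm_neg]
  have hmeas : Measurable fun w : Euc N × Euc N => dyadicRieszKernel β T k (w.1 - w.2) :=
    (measurable_dyadicRieszKernel β T k).comp (measurable_fst.sub measurable_snd)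
  simp only [ballDensity_eq_lintegral]
  rw [lintegral_lintegral_swap hmeas.aemeasurable]
  refine lintegral_congr fun y => lintegral_congr fun x => ?_
  rw [← hneg, neg_sub]

lemma exists_ballDensity_le_setLIntegral (hβ : 0 < β) (hβN : β < N) (hT : 0 < T) :
    ∃ C : ℝ≥0∞, C ≠ ∞ ∧ ∀ (f : Euc N → ℝ≥0∞), Measurable f → ∀ (A : Set (Euc N)),
      MeasurableSet A → ∀ (k i : ℕ), i ≤ k → ∀ (x : Euc N), ∀ y ∈ ball x (T / 2 ^ k),
        ballDensity β T ((volume.restrict A).withDensity f) i y ≤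
          C * ∫⁻ z in A, ENNReal.ofReal (besselKernel N β (x - z)) * f z := by
  have hN : 0 < N := by
    have : (0 : ℝ) < N := hβ.trans hβN
    exact_mod_cast this
  have : Nonempty (Fin N) := ⟨⟨0, hN⟩⟩
  obtain ⟨C, hC, h⟩ := exists_ofReal_rpow_le_besselKernel (N := N) hβ hβN (2 * T)
  refine ⟨ENNReal.ofReal (2 ^ (N - β)) * C, by finiteness, fun f hf A hA k i hik x y hy => ?_⟩
  have hi : 0 < T / 2 ^ i := by positivity
  have hki : T / 2 ^ k ≤ T / 2 ^ i :=
    div_le_div_of_nonneg_left hT.le (by positivity) (pow_le_pow_right₀ one_le_two hik)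
  have hiT : T / 2 ^ i ≤ T := div_le_self hT.le (one_le_pow₀ one_le_two)
  rw [ballDensity, withDensity_apply _ measurableSet_ball,
    Measure.restrict_restrict measurableSet_ball, mul_comm, ← lintegral_const_mul _ hf,
    ← lintegral_const_mul' _ _ (by finiteness)]
  refine (setLIntegral_mono_ae' (measurableSet_ball.inter hA) ?_).trans
    (lintegral_mono_set inter_subset_right)
  have hne : ∀ᵐ z : Euc N, z ≠ x := by
    rw [ae_iff]; simp
  filter_upwards [hne] with z hz hzb
  rw [← ofReal_two_rpow_mul_ofReal_two_mul_rpow hi, ← mul_assoc, mul_assoc _ C]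
  refine mul_le_mul_left (mul_le_mul_right (h _ _ (sub_ne_zero.2 hz.symm) ?_ (by linarith)) _) _
  rw [← dist_eq_norm]
  have h1 := mem_ball'.1 hy
  have h2 := mem_ball'.1 hzb.1
  linarith [dist_triangle x y z]

lemma exists_partition_ballDensity_eq_maxDensity (β T : ℝ) (μ : Measure (Euc N)) [SFinite μ]
    (n : ℕ) : ∃ A : ℕ → Set (Euc N), (∀ k, MeasurableSet (A k)) ∧ Pairwise (Disjoint on A) ∧
      ⋃ k, A k = univ ∧ ∀ k, ∀ x ∈ A k, ballDensity β T μ k x = maxDensity β T μ n x := by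
  refine ⟨disjointed fun k => {x | maxDensity β T μ n x = ballDensity β T μ k x},
    fun k => MeasurableSet.disjointed (fun k => measurableSet_eq_fun
      (measurable_maxDensity β T μ n) (measurable_ballDensity β T μ k)) k,
    disjoint_disjointed _, ?_, fun k x hx => (disjointed_subset _ k hx :
      maxDensity β T μ n x = ballDensity β T μ k x).symm⟩
  rw [iUnion_disjointed, eq_univ_iff_forall]
  intro x
  obtain ⟨k, -, hk⟩ := exists_partialSups_eq (fun k => ballDensity β T μ k x) n
  exact mem_iUnion.2 ⟨k, hk⟩

lemma tsum_setLIntegral_eq_lintegral (hAm : ∀ k, MeasurableSet (A k))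
    (hAd : Pairwise (Disjoint on A)) (hAu : ⋃ k, A k = univ) (g : Euc N → ℝ≥0∞) :
    ∑' k, ∫⁻ x in A k, g x = ∫⁻ x, g x := by
  rw [← lintegral_iUnion hAm hAd, hAu, Measure.restrict_univ]

/-- The density at scale `T / 2 ^ k` of the part of `f dx` carried by the `k`-th set. When scale `k`
realises the maximal density of `μ` on `A k`, the map `f ↦ ∑' k, pieceDensity β T A f k` is the
adjoint of the linearised maximal operator. -/
def pieceDensity (β T : ℝ) (A : ℕ → Set (Euc N)) (f : Euc N → ℝ≥0∞) (k : ℕ) (y : Euc N) : ℝ≥0∞ :=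
  ballDensity β T ((volume.restrict (A k)).withDensity f) k y

lemma measurable_pieceDensity (β T : ℝ) (A : ℕ → Set (Euc N)) (f : Euc N → ℝ≥0∞) (k : ℕ) :
    Measurable (pieceDensity β T A f k) :=
  measurable_ballDensity β T _ k

lemma lintegral_pieceDensity (hf : Measurable f) (μ : Measure (Euc N)) [SFinite μ] (k : ℕ) :
    ∫⁻ y, pieceDensity β T A f k y ∂μ = ∫⁻ x in A k, f x * ballDensity β T μ k x := by
  unfold pieceDensity
  rw [lintegral_ballDensity_comm, lintegral_withDensity_eq_lintegral_mul _ hf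
    (measurable_ballDensity β T μ k)]
  rfl

lemma lintegral_tsum_pieceDensity (hAm : ∀ k, MeasurableSet (A k))
    (hAd : Pairwise (Disjoint on A)) (hAu : ⋃ k, A k = univ) (hf : Measurable f)
    {μ : Measure (Euc N)} [SFinite μ] (hAh : ∀ k, ∀ x ∈ A k, ballDensity β T μ k x = h x) :
    ∫⁻ y, ∑' k, pieceDensity β T A f k y ∂μ = ∫⁻ x, f x * h x := by
  rw [lintegral_tsum fun k => (measurable_pieceDensity β T A f k).aemeasurable,
    ← tsum_setLIntegral_eq_lintegral hAm hAd hAu]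
  refine tsum_congr fun k => (lintegral_pieceDensity hf μ k).trans ?_
  exact setLIntegral_congr_fun (hAm k) fun x hx => by simp only [hAh k x hx]

lemma exists_sum_pieceDensity_le (hβ : 0 < β) (hβN : β < N) (hT : 0 < T) :
    ∃ C : ℝ≥0∞, C ≠ ∞ ∧ ∀ (A : ℕ → Set (Euc N)), (∀ k, MeasurableSet (A k)) →
      Pairwise (Disjoint on A) → ⋃ k, A k = univ → ∀ (f : Euc N → ℝ≥0∞), Measurable f →
        ∀ (k : ℕ) (x : Euc N), ∀ y ∈ ball x (T / 2 ^ k),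
          ∑ i ∈ Finset.range (k + 1), pieceDensity β T A f i y ≤ C * besselFun β f x := by
  obtain ⟨C, hC, h⟩ := exists_ballDensity_le_setLIntegral (N := N) hβ hβN hT
  refine ⟨C, hC, fun A hAm hAd hAu f hf k x y hy => ?_⟩
  calc ∑ i ∈ Finset.range (k + 1), pieceDensity β T A f i y
      ≤ ∑ i ∈ Finset.range (k + 1),
          C * ∫⁻ z in A i, ENNReal.ofReal (besselKernel N β (x - z)) * f z :=
        Finset.sum_le_sum fun i hi =>
          h f hf (A i) (hAm i) k i (Finset.mem_range_succ_iff.1 hi) x y hy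
    _ ≤ ∑' i, C * ∫⁻ z in A i, ENNReal.ofReal (besselKernel N β (x - z)) * f z :=
        ENNReal.sum_le_tsum _
    _ = C * besselFun β f x := by
        rw [ENNReal.tsum_mul_left, tsum_setLIntegral_eq_lintegral hAm hAd hAu, besselFun]

lemma lintegral_tsum_pieceDensity_rpow_le (hAm : ∀ k, MeasurableSet (A k))
    (hAd : Pairwise (Disjoint on A)) (hAu : ⋃ k, A k = univ) (hf : Measurable f)
    {μ : Measure (Euc N)} [SFinite μ] (hAh : ∀ k, ∀ x ∈ A k, ballDensity β T μ k x = h x)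
    {s : ℝ} (hs : 1 ≤ s) {B : Euc N → ℝ≥0∞} (hB : ∀ (k : ℕ) (x : Euc N), ∀ y ∈ ball x (T / 2 ^ k),
      ∑ i ∈ Finset.range (k + 1), pieceDensity β T A f i y ≤ B x) :
    ∫⁻ y, (∑' k, pieceDensity β T A f k y) ^ s ∂μ ≤
      ENNReal.ofReal s * ∫⁻ x, f x * (B x ^ (s - 1) * h x) := by
  set F : ℕ → Euc N → ℝ≥0∞ := pieceDensity β T A f
  have hFm (k : ℕ) : Measurable (F k) := measurable_pieceDensity β T A f k
  set S : ℕ → Euc N → ℝ≥0∞ := fun k y => (∑ i ∈ Finset.range (k + 1), F i y) ^ (s - 1)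
  have hSm (k : ℕ) : Measurable (S k) :=
    (Finset.measurable_fun_sum _ fun i _ => hFm i).pow_const _
  have hdensity (k : ℕ) (x : Euc N) : ballDensity β T (μ.withDensity (S k)) k x ≤
      B x ^ (s - 1) * ballDensity β T μ k x := by
    rw [ballDensity, ballDensity, ← mul_assoc, withDensity_apply _ measurableSet_ball,
      ← setLIntegral_const]
    exact mul_le_mul_left (setLIntegral_mono' measurableSet_ball fun y hy =>
      ENNReal.rpow_le_rpow (hB k x y hy) (sub_nonneg.2 hs)) _
  have hpiece (k : ℕ) : ∫⁻ y, F k y * S k y ∂μ ≤ ∫⁻ x in A k, f x * (B x ^ (s - 1) * h x) :=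
    calc ∫⁻ y, F k y * S k y ∂μ = ∫⁻ y, F k y ∂(μ.withDensity (S k)) := by
          rw [lintegral_withDensity_eq_lintegral_mul _ (hSm k) (hFm k)]
          exact lintegral_congr fun y => mul_comm _ _
      _ = ∫⁻ x in A k, f x * ballDensity β T (μ.withDensity (S k)) k x :=
          lintegral_pieceDensity hf _ k
      _ ≤ ∫⁻ x in A k, f x * (B x ^ (s - 1) * h x) :=
          setLIntegral_mono' (hAm k) fun x hx =>
            mul_le_mul_right (hAh k x hx ▸ hdensity k x) _
  calc ∫⁻ y, (∑' k, F k y) ^ s ∂μ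
      ≤ ∫⁻ y, ENNReal.ofReal s * ∑' k, F k y * S k y ∂μ :=
        lintegral_mono fun y => tsum_rpow_le_mul_tsum _ hs
    _ = ENNReal.ofReal s * ∑' k, ∫⁻ y, F k y * S k y ∂μ := by
        rw [lintegral_const_mul' _ _ (by finiteness),
          lintegral_tsum (f := fun k y => F k y * S k y) fun k =>
            ((hFm k).mul (hSm k)).aemeasurable]
    _ ≤ ENNReal.ofReal s * ∫⁻ x, f x * (B x ^ (s - 1) * h x) := by
        rw [← tsum_setLIntegral_eq_lintegral hAm hAd hAu]
        exact mul_le_mul_right (ENNReal.tsum_le_tsum hpiece) _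

lemma lintegral_rpow_mul_besselFun_rpow_le {m s : ℝ} (hms : m.HolderConjugate s) {C : ℝ≥0∞}
    (hC : C ≠ ∞) (hh : Measurable h) (hhm : ∫⁻ x, h x ^ m ≠ ∞)
    (hcap : ∀ K, IsCompact K → ∫⁻ x in K, h x ^ m ≤ C * besselCap N β s K) :
    ∫⁻ x, h x ^ m * besselFun β (fun z => h z ^ (m - 1)) x ^ (s - 1) ≤
      ENNReal.ofReal s * C ^ ((s - 1) / s) * ∫⁻ x, h x ^ m := by
  have hs1 : 0 < s - 1 := sub_pos.2 hms.symm.lt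
  have hfm : Measurable fun x => h x ^ (m - 1) := hh.pow_const _
  have hfs : ∫⁻ x, (h x ^ (m - 1)) ^ s = ∫⁻ x, h x ^ m :=
    lintegral_congr fun x => by rw [← ENNReal.rpow_mul, hms.sub_one_mul_conj]
  have : IsFiniteMeasure (volume.withDensity fun x => h x ^ m) := isFiniteMeasure_withDensity hhm
  have hexp : 0 ≤ 1 - (s - 1) / s := by
    rw [sub_nonneg, div_le_one hms.symm.pos]; linarith
  have hle := lintegral_besselFun_rpow_le (σ := volume.withDensity fun x => h x ^ m) hs1
    (sub_one_lt s) hC (fun K hK => by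
      rw [withDensity_apply _ hK.measurableSet]; exact hcap K hK) hfm (hfs.trans_ne hhm)
  rw [lintegral_withDensity_eq_lintegral_mul _ (hh.pow_const m)
    ((measurable_besselFun hfm).pow_const _), hfs, withDensity_apply _ MeasurableSet.univ,
    Measure.restrict_univ,
    ← ENNReal.rpow_add_of_nonneg _ _ hexp (div_nonneg hs1.le hms.symm.nonneg), sub_add_cancel,
    ENNReal.rpow_one, sub_sub_cancel, div_one] at hle
  exact hle

lemma lintegral_le_mul_measure_univ_of_lintegral_rpow_le {X : Type*} [MeasurableSpace X]
    {μ : Measure X} {m s : ℝ} (hms : m.HolderConjugate s) {Φ : X → ℝ≥0∞} (hΦ : AEMeasurable Φ μ)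
    (hfin : ∫⁻ y, Φ y ∂μ ≠ ∞) {D : ℝ≥0∞} (h : ∫⁻ y, Φ y ^ s ∂μ ≤ D * ∫⁻ y, Φ y ∂μ) :
    ∫⁻ y, Φ y ∂μ ≤ (D ^ (1 / s)) ^ m * μ univ := by
  have hs := hms.symm.pos
  refine le_rpow_mul_of_le_mul_rpow_mul_rpow hms.pos hfin ?_
  calc ∫⁻ y, Φ y ∂μ = ∫⁻ y, Φ y * 1 ∂μ := by simp only [mul_one]
    _ ≤ (∫⁻ y, Φ y ^ s ∂μ) ^ (1 / s) * (∫⁻ _, 1 ^ m ∂μ) ^ (1 / m) :=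
        ENNReal.lintegral_mul_le_Lp_mul_Lq μ hms.symm hΦ aemeasurable_const
    _ ≤ (D * ∫⁻ y, Φ y ∂μ) ^ (1 / s) * (∫⁻ _, 1 ^ m ∂μ) ^ (1 / m) := by gcongr
    _ = D ^ (1 / s) * μ univ ^ (1 / m) * (∫⁻ y, Φ y ∂μ) ^ (1 - 1 / m) := by
        rw [ENNReal.mul_rpow_of_nonneg _ _ (one_div_nonneg.2 hs.le), ENNReal.one_rpow,
          lintegral_one, one_div m, hms.one_sub_inv, one_div s]
        ring

-- Duality: with `f = h ^ (m - 1)` the integral of `h ^ m` is the `μ`-integral of the adjoint of the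
-- linearised maximal operator at `f`, whose `L ^ s (μ)` norm the capacitary condition bounds by a
-- power of that same integral.
lemma exists_lintegral_iSup_ballDensity_rpow_le_of_density (hβ : 0 < β) (hβN : β < N)
    (hT : 0 < T) {m s : ℝ} (hms : m.HolderConjugate s) {C : ℝ≥0∞} (hC : C ≠ ∞) :
    ∃ C' : ℝ≥0∞, C' ≠ ∞ ∧ ∀ (μ : Measure (Euc N)) [IsFiniteMeasure μ] (x0 : Euc N) (L : ℝ),
      μ (ball x0 L)ᶜ = 0 → (∀ n K, IsCompact K →
        ∫⁻ x in K, maxDensity β T μ n x ^ m ≤ C * besselCap N β s K) →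
        ∫⁻ x, (⨆ k, ballDensity β T μ k x) ^ m ≤ C' * μ univ := by
  have hm := hms.pos
  have hs := hms.symm.pos
  have hs1 : 0 < s - 1 := sub_pos.2 hms.symm.lt
  obtain ⟨C₁, hC₁, hsum⟩ := exists_sum_pieceDensity_le (N := N) hβ hβN hT
  set D := ENNReal.ofReal s * (C₁ ^ (s - 1) * (ENNReal.ofReal s * C ^ ((s - 1) / s))) with hD
  have : 0 ≤ (s - 1) / s := div_nonneg hs1.le hs.le
  refine ⟨(D ^ (1 / s)) ^ m, by finiteness, fun μ _ x0 L hsupp hμ => ?_⟩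
  refine lintegral_iSup_ballDensity_rpow_le hm fun n => ?_
  obtain ⟨A, hAm, hAd, hAu, hAh⟩ := exists_partition_ballDensity_eq_maxDensity β T μ n
  set h : Euc N → ℝ≥0∞ := maxDensity β T μ n
  have hhm : Measurable h := measurable_maxDensity β T μ n
  have hX : ∫⁻ x, h x ^ m ≠ ∞ := lintegral_maxDensity_rpow_ne_top (β := β) hT hm hsupp n
  set f : Euc N → ℝ≥0∞ := fun x => h x ^ (m - 1)
  have hfh (x : Euc N) : h x ^ m = f x * h x := by
    rw [mul_comm, ← rpow_eq_mul_rpow_sub_one _ hms.lt.le]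
  have hfm : Measurable f := hhm.pow_const _
  set Φ : Euc N → ℝ≥0∞ := fun y => ∑' k, pieceDensity β T A f k y
  have hΦm : Measurable Φ := .tsum (measurable_pieceDensity β T A f)
  have hΦ : ∫⁻ y, Φ y ∂μ = ∫⁻ x, h x ^ m := by
    simp only [hfh]
    exact lintegral_tsum_pieceDensity hAm hAd hAu hfm hAh
  have hΦs : ∫⁻ y, Φ y ^ s ∂μ ≤ D * ∫⁻ x, h x ^ m :=
    calc ∫⁻ y, Φ y ^ s ∂μ
        ≤ ENNReal.ofReal s * ∫⁻ x, f x * ((C₁ * besselFun β f x) ^ (s - 1) * h x) :=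
          lintegral_tsum_pieceDensity_rpow_le hAm hAd hAu hfm hAh hms.symm.lt.le
            (hsum A hAm hAd hAu f hfm)
      _ = ENNReal.ofReal s * (C₁ ^ (s - 1) * ∫⁻ x, h x ^ m * besselFun β f x ^ (s - 1)) := by
          congr 1
          rw [← lintegral_const_mul' _ _ (by finiteness)]
          refine lintegral_congr fun x => ?_
          rw [hfh, ENNReal.mul_rpow_of_nonneg _ _ hs1.le]
          ring
      _ ≤ ENNReal.ofReal s * (C₁ ^ (s - 1) * (ENNReal.ofReal s * C ^ ((s - 1) / s) *
            ∫⁻ x, h x ^ m)) := by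
          gcongr
          exact lintegral_rpow_mul_besselFun_rpow_le hms hC hhm hX (hμ n)
      _ = D * ∫⁻ x, h x ^ m := by rw [hD]; ring
  exact hΦ ▸ lintegral_le_mul_measure_univ_of_lintegral_rpow_le hms hΦm.aemeasurable
    (hΦ.trans_ne hX) (hΦs.trans_eq (by rw [hΦ]))

variable {α p q : ℝ}

lemma maxDensity_rpow_le_wolff_rpow (hβN : α * p ≤ N) (hp : 1 < p) (hq : 0 ≤ q) (hT : 0 < T)
    {μ ω : Measure (Euc N)} (hμω : μ ≤ ω) (n : ℕ) (x : Euc N) :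
    maxDensity (α * p) (T / 2) μ n x ^ (q / (p - 1)) ≤
      (2 * ENNReal.ofReal (2 ^ (N - α * p)) ^ (1 / (p - 1))) ^ q *
        wolff α p (ENNReal.ofReal T) ω x ^ q := by
  have hr : 0 ≤ 1 / (p - 1) := one_div_nonneg.2 (by linarith)
  obtain ⟨k, -, hk⟩ := exists_partialSups_eq (fun k => ballDensity (α * p) (T / 2) μ k x) n
  rw [maxDensity, hk, ← ENNReal.mul_rpow_of_nonneg _ _ hq, ← one_div_mul_eq_div (p - 1) q,
    ENNReal.rpow_mul]
  refine ENNReal.rpow_le_rpow ?_ hq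
  calc ballDensity (α * p) (T / 2) μ k x ^ (1 / (p - 1))
      ≤ ballDensity (α * p) (T / 2) ω k x ^ (1 / (p - 1)) :=
        ENNReal.rpow_le_rpow (mul_le_mul_left (hμω _) _) hr
    _ ≤ ∑' k, ballDensity (α * p) (T / 2) ω k x ^ (1 / (p - 1)) := ENNReal.le_tsum k
    _ ≤ _ := tsum_ballDensity_le_wolff hp hβN (half_pos hT) (by linarith) ω x

lemma exists_measure_le_besselCap_of_wolff (hβ : 0 < α * p) (hβN : α * p < N) (hp : 1 < p)
    (hq : p - 1 < q) (hT : 0 < T) {x0 : Euc N} {L : ℝ} {ω : Measure (Euc N)} [IsFiniteMeasure ω]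
    (hsupp : ω (ball x0 L)ᶜ = 0) {C : ℝ≥0∞} (hC : C ≠ ∞)
    (h : ∀ K, IsCompact K → ∫⁻ y in K, wolff α p (ENNReal.ofReal T) ω y ^ q ≤
      C * besselCap N (α * p) (q / (q - p + 1)) K) :
    ∃ C' : ℝ≥0∞, C' ≠ ∞ ∧ ∀ K, IsCompact K → ω K ≤
      C' * besselCap N (α * p) (q / (q - p + 1)) K := by
  have hms := holderConjugate_exponents hp hq
  have hm1 : 0 ≤ q / (p - 1) - 1 := sub_nonneg.2 hms.lt.le
  have hs1 : 0 ≤ q / (q - p + 1) - 1 := sub_nonneg.2 hms.symm.lt.le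
  have hq0 : 0 ≤ q := by linarith
  have : 0 ≤ 1 / (p - 1) := one_div_nonneg.2 (by linarith)
  set c := (2 * ENNReal.ofReal (2 ^ (N - α * p)) ^ (1 / (p - 1))) ^ q
  have hc : c ≠ ∞ := by finiteness
  obtain ⟨C₁, hC₁, hmax⟩ := exists_lintegral_iSup_ballDensity_rpow_le_of_density hβ hβN
    (half_pos hT) hms (show c * C ≠ ∞ by finiteness)
  obtain ⟨C₂, hC₂, hpot⟩ := exists_lintegral_besselPot_rpow_le hβ hβN (half_pos hT) hms.lt.le x0 L
  have hD : C₂ * (C₁ + ω univ ^ (q / (p - 1) - 1)) ≠ ∞ := by finiteness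
  refine ⟨_, by finiteness, fun K hK => measure_le_mul_besselCap hms hD hK.measurableSet ?_⟩
  have hle : ω.restrict K ≤ ω := Measure.restrict_le_self
  have hsuppK : ω.restrict K (ball x0 L)ᶜ = 0 := le_antisymm ((hle _).trans hsupp.le) zero_le
  have hbound (n : ℕ) (E : Set (Euc N)) (hE : IsCompact E) :
      ∫⁻ x in E, maxDensity (α * p) (T / 2) (ω.restrict K) n x ^ (q / (p - 1)) ≤
        c * C * besselCap N (α * p) (q / (q - p + 1)) E :=
    calc ∫⁻ x in E, maxDensity (α * p) (T / 2) (ω.restrict K) n x ^ (q / (p - 1))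
        ≤ ∫⁻ x in E, c * wolff α p (ENNReal.ofReal T) ω x ^ q :=
          lintegral_mono fun x => maxDensity_rpow_le_wolff_rpow hβN.le hp hq0 hT hle n x
      _ = c * ∫⁻ x in E, wolff α p (ENNReal.ofReal T) ω x ^ q := lintegral_const_mul' _ _ hc
      _ ≤ c * C * besselCap N (α * p) (q / (q - p + 1)) E := by
          rw [mul_assoc]
          exact mul_le_mul_right (h E hE) _
  have hmass : ω K ^ (q / (p - 1)) ≤ ω univ ^ (q / (p - 1) - 1) * ω K := by
    rw [rpow_eq_mul_rpow_sub_one _ hms.lt.le, mul_comm]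
    gcongr
    exact subset_univ K
  have hsup := hmax _ x0 L hsuppK hbound
  refine (hpot _ hsuppK).trans ?_
  rw [Measure.restrict_apply_univ] at hsup ⊢
  rw [mul_assoc, add_mul]
  exact mul_le_mul_right (add_le_add hsup hmass) _

end PotentialToMeasure

/-! ### The maximal function of a finite measure relative to another -/

section RelativeMaximal

variable {N : ℕ}

lemma exists_measure_le_of_forall_exists_ball (N : ℕ) : ∃ C : ℝ≥0∞, C ≠ ∞ ∧
    ∀ (ν : Measure (Euc N)) (E A : Set (Euc N)) (T : ℝ) (t : ℝ≥0∞), MeasurableSet E → t ≠ 0 →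
      t ≠ ∞ → (∀ x ∈ A, ∃ ρ, 0 < ρ ∧ ρ ≤ T ∧ t * ν (ball x ρ) ≤ ν (ball x ρ ∩ E)) →
        ν A ≤ C * ν E / t := by
  obtain ⟨n, τ, hτ, hn⟩ := HasBesicovitchCovering.no_satelliteConfig (α := Euc N)
  refine ⟨n, by simp, fun ν E A T t hE ht ht' h => ?_⟩
  choose! ρ hρ hρT hρν using h
  let P : Besicovitch.BallPackage A (Euc N) :=
    { c := fun x => x
      r := fun x => ρ x
      rpos := fun x => hρ x x.2
      r_bound := T
      r_le := fun x => hρT x x.2 }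
  obtain ⟨s, hsd, hsc⟩ := Besicovitch.exist_disjoint_covering_families hτ hn P
  have hsd' (i : Fin n) : (s i).PairwiseDisjoint fun j => ball (j : Euc N) (ρ j) :=
    (hsd i).mono fun j => ball_subset_closedBall
  have hcount (i : Fin n) : (s i).Countable := (hsd' i).countable_of_isOpen
    (fun j _ => isOpen_ball) fun j _ => nonempty_ball.2 (hρ j j.2)
  have hfam (i : Fin n) : ν (⋃ j ∈ s i, ball (j : Euc N) (ρ j)) ≤ ν E / t := by
    calc ν (⋃ j ∈ s i, ball (j : Euc N) (ρ j))
        ≤ ∑' j : s i, ν (ball (j : Euc N) (ρ j)) := measure_biUnion_le _ (hcount i) _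
      _ ≤ ∑' j : s i, ν (ball (j : Euc N) (ρ j) ∩ E) / t := by
          refine ENNReal.tsum_le_tsum fun j => ?_
          rw [ENNReal.le_div_iff_mul_le (Or.inl ht) (Or.inl ht'), mul_comm]
          exact hρν _ j.1.2
      _ = ν (⋃ j ∈ s i, ball (j : Euc N) (ρ j) ∩ E) / t := by
          rw [measure_biUnion (hcount i) ((hsd' i).mono fun j => inter_subset_left)
            fun j _ => measurableSet_ball.inter hE]
          simp only [div_eq_mul_inv, ENNReal.tsum_mul_right]
      _ ≤ ν E / t := by
          gcongr
          exact iUnion₂_subset fun j _ => inter_subset_right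
  have hA : A ⊆ ⋃ i, ⋃ j ∈ s i, ball (j : Euc N) (ρ j) := fun x hx => hsc ⟨⟨x, hx⟩, rfl⟩
  calc ν A ≤ ν (⋃ i, ⋃ j ∈ s i, ball (j : Euc N) (ρ j)) := measure_mono hA
    _ ≤ ∑' i, ν (⋃ j ∈ s i, ball (j : Euc N) (ρ j)) := measure_iUnion_le _
    _ ≤ ∑' _ : Fin n, ν E / t := ENNReal.tsum_le_tsum hfam
    _ = _ := by simp [mul_div_assoc]

/-- The dyadic maximal function of `ν` restricted to `E`, relative to `ν`. -/
def relMaximal (T : ℝ) (ν : Measure (Euc N)) (E : Set (Euc N)) (x : Euc N) : ℝ≥0∞ :=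
  ⨆ k : ℕ, ν.restrict E (ball x (T / 2 ^ k)) / ν (ball x (T / 2 ^ k))

lemma measurable_relMaximal (T : ℝ) (ν : Measure (Euc N)) [SFinite ν] (E : Set (Euc N)) :
    Measurable (relMaximal T ν E) :=
  Measurable.iSup fun k => (measurable_measure_ball_const (ν.restrict E) (T / 2 ^ k)).div
    (measurable_measure_ball_const ν (T / 2 ^ k))

lemma relMaximal_le_one (T : ℝ) (ν : Measure (Euc N)) (E : Set (Euc N)) (x : Euc N) :
    relMaximal T ν E x ≤ 1 :=
  iSup_le fun _ => ENNReal.div_le_of_le_mul (by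
    rw [one_mul]; exact Measure.restrict_le_self _)

lemma restrict_ball_le_relMaximal_mul (T : ℝ) (ν : Measure (Euc N)) [IsFiniteMeasure ν]
    (E : Set (Euc N)) (x : Euc N) (k : ℕ) :
    ν.restrict E (ball x (T / 2 ^ k)) ≤ relMaximal T ν E x * ν (ball x (T / 2 ^ k)) := by
  by_cases h : ν (ball x (T / 2 ^ k)) = 0
  · have : ν.restrict E (ball x (T / 2 ^ k)) = 0 :=
      le_antisymm ((Measure.restrict_le_self _).trans h.le) zero_le
    rw [this]
    exact zero_le
  · rw [← ENNReal.div_le_iff h (measure_ne_top _ _)]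
    exact le_iSup (fun k : ℕ => ν.restrict E (ball x (T / 2 ^ k)) / ν (ball x (T / 2 ^ k))) k

lemma ballDensity_restrict_le_relMaximal_mul (β T : ℝ) (ν : Measure (Euc N)) [IsFiniteMeasure ν]
    (E : Set (Euc N)) (x : Euc N) (k : ℕ) :
    ballDensity β T (ν.restrict E) k x ≤ relMaximal T ν E x * ballDensity β T ν k x := by
  rw [ballDensity, ballDensity, ← mul_assoc]
  exact mul_le_mul_left (restrict_ball_le_relMaximal_mul T ν E x k) _

lemma exists_lintegral_relMaximal_rpow_le (N : ℕ) {m : ℝ} (hm : 1 < m) :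
    ∃ C : ℝ≥0∞, C ≠ ∞ ∧ ∀ (T : ℝ), 0 < T → ∀ (ν : Measure (Euc N)) [IsFiniteMeasure ν]
      (E : Set (Euc N)), MeasurableSet E → ∫⁻ x, relMaximal T ν E x ^ m ∂ν ≤ C * ν E := by
  obtain ⟨C, hC, hweak⟩ := exists_measure_le_of_forall_exists_ball N
  refine ⟨ENNReal.ofReal (m / (m - 1)) * C, by finiteness, fun T hT ν _ E hE => ?_⟩
  rw [mul_assoc]
  refine lintegral_rpow_le_of_le_one_of_meas_lt_le_div hm (measurable_relMaximal T ν E).aemeasurable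
    (relMaximal_le_one T ν E) fun t ht ht' => hweak ν E _ T t hE ht ht' fun x hx => ?_
  obtain ⟨k, hk⟩ := lt_iSup_iff.1 (show t < relMaximal T ν E x from hx)
  refine ⟨T / 2 ^ k, by positivity, div_le_self hT.le (one_le_pow₀ one_le_two), ?_⟩
  rw [← Measure.restrict_apply measurableSet_ball]
  exact ENNReal.mul_le_of_le_div hk.le

end RelativeMaximal

/-! ### Size of the Wolff potential of a compactly supported measure -/

section WolffSize

variable {N : ℕ} {α p : ℝ}

lemma ballDensity_eq_zero_of_le_dist {β T : ℝ} {μ : Measure (Euc N)} {x0 x : Euc N} {L : ℝ}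
    (hsupp : μ (ball x0 L)ᶜ = 0) {k : ℕ} (hx : L + T / 2 ^ k ≤ dist x x0) :
    ballDensity β T μ k x = 0 := by
  have : μ (ball x (T / 2 ^ k)) = 0 := by
    by_contra h
    exact (dist_lt_of_measure_ball_ne_zero hsupp h).not_ge hx
  rw [ballDensity, this, zero_mul]

lemma wolff_eq_zero_of_le_dist (hβN : α * p ≤ N) (hp : 1 < p) {T L : ℝ} (hT : 0 < T)
    {μ : Measure (Euc N)} {x0 x : Euc N} (hsupp : μ (ball x0 L)ᶜ = 0) (hx : L + T ≤ dist x x0) :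
    wolff α p (ENNReal.ofReal T) μ x = 0 := by
  have hr : 0 < 1 / (p - 1) := one_div_pos.2 (by linarith)
  refine le_antisymm ((wolff_le_tsum_ballDensity hp hβN hT μ x).trans (le_of_eq ?_)) zero_le
  have h0 (k : ℕ) : ballDensity (α * p) T μ k x ^ (1 / (p - 1)) = 0 := by
    have hk : T / 2 ^ k ≤ T := div_le_self hT.le (one_le_pow₀ one_le_two)
    rw [ballDensity_eq_zero_of_le_dist hsupp (by linarith), ENNReal.zero_rpow_of_pos hr]
  simp only [h0, tsum_zero, mul_zero]

lemma exists_wolff_le_of_le_dist (hβN : α * p ≤ N) (hp : 1 < p) {T L δ : ℝ} (hT : 0 < T)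
    (hδ : 0 < δ) {x0 : Euc N} {μ : Measure (Euc N)} [IsFiniteMeasure μ]
    (hsupp : μ (ball x0 L)ᶜ = 0) :
    ∃ M : ℝ≥0∞, M ≠ ∞ ∧ ∀ x, L + δ ≤ dist x x0 → wolff α p (ENNReal.ofReal T) μ x ≤ M := by
  have hr : 0 < 1 / (p - 1) := one_div_pos.2 (by linarith)
  obtain ⟨n, hn⟩ := pow_unbounded_of_one_lt (T / δ) one_lt_two
  have hnδ : T / 2 ^ n ≤ δ := (div_lt_comm₀ hδ (by positivity)).1 hn |>.le
  set D := (μ univ * ENNReal.ofReal ((T / 2 ^ n) ^ (α * p - N))) ^ (1 / (p - 1))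
  have : D ≠ ∞ := by finiteness
  refine ⟨ENNReal.ofReal (2 ^ (N - α * p)) ^ (1 / (p - 1)) * ∑ _k ∈ Finset.range n, D,
    ENNReal.mul_ne_top (by finiteness) (ENNReal.sum_ne_top.2 fun _ _ => this), fun x hx => ?_⟩
  refine (wolff_le_tsum_ballDensity hp hβN hT μ x).trans (mul_le_mul_right ?_ _)
  have hfar (k : ℕ) (hk : k ∉ Finset.range n) :
      ballDensity (α * p) T μ k x ^ (1 / (p - 1)) = 0 := by
    have hkn : T / 2 ^ k ≤ T / 2 ^ n := div_le_div_of_nonneg_left hT.le (by positivity)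
      (pow_le_pow_right₀ one_le_two (not_lt.1 (Finset.mem_range.not.1 hk)))
    rw [ballDensity_eq_zero_of_le_dist hsupp (by linarith), ENNReal.zero_rpow_of_pos hr]
  rw [tsum_eq_sum hfar]
  refine Finset.sum_le_sum fun k hk => ENNReal.rpow_le_rpow
    (ballDensity_le_measure_univ_mul hβN (by positivity) ?_ μ x) hr.le
  exact div_le_div_of_nonneg_left hT.le (by positivity)
    (pow_le_pow_right₀ one_le_two (Finset.mem_range.1 hk).le)

lemma lintegral_ballDensity {β T : ℝ} (hT : 0 < T) (μ : Measure (Euc N)) [SFinite μ] (k : ℕ) :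
    ∫⁻ x, ballDensity β T μ k x =
      ENNReal.ofReal ((T / 2 ^ k) ^ β) * volume (ball (0 : Euc N) 1) * μ univ := by
  have hTk : 0 < T / 2 ^ k := by positivity
  rw [lintegral_ballDensity_comm]
  simp only [ballDensity, volume_ball_eq _ hTk]
  rw [lintegral_const, mul_right_comm (ENNReal.ofReal ((T / 2 ^ k) ^ N)),
    ← ENNReal.ofReal_mul (by positivity),
    ← Real.rpow_natCast _ N, ← Real.rpow_add hTk, add_sub_cancel]

lemma lintegral_tsum_pow_mul_ballDensity_ne_top {β T : ℝ} (hT : 0 < T) (μ : Measure (Euc N))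
    [IsFiniteMeasure μ] {a : ℝ≥0∞} (ha : a * ENNReal.ofReal (2 ^ (-β)) < 1) :
    ∫⁻ x, ∑' k, a ^ k * ballDensity β T μ k x ≠ ∞ := by
  have hterm (k : ℕ) : ∫⁻ x, a ^ k * ballDensity β T μ k x =
      (a * ENNReal.ofReal (2 ^ (-β))) ^ k *
        (ENNReal.ofReal (T ^ β) * volume (ball (0 : Euc N) 1) * μ univ) := by
    rw [lintegral_const_mul _ (measurable_ballDensity β T μ k), lintegral_ballDensity hT,
      ofReal_div_two_pow_rpow hT, mul_pow]
    ring
  have : volume (ball (0 : Euc N) 1) ≠ ∞ := measure_ball_lt_top.ne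
  have : (1 - a * ENNReal.ofReal (2 ^ (-β)))⁻¹ ≠ ∞ := inv_one_sub_ne_top ha
  rw [lintegral_tsum fun k => ((measurable_ballDensity β T μ k).const_mul _).aemeasurable]
  simp only [hterm]
  rw [ENNReal.tsum_mul_right, ENNReal.tsum_geometric]
  finiteness

lemma tsum_rpow_ne_top_of_tsum_pow_mul_ne_top {a : ℝ≥0∞} (ha : 1 < a) (ha' : a ≠ ∞) {r : ℝ}
    (hr : 0 < r) {u : ℕ → ℝ≥0∞} (hu : ∑' k, a ^ k * u k ≠ ∞) : ∑' k, u k ^ r ≠ ∞ := by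
  set M := ∑' k, a ^ k * u k
  have hle (k : ℕ) : u k ^ r ≤ M ^ r * (a⁻¹ ^ r) ^ k := by
    rw [← pow_rpow_comm, ← ENNReal.mul_rpow_of_nonneg _ _ hr.le]
    refine ENNReal.rpow_le_rpow ?_ hr.le
    calc u k = a ^ k * u k * a⁻¹ ^ k := by
          rw [mul_right_comm, ← mul_pow, ENNReal.mul_inv_cancel (zero_lt_one.trans ha).ne' ha',
            one_pow, one_mul]
      _ ≤ M * a⁻¹ ^ k := mul_le_mul_left (ENNReal.le_tsum (f := fun k => a ^ k * u k) k) _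
  have : (1 - a⁻¹ ^ r)⁻¹ ≠ ∞ :=
    inv_one_sub_ne_top (ENNReal.rpow_lt_one (ENNReal.inv_lt_one.2 ha) hr)
  refine ne_top_of_le_ne_top ?_ (ENNReal.tsum_le_tsum hle)
  rw [ENNReal.tsum_mul_left, ENNReal.tsum_geometric]
  finiteness

lemma ae_wolff_lt_top (hβ : 0 < α * p) (hβN : α * p ≤ N) (hp : 1 < p) {T : ℝ} (hT : 0 < T)
    (μ : Measure (Euc N)) [IsFiniteMeasure μ] :
    ∀ᵐ x : Euc N, wolff α p (ENNReal.ofReal T) μ x < ∞ := by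
  set a := ENNReal.ofReal (2 ^ (α * p / 2))
  have ha : 1 < a := ENNReal.one_lt_ofReal.2 (Real.one_lt_rpow one_lt_two (half_pos hβ))
  have haβ : a * ENNReal.ofReal (2 ^ (-(α * p))) < 1 := by
    rw [← ENNReal.ofReal_mul (by positivity), ← Real.rpow_add two_pos,
      show α * p / 2 + -(α * p) = -(α * p / 2) by ring]
    exact ofReal_two_rpow_neg_lt_one (half_pos hβ)
  have hmeas : Measurable fun x => ∑' k, a ^ k * ballDensity (α * p) T μ k x :=
    .tsum fun k => (measurable_ballDensity (α * p) T μ k).const_mul _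
  filter_upwards [ae_lt_top hmeas (lintegral_tsum_pow_mul_ballDensity_ne_top hT μ haβ)] with x hx
  have : 0 ≤ 1 / (p - 1) := one_div_nonneg.2 (by linarith)
  exact (wolff_le_tsum_ballDensity hp hβN hT μ x).trans_lt (ENNReal.mul_lt_top (by finiteness)
    (tsum_rpow_ne_top_of_tsum_pow_mul_ne_top ha ENNReal.ofReal_ne_top
      (one_div_pos.2 (by linarith)) hx.ne).lt_top)

end WolffSize

/-! ### From the pointwise inequality to the capacitary inequality -/

section Iteration

variable {N : ℕ} {α p q : ℝ}

lemma besselCap_mono (β s : ℝ) {E F : Set (Euc N)} (h : E ⊆ F) :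
    besselCap N β s E ≤ besselCap N β s F :=
  iInf_mono fun _ => iInf_mono fun _ => iInf_mono' fun hF => ⟨fun x hx => hF x (h hx), le_rfl⟩

lemma exists_volume_le_besselCap {β m s : ℝ} (hβ : 0 < β) (hβN : β < N)
    (hms : m.HolderConjugate s) : ∃ C : ℝ≥0∞, C ≠ ∞ ∧ ∀ E : Set (Euc N), MeasurableSet E →
      volume E ≠ ∞ → volume E ≤ C * besselCap N β s E := by
  set g := ∫⁻ z : Euc N, ENNReal.ofReal (besselKernel N β z)
  have hg : g ≠ ∞ := lintegral_besselKernel_ne_top hβ hβN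
  have hm1 : 0 ≤ m - 1 := sub_nonneg.2 hms.lt.le
  have hs1 : 0 ≤ s - 1 := sub_nonneg.2 hms.symm.lt.le
  have hgm : g ^ (m - 1) ≠ ∞ := by finiteness
  refine ⟨(g ^ (m - 1) * g) ^ (s - 1) + 1, by finiteness, fun E hE hvE => ?_⟩
  have : IsFiniteMeasure (volume.restrict E) := ⟨by simpa using hvE.lt_top⟩
  have hle (x : Euc N) : besselPot β (volume.restrict E) x ≤ g :=
    (setLIntegral_le_lintegral _ _).trans_eq
      (lintegral_sub_left_eq_self (fun z => ENNReal.ofReal (besselKernel N β z)) x)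
  have hpot : ∫⁻ x, besselPot β (volume.restrict E) x ^ m ≤ g ^ (m - 1) * g * volume E :=
    calc ∫⁻ x, besselPot β (volume.restrict E) x ^ m
        ≤ ∫⁻ x, g ^ (m - 1) * besselPot β (volume.restrict E) x := by
          refine lintegral_mono fun x => ?_
          rw [rpow_eq_mul_rpow_sub_one _ hms.lt.le, mul_comm]
          exact mul_le_mul_left (ENNReal.rpow_le_rpow (hle x) hm1) _
      _ = g ^ (m - 1) * g * volume E := by
          rw [lintegral_const_mul' _ _ hgm]
          unfold besselPot
          rw [lintegral_lintegral_sub_eq (measurable_besselKernel N β).ennreal_ofReal,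
            Measure.restrict_apply_univ, mul_assoc]
  have hgm' : g ^ (m - 1) * g ≠ ∞ := by finiteness
  have hcap := measure_le_mul_besselCap (β := β) (μ := volume.restrict E) hms hgm' hE
    (by rwa [Measure.restrict_restrict hE, inter_self, Measure.restrict_apply_self])
  rwa [Measure.restrict_apply_self] at hcap

lemma measure_ball_ne_top_of_wolff_ne_top (hβN : α * p ≤ N) (hp : 1 < p) {ρ T : ℝ} (hρ : 0 < ρ)
    (hρT : ρ < T) {μ : Measure (Euc N)} {x : Euc N}
    (h : wolff α p (ENNReal.ofReal T) μ x ≠ ∞) : μ (ball x ρ) ≠ ∞ := by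
  have hT : 0 < T := hρ.trans hρT
  have hc : ENNReal.ofReal (T ^ (α * p - N)) ≠ 0 :=
    (ENNReal.ofReal_pos.2 (Real.rpow_pos_of_pos hT _)).ne'
  have hd : ENNReal.ofReal ((T - ρ) / T) ≠ 0 :=
    (ENNReal.ofReal_pos.2 (div_pos (sub_pos.2 hρT) hT)).ne'
  refine fun htop => h (top_unique ?_)
  have hle := measure_ball_rpow_mul_le_wolff hp hβN hρ hρT le_rfl μ x
  rwa [htop, ENNReal.top_mul hc, ENNReal.top_rpow_of_pos (one_div_pos.2 (by linarith)),
    ENNReal.top_mul hd] at hle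

lemma lintegral_wolff_rpow_ne_top_of_setLIntegral_ne_top (hβN : α * p ≤ N) (hp : 1 < p)
    (hq : 0 < q) {T L δ : ℝ} (hT : 0 < T) (hδ : 0 < δ) {x0 : Euc N} {ω : Measure (Euc N)}
    [IsFiniteMeasure ω] (hsupp : ω (ball x0 L)ᶜ = 0)
    (h : ∫⁻ y in ball x0 (L + δ), wolff α p (ENNReal.ofReal T) ω y ^ q ≠ ∞) :
    ∫⁻ y, wolff α p (ENNReal.ofReal T) ω y ^ q ≠ ∞ := by
  set W := wolff α p (ENNReal.ofReal T) ω
  obtain ⟨M, hM, hMW⟩ := exists_wolff_le_of_le_dist hβN hp hT hδ hsupp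
  have hpt (y : Euc N) : W y ^ q ≤ (ball x0 (L + δ)).indicator (fun y => W y ^ q) y +
      (ball x0 (L + T)).indicator (fun _ => M ^ q) y := by
    by_cases hnear : y ∈ ball x0 (L + δ)
    · exact (indicator_of_mem hnear (fun y => W y ^ q)).ge.trans le_self_add
    by_cases hmid : y ∈ ball x0 (L + T)
    · rw [indicator_of_mem hmid]
      exact (ENNReal.rpow_le_rpow (hMW y (by simpa using hnear)) hq.le).trans le_add_self
    · simp only [W, wolff_eq_zero_of_le_dist hβN hp hT hsupp (by simpa using hmid),
        ENNReal.zero_rpow_of_pos hq, zero_le]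
  have : volume (ball x0 (L + T)) ≠ ∞ := measure_ball_lt_top.ne
  refine ne_top_of_le_ne_top ?_ (lintegral_mono hpt)
  rw [lintegral_add_left (((measurable_wolff α p _ ω).pow_const q).indicator measurableSet_ball),
    lintegral_indicator measurableSet_ball, lintegral_indicator_const measurableSet_ball]
  finiteness

-- A single point near `x0` where both sides of `h` are finite bounds the mass of the density
-- on a ball around it which covers the support of `ω`.
lemma lintegral_wolff_rpow_ne_top (hβ : 0 < α * p) (hβN : α * p ≤ N) (hp : 1 < p) (hq : 0 < q)
    {T L : ℝ} (hL : 0 < L) (hLT : L < T) {x0 : Euc N} {ω : Measure (Euc N)} [IsFiniteMeasure ω]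
    (hsupp : ω (ball x0 L)ᶜ = 0) {C : ℝ≥0∞} (hC : C ≠ ∞)
    (h : ∀ᵐ x ∂(volume.restrict (ball x0 L)), wolff α p (ENNReal.ofReal T)
      (volume.withDensity fun y => wolff α p (ENNReal.ofReal T) ω y ^ q) x ≤
        C * wolff α p (ENNReal.ofReal T) ω x) :
    ∫⁻ y, wolff α p (ENNReal.ofReal T) ω y ^ q ≠ ∞ := by
  have hT : 0 < T := hL.trans hLT
  set W := wolff α p (ENNReal.ofReal T) ω
  set ν := volume.withDensity fun y => W y ^ q
  obtain ⟨δ, hδ, hδT⟩ : ∃ δ, 0 < δ ∧ L + 2 * δ < T := ⟨(T - L) / 3, by linarith, by linarith⟩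
  obtain ⟨x, ⟨hx, hxν⟩, hxW⟩ : ∃ x, (x ∈ ball x0 (min L δ) ∧
      wolff α p (ENNReal.ofReal T) ν x ≤ C * W x) ∧ W x < ∞ := by
    have : (ae (volume.restrict (ball x0 (min L δ)))).NeBot :=
      ae_restrict_neBot.2 (measure_ball_pos _ _ (lt_min hL hδ)).ne'
    exact (((ae_restrict_mem measurableSet_ball).and (ae_restrict_of_ae_restrict_of_subset
      (ball_subset_ball (min_le_left L δ)) h)).and
        (ae_restrict_of_ae (ae_wolff_lt_top hβ hβN hp hT ω))).exists
  have hball : ν (ball x (L + 2 * δ)) ≠ ∞ :=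
    measure_ball_ne_top_of_wolff_ne_top hβN hp (by linarith) hδT
      (ne_top_of_le_ne_top (ENNReal.mul_ne_top hC hxW.ne) hxν)
  refine lintegral_wolff_rpow_ne_top_of_setLIntegral_ne_top hβN hp hq hT hδ hsupp ?_
  rw [← withDensity_apply _ measurableSet_ball]
  refine ne_top_of_le_ne_top hball (measure_mono (ball_subset_ball' ?_))
  linarith [(mem_ball'.1 hx).le.trans (min_le_right L δ)]

lemma iSup_ballDensity_restrict_rpow_le (hβN : α * p ≤ N) (hp : 1 < p) (hq : 0 ≤ q) {δ T : ℝ}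
    (hδ : 0 < δ) (hδT : 2 * δ ≤ T) {ν : Measure (Euc N)} [IsFiniteMeasure ν] (E : Set (Euc N))
    {x : Euc N} {w : ℝ≥0∞} (h : wolff α p (ENNReal.ofReal T) ν x ≤ w) :
    (⨆ k, ballDensity (α * p) δ (ν.restrict E) k x) ^ (q / (p - 1)) ≤
      (2 * ENNReal.ofReal (2 ^ (N - α * p)) ^ (1 / (p - 1)) * w) ^ q *
        relMaximal δ ν E x ^ (q / (p - 1)) := by
  have hp1 : 0 < p - 1 := by linarith
  have hm : 0 ≤ q / (p - 1) := div_nonneg hq hp1.le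
  set c := 2 * ENNReal.ofReal (2 ^ (N - α * p)) ^ (1 / (p - 1))
  have hdensity (k : ℕ) : ballDensity (α * p) δ ν k x ≤ (c * w) ^ (p - 1) := by
    have hk : ballDensity (α * p) δ ν k x ^ (1 / (p - 1)) ≤ c * w :=
      ((ENNReal.le_tsum k).trans (tsum_ballDensity_le_wolff hp hβN hδ hδT ν x)).trans
        (mul_le_mul_right h c)
    rwa [one_div, ENNReal.rpow_inv_le_iff hp1] at hk
  have hrestrict (k : ℕ) : ballDensity (α * p) δ (ν.restrict E) k x ≤
      (c * w) ^ (p - 1) * relMaximal δ ν E x :=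
    ((ballDensity_restrict_le_relMaximal_mul _ _ ν E x k).trans
      (mul_le_mul_right (hdensity k) _)).trans_eq (mul_comm _ _)
  refine (ENNReal.rpow_le_rpow (iSup_le hrestrict) hm).trans_eq ?_
  rw [ENNReal.mul_rpow_of_nonneg _ _ hm, ← ENNReal.rpow_mul, mul_div_cancel₀ _ hp1.ne']

lemma exists_lintegral_iSup_ballDensity_restrict_rpow_le (hβN : α * p ≤ N) (hp : 1 < p)
    (hq : p - 1 < q) {T L δ : ℝ} (hδ : 0 < δ) (hδT : 2 * δ ≤ T) {x0 : Euc N}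
    {w : Euc N → ℝ≥0∞} (hw : Measurable w) (hfin : ∫⁻ y, w y ^ q ≠ ∞) {C : ℝ≥0∞} (hC : C ≠ ∞)
    (h : ∀ᵐ x ∂(volume.restrict (ball x0 (L + δ))),
      wolff α p (ENNReal.ofReal T) (volume.withDensity fun y => w y ^ q) x ≤ C * w x) :
    ∃ C' : ℝ≥0∞, C' ≠ ∞ ∧ ∀ E ⊆ ball x0 L, MeasurableSet E →
      ∫⁻ x, (⨆ k, ballDensity (α * p) δ ((volume.withDensity fun y => w y ^ q).restrict E) k x) ^
        (q / (p - 1)) ≤ C' * ∫⁻ y in E, w y ^ q := by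
  have hq0 : 0 < q := by linarith
  have hm : 1 < q / (p - 1) := (holderConjugate_exponents hp hq).lt
  have : 0 ≤ 1 / (p - 1) := one_div_nonneg.2 (by linarith)
  have hwq : Measurable fun y => w y ^ q := hw.pow_const q
  set ν := volume.withDensity fun y => w y ^ q
  have : IsFiniteMeasure ν := isFiniteMeasure_withDensity hfin
  obtain ⟨C₁, hC₁, hrel⟩ := exists_lintegral_relMaximal_rpow_le N hm
  set A := (2 * ENNReal.ofReal (2 ^ (N - α * p)) ^ (1 / (p - 1)) * C) ^ q
  have hA : A ≠ ∞ := by finiteness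
  refine ⟨A * C₁, by finiteness, fun E hEL hE => ?_⟩
  have hEsupp : ν.restrict E (ball x0 L)ᶜ = 0 := by
    rw [Measure.restrict_apply measurableSet_ball.compl,
      (disjoint_compl_left_iff_subset.2 hEL).inter_eq, measure_empty]
  have hmax : ∀ᵐ x : Euc N, (⨆ k, ballDensity (α * p) δ (ν.restrict E) k x) ^ (q / (p - 1)) ≤
      A * (w x ^ q * relMaximal δ ν E x ^ (q / (p - 1))) := by
    filter_upwards [(ae_restrict_iff' measurableSet_ball).1 h] with x hx
    by_cases hxL : x ∈ ball x0 (L + δ)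
    · refine (iSup_ballDensity_restrict_rpow_le hβN hp hq0.le hδ hδT E (hx hxL)).trans_eq ?_
      rw [← mul_assoc, ENNReal.mul_rpow_of_nonneg _ _ hq0.le, mul_assoc]
    · rw [mem_ball, not_lt] at hxL
      have h0 (k : ℕ) : ballDensity (α * p) δ (ν.restrict E) k x = 0 := by
        have hk : δ / 2 ^ k ≤ δ := div_le_self hδ.le (one_le_pow₀ one_le_two)
        exact ballDensity_eq_zero_of_le_dist hEsupp (by linarith)
      simp only [h0, ciSup_const, ENNReal.zero_rpow_of_pos (zero_lt_one.trans hm), zero_le]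
  refine (lintegral_mono_ae hmax).trans ?_
  rw [lintegral_const_mul' _ _ hA, mul_assoc, ← withDensity_apply _ hE]
  refine mul_le_mul_right (le_of_eq_of_le ?_ (hrel δ hδ ν E hE)) _
  exact (lintegral_withDensity_eq_lintegral_mul volume hwq
    ((measurable_relMaximal δ ν E).pow_const _)).symm

lemma exists_setLIntegral_rpow_le_besselCap_of_wolff_le (hβ : 0 < α * p) (hβN : α * p < N)
    (hp : 1 < p) (hq : p - 1 < q) {T L δ : ℝ} (hδ : 0 < δ) (hδT : 2 * δ ≤ T) {x0 : Euc N}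
    {w : Euc N → ℝ≥0∞} (hw : Measurable w) (hfin : ∫⁻ y, w y ^ q ≠ ∞) {C : ℝ≥0∞} (hC : C ≠ ∞)
    (h : ∀ᵐ x ∂(volume.restrict (ball x0 (L + δ))),
      wolff α p (ENNReal.ofReal T) (volume.withDensity fun y => w y ^ q) x ≤ C * w x) :
    ∃ C' : ℝ≥0∞, C' ≠ ∞ ∧ ∀ E ⊆ ball x0 L, MeasurableSet E →
      ∫⁻ y in E, w y ^ q ≤ C' * besselCap N (α * p) (q / (q - p + 1)) E := by
  have hms := holderConjugate_exponents hp hq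
  have hm1 : 0 ≤ q / (p - 1) - 1 := sub_nonneg.2 hms.lt.le
  have hs1 : 0 ≤ q / (q - p + 1) - 1 := sub_nonneg.2 hms.symm.lt.le
  obtain ⟨C₁, hC₁, hsup⟩ :=
    exists_lintegral_iSup_ballDensity_restrict_rpow_le hβN.le hp hq hδ hδT hw hfin hC h
  obtain ⟨C₂, hC₂, hpot⟩ := exists_lintegral_besselPot_rpow_le hβ hβN hδ hms.lt.le x0 L
  set ν := volume.withDensity fun y => w y ^ q
  have : IsFiniteMeasure ν := isFiniteMeasure_withDensity hfin
  set D := C₂ * (C₁ + ν univ ^ (q / (p - 1) - 1)) with hDdef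
  have hD : D ≠ ∞ := by finiteness
  refine ⟨D ^ (q / (q - p + 1) - 1) + 1, by finiteness, fun E hEL hE => ?_⟩
  have hEsupp : ν.restrict E (ball x0 L)ᶜ = 0 := by
    rw [Measure.restrict_apply measurableSet_ball.compl,
      (disjoint_compl_left_iff_subset.2 hEL).inter_eq, measure_empty]
  have hmass : ν E ^ (q / (p - 1)) ≤ ν univ ^ (q / (p - 1) - 1) * ν E := by
    rw [rpow_eq_mul_rpow_sub_one _ hms.lt.le, mul_comm]
    gcongr
    exact subset_univ E
  have hsupE := hsup E hEL hE
  rw [← withDensity_apply _ hE] at hsupE ⊢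
  refine measure_le_mul_besselCap hms hD hE ((hpot _ hEsupp).trans ?_)
  rw [Measure.restrict_apply_univ, hDdef, mul_assoc, add_mul]
  exact mul_le_mul_right (add_le_add hsupE hmass) _

lemma exists_setLIntegral_wolff_rpow_le_besselCap (hβ : 0 < α * p) (hβN : α * p < N) (hp : 1 < p)
    (hq : p - 1 < q) {T L L' : ℝ} (hL : 0 < L) (hLL' : L < L') (hLT : L < T) {x0 : Euc N}
    {ω : Measure (Euc N)} [IsFiniteMeasure ω] (hsupp : ω (ball x0 L)ᶜ = 0) {C : ℝ≥0∞} (hC : C ≠ ∞)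
    (h : ∀ᵐ x ∂(volume.restrict (ball x0 L')), wolff α p (ENNReal.ofReal T)
      (volume.withDensity fun y => wolff α p (ENNReal.ofReal T) ω y ^ q) x ≤
        C * wolff α p (ENNReal.ofReal T) ω x) :
    ∃ C' : ℝ≥0∞, C' ≠ ∞ ∧ ∀ K, IsCompact K → ∫⁻ y in K, wolff α p (ENNReal.ofReal T) ω y ^ q ≤
      C' * besselCap N (α * p) (q / (q - p + 1)) K := by
  have hq0 : 0 < q := by linarith
  have hT : 0 < T := hL.trans hLT
  have hfin := lintegral_wolff_rpow_ne_top hβ hβN.le hp hq0 hL hLT hsupp hC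
    (ae_restrict_of_ae_restrict_of_subset (ball_subset_ball hLL'.le) h)
  obtain ⟨δ, hδ, hδT, hδL⟩ : ∃ δ, 0 < δ ∧ 2 * δ ≤ T ∧ L + δ + δ ≤ L' :=
    ⟨min T (L' - L) / 2, half_pos (lt_min hT (sub_pos.2 hLL')),
      by linarith [min_le_left T (L' - L)], by linarith [min_le_right T (L' - L)]⟩
  obtain ⟨C₁, hC₁, hnear⟩ := exists_setLIntegral_rpow_le_besselCap_of_wolff_le hβ hβN hp hq hδ hδT
    (measurable_wolff α p _ ω) hfin hC
    (ae_restrict_of_ae_restrict_of_subset (ball_subset_ball hδL) h)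
  obtain ⟨C₂, hC₂, hvol⟩ := exists_volume_le_besselCap hβ hβN (holderConjugate_exponents hp hq)
  obtain ⟨M, hM, hfar⟩ := exists_wolff_le_of_le_dist hβN.le hp hT hδ hsupp
  refine ⟨C₁ + M ^ q * C₂, by finiteness, fun K hK => ?_⟩
  have hKm := hK.measurableSet
  rw [← lintegral_inter_add_sdiff _ _ (measurableSet_ball (x := x0) (ε := L + δ)), add_mul]
  refine add_le_add ((hnear _ inter_subset_right (hKm.inter measurableSet_ball)).trans
    (mul_le_mul_right (besselCap_mono _ _ inter_subset_left) _)) ?_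
  calc ∫⁻ y in K \ ball x0 (L + δ), wolff α p (ENNReal.ofReal T) ω y ^ q
      ≤ ∫⁻ _ in K \ ball x0 (L + δ), M ^ q :=
        setLIntegral_mono measurable_const fun y hy =>
          ENNReal.rpow_le_rpow (hfar y (by simpa using hy.2)) hq0.le
    _ ≤ M ^ q * volume K := by
        rw [setLIntegral_const]
        exact mul_le_mul_right (measure_mono sdiff_subset) _
    _ ≤ M ^ q * C₂ * besselCap N (α * p) (q / (q - p + 1)) K := by
        rw [mul_assoc]
        exact mul_le_mul_right (hvol K hKm hK.measure_lt_top.ne) _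

end Iteration

end WolffPotential

/-- (Truncated Wolff potential / Bessel capacity equivalences for a
bounded measure supported in a ball.) -/
theorem stmt4 (N : ℕ) (α p q R : ℝ) (hα : 0 < α) (hp : 1 < p) (hpN : p < (N : ℝ) / α)
    (hq : p - 1 < q) (hR : 0 < R) (x0 : Euc N)
    (ω : Measure (Euc N)) [IsFiniteMeasure ω] (hsupp : ω (ball x0 R)ᶜ = 0) :
    List.TFAE [
      -- (a)
      (∃ C1 > 0, ∀ K : Set (Euc N), IsCompact K →
        ω K ≤ ENNReal.ofReal C1 * besselCap N (α * p) (q / (q - p + 1)) K),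
      -- (b)
      (∃ C2 > 0, ∀ K : Set (Euc N), IsCompact K →
        (∫⁻ y in K, (wolff α p (ENNReal.ofReal (4 * R)) ω y) ^ q) ≤
          ENNReal.ofReal C2 * besselCap N (α * p) (q / (q - p + 1)) K),
      -- (c)
      (∃ C3 > 0, ∀ (x : Euc N) (t : ℝ), 0 < t →
        (∫⁻ y, (wolff α p (ENNReal.ofReal (4 * R)) (ω.restrict (ball x t)) y) ^ q) ≤
          ENNReal.ofReal C3 * ω (ball x t)),
      -- (d)
      (∃ C4 > 0, ∀ᵐ x ∂(volume.restrict (ball x0 (2 * R))),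
        wolff α p (ENNReal.ofReal (4 * R))
            (volume.withDensity fun y => (wolff α p (ENNReal.ofReal (4 * R)) ω y) ^ q) x ≤
          ENNReal.ofReal C4 * wolff α p (ENNReal.ofReal (4 * R)) ω x) ] := by
  have hβ : 0 < α * p := by positivity
  have hβN : α * p < N := (mul_comm α p).trans_lt ((lt_div_iff₀ hα).1 hpN)
  have hT : 0 < 4 * R := by positivity
  tfae_have 1 → 3 := fun ⟨_, _, h⟩ => by
    obtain ⟨C, hC, hCle⟩ := WolffPotential.exists_lintegral_wolff_rpow_le_of_le_besselCap hβ hβN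
      hp hq hT hsupp ENNReal.ofReal_ne_top h
    obtain ⟨C', hC', hCC'⟩ := WolffPotential.exists_pos_le_ofReal hC
    exact ⟨C', hC', fun x t _ => (hCle _).trans (mul_le_mul_left hCC' _)⟩
  tfae_have 3 → 4 := fun ⟨_, _, h⟩ => by
    obtain ⟨C, hC, hCle⟩ := WolffPotential.exists_wolff_wolff_le_of_testing hβ hβN hp hq hT
      ENNReal.ofReal_ne_top h
    obtain ⟨C', hC', hCC'⟩ := WolffPotential.exists_pos_le_ofReal hC
    refine ⟨C', hC', ae_restrict_of_forall_mem measurableSet_ball fun x hx =>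
      (hCle x (measure_mono_null ?_ hsupp)).trans (mul_le_mul_left hCC' _)⟩
    exact compl_subset_compl.2 (ball_subset_ball' (by linarith [mem_ball'.1 hx]))
  tfae_have 4 → 2 := fun ⟨_, _, h⟩ => by
    obtain ⟨C, hC, hCle⟩ := WolffPotential.exists_setLIntegral_wolff_rpow_le_besselCap hβ hβN hp hq
      hR (by linarith) (by linarith) hsupp ENNReal.ofReal_ne_top h
    obtain ⟨C', hC', hCC'⟩ := WolffPotential.exists_pos_le_ofReal hC
    exact ⟨C', hC', fun K hK => (hCle K hK).trans (mul_le_mul_left hCC' _)⟩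
  tfae_have 2 → 1 := fun ⟨_, _, h⟩ => by
    obtain ⟨C, hC, hCle⟩ := WolffPotential.exists_measure_le_besselCap_of_wolff hβ hβN hp hq hT
      hsupp ENNReal.ofReal_ne_top h
    obtain ⟨C', hC', hCC'⟩ := WolffPotential.exists_pos_le_ofReal hC
    exact ⟨C', hC', fun K hK => (hCle K hK).trans (mul_le_mul_left hCC' _)⟩
  tfae_finish
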